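/- Let A₁, A₂, A₃ be hermitian 4×4 complex matrices whose joint numerical range W = W(A₁,A₂,A₃) has dimension 3. For each m ∈ {0,1,2,3} the set of non-elliptic faces of W of type m is finite; let aₘ denote its cardinality. Then (a₀,a₁,a₂,a₃) belongs to the set {(0,0,0,0),(1,0,0,0),(0,1,0,0),(0,2,0,0),(0,1,1,0),(0,1,0,1),(0,0,1,0),(0,0,2,0),(0,0,3,0),(0,0,1,1),(0,0,1,2),(0,0,2,1),(0,0,0,1),(0,0,0,2),(0,0,0,4)}. Moreover, if (a₀,a₁,a₂,a₃) is one of (0,0,3,0),(0,0,1,1),(0,0,1,2),(0,0,2,1),(0,0,0,2),(0,0,0,4), then W has a corner point. -/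

import Mathlib

open Matrix ComplexOrder

noncomputable section

/-- A density matrix: positive semidefinite with unit trace. -/
def IsDensity {n : Type*} [Fintype n] (ρ : Matrix n n ℂ) : Prop :=
  ρ.PosSemidef ∧ ρ.trace = 1

/-- The measurement map `ρ ↦ (tr ρA₁, …, tr ρA_k)` (the traces are real for
hermitian matrices). -/
def wpt {n : Type*} [Fintype n] {k : ℕ} (A : Fin k → Matrix n n ℂ)
    (ρ : Matrix n n ℂ) : Fin k → ℝ :=
  fun i => ((ρ * A i).trace).re

/-- The joint numerical range of `k` matrices. -/
def JNR {n : Type*} [Fintype n] {k : ℕ} (A : Fin k → Matrix n n ℂ) :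
    Set (Fin k → ℝ) :=
  wpt A '' {ρ | IsDensity ρ}

/-- `F` is a face of the convex set `C`: a convex subset such that whenever an
open segment between two points of `C` meets `F`, both endpoints lie in `F`. -/
def IsFaceOf {E : Type*} [AddCommGroup E] [Module ℝ E] (C F : Set E) : Prop :=
  Convex ℝ F ∧ IsExtreme ℝ C F

/-- The dimension of a convex set: the dimension of its affine hull. -/
def convDim {E : Type*} [AddCommGroup E] [Module ℝ E] (F : Set E) : ℕ :=
  Module.finrank ℝ (affineSpan ℝ F).direction

/-- Euclidean dot product on `Fin d → ℝ`. -/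
def dotR {d : ℕ} (u v : Fin d → ℝ) : ℝ := ∑ i, u i * v i

/-- `F` is an exposed face of `C`: the set of minimizers of a linear functional. -/
def IsExposedFace {d : ℕ} (C F : Set (Fin d → ℝ)) : Prop :=
  ∃ u : Fin d → ℝ, F = {x ∈ C | ∀ y ∈ C, dotR u x ≤ dotR u y}

/-- The normal cone of `C` at `p`. -/
def normalConeAt {d : ℕ} (C : Set (Fin d → ℝ)) (p : Fin d → ℝ) :
    Set (Fin d → ℝ) :=
  {u | ∀ y ∈ C, 0 ≤ dotR (y - p) u}

/-- `p` is a corner point of `C` if the normal cone of `C` at `p` spans `ℝ^d`. -/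
def IsCornerPoint {d : ℕ} (C : Set (Fin d → ℝ)) (p : Fin d → ℝ) : Prop :=
  p ∈ C ∧ Submodule.span ℝ (normalConeAt C p) = ⊤

/-- The closed unit disk of `ℝ²`. -/
def unitDisk2 : Set (Fin 2 → ℝ) := {v | v 0 ^ 2 + v 1 ^ 2 ≤ 1}

/-- An elliptic disk in `ℝ³`: the image of the closed unit disk of `ℝ²` under an
injective affine map. -/
def IsEllipticDisk (F : Set (Fin 3 → ℝ)) : Prop :=
  ∃ f : (Fin 2 → ℝ) →ᵃ[ℝ] (Fin 3 → ℝ), Function.Injective f ∧ F = f '' unitDisk2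

/-- A non-elliptic face of `W`: a two-dimensional face that is not an elliptic
disk. -/
def IsNonEllipticFace (W F : Set (Fin 3 → ℝ)) : Prop :=
  IsFaceOf W F ∧ convDim F = 2 ∧ ¬ IsEllipticDisk F

/-- A rank-3 face of the joint numerical range of `A`. -/
def IsRank3Face {k : ℕ} (A : Fin k → Matrix (Fin 4) (Fin 4) ℂ)
    (F : Set (Fin k → ℝ)) : Prop :=
  F.Nonempty ∧ IsFaceOf (JNR A) F ∧
    ∃ P : Matrix (Fin 4) (Fin 4) ℂ, Pᴴ = P ∧ P * P = P ∧ P.rank = 3 ∧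
      ∀ ρ : Matrix (Fin 4) (Fin 4) ℂ, IsDensity ρ → (wpt A ρ ∈ F ↔ P * ρ * P = ρ)

/-- A non-elliptic face of type `m`: a non-elliptic face having exactly `m`
one-dimensional faces. -/
def IsNonEllFaceOfType (W : Set (Fin 3 → ℝ)) (m : ℕ)
    (F : Set (Fin 3 → ℝ)) : Prop :=
  IsNonEllipticFace W F ∧
    {G | IsFaceOf F G ∧ convDim G = 1}.Finite ∧
    {G | IsFaceOf F G ∧ convDim G = 1}.ncard = m

section
lemma dotR_add_right {d : ℕ} (u v w : Fin d → ℝ) : dotR u (v + w) = dotR u v + dotR u w := by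
  simp [dotR, mul_add, Finset.sum_add_distrib]
lemma dotR_add_left {d : ℕ} (u v w : Fin d → ℝ) : dotR (u + v) w = dotR u w + dotR v w := by
  simp [dotR, add_mul, Finset.sum_add_distrib]
lemma dotR_smul_right {d : ℕ} (a : ℝ) (u v : Fin d → ℝ) : dotR u (a • v) = a * dotR u v := by
  simp [dotR, Finset.mul_sum, mul_left_comm]
lemma dotR_smul_left {d : ℕ} (a : ℝ) (u v : Fin d → ℝ) : dotR (a • u) v = a * dotR u v := by
  simp [dotR, Finset.mul_sum, mul_assoc]
lemma dotR_sub_right {d : ℕ} (u v w : Fin d → ℝ) : dotR u (v - w) = dotR u v - dotR u w := by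
  simp [dotR, mul_sub, Finset.sum_sub_distrib]
lemma dotR_sub_left {d : ℕ} (u v w : Fin d → ℝ) : dotR (u - v) w = dotR u w - dotR v w := by
  simp [dotR, sub_mul, Finset.sum_sub_distrib]
lemma dotR_comm {d : ℕ} (u v : Fin d → ℝ) : dotR u v = dotR v u := by
  simp [dotR, mul_comm]
lemma dotR_zero_left {d : ℕ} (v : Fin d → ℝ) : dotR 0 v = 0 := by simp [dotR]
lemma dotR_zero_right {d : ℕ} (v : Fin d → ℝ) : dotR v 0 = 0 := by simp [dotR]

/-- dotR as a linear map -/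
def dotL {d : ℕ} (u : Fin d → ℝ) : (Fin d → ℝ) →ₗ[ℝ] ℝ where
  toFun := dotR u
  map_add' := dotR_add_right u
  map_smul' := by intro a v; simp [dotR_smul_right]

lemma dotL_apply {d : ℕ} (u v : Fin d → ℝ) : dotL u v = dotR u v := rfl

lemma exists_dotR {d : ℕ} (f : (Fin d → ℝ) →ₗ[ℝ] ℝ) : ∃ u, ∀ v, f v = dotR u v := by
  refine ⟨fun i => f (Pi.single i 1), fun v => ?_⟩
  rw [LinearMap.pi_apply_eq_sum_univ f v]
  simp [dotR, mul_comm]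
  refine Finset.sum_congr rfl fun i _ => ?_
  congr 2
  funext j
  simp [Pi.single_apply, eq_comm]

/-- functionals constant on C -/
def annC {d : ℕ} (C : Set (Fin d → ℝ)) : Submodule ℝ (Fin d → ℝ) where
  carrier := {u | ∀ x ∈ C, ∀ y ∈ C, dotR u x = dotR u y}
  add_mem' := by
    intro a b ha hb x hx y hy
    rw [dotR_add_left, dotR_add_left, ha x hx y hy, hb x hx y hy]
  zero_mem' := by intro x _ y _; simp [dotR]
  smul_mem' := by
    intro a b hb x hx y hy
    rw [dotR_smul_left, dotR_smul_left, hb x hx y hy]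

lemma mem_annC {d : ℕ} {C : Set (Fin d → ℝ)} {u : Fin d → ℝ} :
  u ∈ annC C ↔ ∀ x ∈ C, ∀ y ∈ C, dotR u x = dotR u y := Iff.rfl

lemma mem_annC_iff {d : ℕ} {C : Set (Fin d → ℝ)} {u : Fin d → ℝ} :
    u ∈ annC C ↔ ∀ v ∈ vectorSpan ℝ C, dotR u v = 0 := by
  constructor
  · intro h v hv
    have : vectorSpan ℝ C ≤ LinearMap.ker (dotL u) := by
      rw [vectorSpan_def, Submodule.span_le]
      rintro _ ⟨x, hx, y, hy, rfl⟩
      simp [dotL_apply, dotR_sub_right, h x hx y hy]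
    simpa [dotL_apply] using this hv
  · intro h x hx y hy
    have := h (x - y) (vsub_mem_vectorSpan ℝ hx hy)
    rw [dotR_sub_right] at this
    linarith

/-- ann as comap of the dual annihilator -/
lemma convDim_add_annC {d : ℕ} (C : Set (Fin d → ℝ)) :
    convDim C + Module.finrank ℝ (annC C) = d := by
  have h := Subspace.finrank_add_finrank_dualAnnihilator_eq (vectorSpan ℝ C)
  let e : (Fin d → ℝ) →ₗ[ℝ] Module.Dual ℝ (Fin d → ℝ) :=
    { toFun := dotL
      map_add' := by intro a b; ext; simp [dotL_apply, dotR_add_left]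
      map_smul' := by intro a b; ext; simp [dotL_apply, dotR_smul_left] }
  have einj : Function.Injective e := by
    intro a b hab
    funext i
    have := congrArg (fun f => f (Pi.single i 1)) hab
    simpa [e, dotL, dotR, Pi.single_apply] using this
  have esurj : Function.Surjective e := by
    intro f
    obtain ⟨u, hu⟩ := exists_dotR f
    exact ⟨u, LinearMap.ext fun v => (hu v).symm⟩
  let E := LinearEquiv.ofBijective e ⟨einj, esurj⟩
  have hE : (annC C).map E.toLinearMap = (vectorSpan ℝ C).dualAnnihilator := by
    ext f
    rw [Submodule.mem_map, Submodule.mem_dualAnnihilator]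
    constructor
    · rintro ⟨u, hu, rfl⟩ v hv
      exact mem_annC_iff.1 hu v hv
    · intro hf
      obtain ⟨u, rfl⟩ := esurj f
      exact ⟨u, mem_annC_iff.2 hf, rfl⟩
  have h2 := LinearEquiv.finrank_map_eq E (annC C)
  rw [← hE] at h
  rw [convDim, direction_affineSpan]
  have h3 : Module.finrank ℝ (Fin d → ℝ) = d := by simp
  have h4 : Module.finrank ℝ ((annC C).map E.toLinearMap) = Module.finrank ℝ (annC C) := h2
  omega

/-- codim one faces are exposed -/
lemma face_exposed {d : ℕ} {C F : Set (Fin d → ℝ)} (hC : Convex ℝ C) (hF : IsFaceOf C F)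
    (hne : F.Nonempty) (hdim : convDim C = convDim F + 1) :
    ∃ u c, (∀ x ∈ C, c ≤ dotR u x) ∧ (∃ x ∈ C, c < dotR u x) ∧
      F = {x ∈ C | dotR u x = c} := by
  obtain ⟨hFc, hFe⟩ := hF
  have hFC : F ⊆ C := hFe.1
  obtain ⟨x0, hx0⟩ := hne.intrinsicInterior hFc
  have hx0F : x0 ∈ F := intrinsicInterior_subset hx0
  -- key extension property
  have key : ∀ z ∈ C, z ∈ affineSpan ℝ F → z ∈ F := by
    intro z hzC hz
    rw [mem_intrinsicInterior] at hx0
    obtain ⟨x0', hx0', hx0e⟩ := hx0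
    -- the map t ↦ x0 + t (x0 - z)
    have hx0A : x0 ∈ affineSpan ℝ F := mem_affineSpan ℝ hx0F
    let g : ℝ → affineSpan ℝ F := fun t => ⟨AffineMap.lineMap x0 z (-t),
      AffineMap.lineMap_mem (-t) hx0A hz⟩
    have hg : Continuous g := by
      apply Continuous.subtype_mk
      simp only [AffineMap.lineMap_apply]
      fun_prop
    have hg0 : g 0 = x0' := by
      apply Subtype.ext
      simp [g, hx0e]
    have hnh : ∀ᶠ t in nhds (0:ℝ), g t ∈ ((↑) ⁻¹' F : Set (affineSpan ℝ F)) := by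
      apply hg.continuousAt.eventually
      rw [hg0]
      exact mem_interior_iff_mem_nhds.1 hx0'
    obtain ⟨ε, hε, hb⟩ := Metric.eventually_nhds_iff.1 hnh
    have h1 : g (ε/2) ∈ ((↑) ⁻¹' F : Set (affineSpan ℝ F)) := by
      apply hb
      rw [dist_zero_right, Real.norm_eq_abs, abs_of_pos (by linarith)]
      linarith
    have h2 : (g (ε/2) : Fin d → ℝ) = x0 + (ε/2) • (x0 - z) := by
      simp [g, AffineMap.lineMap_apply]
      module
    have h3 : x0 + (ε/2) • (x0 - z) ∈ F := by rw [← h2]; exact h1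
    refine hFe.2 hzC (hFC h3) hx0F ?_
    have hp : 0 < 1 + ε / 2 := by linarith
    refine ⟨(ε/2)/(1+ε/2), 1/(1+ε/2), by positivity, by positivity, by field_simp; ring, ?_⟩
    have : x0 = (1/(1+ε/2)) • ((1 + ε/2) • x0) := by
      rw [smul_smul]; field_simp; simp
    conv_rhs => rw [this]
    rw [div_eq_mul_one_div (ε/2), mul_comm (ε/2), mul_smul, ← smul_add]
    congr 1
    module
  have hle : annC C ≤ annC F := fun u hu x hx y hy => hu x (hFC hx) y (hFC hy)
  have d1 := convDim_add_annC C
  have d2 := convDim_add_annC F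
  have hlt : annC C < annC F := by
    refine lt_of_le_of_ne hle fun h => ?_
    rw [h] at d1; omega
  obtain ⟨u, huF, huC⟩ := SetLike.exists_of_lt hlt
  -- affine span of F inside affine span C
  have hAff : ∀ z ∈ C, dotR u z = dotR u x0 → z ∈ affineSpan ℝ F := by
    intro z hz hzu
    have hsub : vectorSpan ℝ F = vectorSpan ℝ C ⊓ LinearMap.ker (dotL u) := by
      apply Submodule.eq_of_le_of_finrank_eq
      · refine le_inf (vectorSpan_mono ℝ hFC) ?_
        intro v hv
        simpa [dotL_apply] using mem_annC_iff.1 huF v hv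
      · have e1 : Module.finrank ℝ (vectorSpan ℝ F) = convDim F := by
          rw [convDim, direction_affineSpan]
        have e2 : Module.finrank ℝ (vectorSpan ℝ C) = convDim C := by
          rw [convDim, direction_affineSpan]
        have hl : vectorSpan ℝ C ⊓ LinearMap.ker (dotL u) < vectorSpan ℝ C := by
          refine lt_of_le_of_ne inf_le_left fun h => huC ?_
          rw [mem_annC_iff]
          intro v hv
          rw [← h] at hv
          simpa [dotL_apply] using hv.2
        have hl2 : vectorSpan ℝ F ≤ vectorSpan ℝ C ⊓ LinearMap.ker (dotL u) := by
          refine le_inf (vectorSpan_mono ℝ hFC) ?_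
          intro v hv
          simpa [dotL_apply] using mem_annC_iff.1 huF v hv
        have f1 := Submodule.finrank_lt_finrank_of_lt hl
        have f2 := Submodule.finrank_mono hl2
        omega
    have hv : z - x0 ∈ vectorSpan ℝ F := by
      rw [hsub]
      refine ⟨vsub_mem_vectorSpan ℝ hz (hFC hx0F), ?_⟩
      simp [dotL_apply, dotR_sub_right, hzu]
    have := AffineSubspace.vadd_mem_of_mem_direction
      (by rw [direction_affineSpan]; exact hv) (mem_affineSpan ℝ hx0F)
    simpa using this
  have hFeq : F = {x ∈ C | dotR u x = dotR u x0} := by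
    ext x; constructor
    · intro hx; exact ⟨hFC hx, huF x hx x0 hx0F⟩
    · rintro ⟨h1, h2⟩; exact key x h1 (hAff x h1 h2)
  have hsame : ∀ a ∈ C, ∀ b ∈ C, dotR u a < dotR u x0 → dotR u x0 < dotR u b → False := by
    intro a ha b hb h1 h2
    set s := dotR u x0 with hs
    have hp : 0 < dotR u b - dotR u a := by linarith
    let t := (dotR u b - s) / (dotR u b - dotR u a)
    let t' := (s - dotR u a) / (dotR u b - dotR u a)
    have ht : 0 < t := div_pos (by linarith) hp
    have ht' : 0 < t' := div_pos (by linarith) hp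
    have htt : t + t' = 1 := by simp only [t, t']; field_simp; ring
    have hz : t • a + t' • b ∈ F := by
      rw [hFeq]
      refine ⟨hC ha hb ht.le ht'.le htt, ?_⟩
      rw [dotR_add_right, dotR_smul_right, dotR_smul_right]
      simp only [t, t']; field_simp; ring
    have := hFe.2 ha hb hz ⟨t, t', ht, ht', htt, rfl⟩
    have := huF a this x0 hx0F
    linarith
  have hex : ∃ b ∈ C, dotR u b ≠ dotR u x0 := by
    by_contra hcon
    push Not at hcon
    exact huC fun x hx y hy => by rw [hcon x hx, hcon y hy]
  obtain ⟨b, hb, hbne⟩ := hex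
  rcases lt_or_gt_of_ne hbne with h | h
  · refine ⟨-u, - dotR u x0, ?_, ⟨b, hb, ?_⟩, ?_⟩
    · intro x hx
      have : dotR (-u) x = - dotR u x := by simp [dotR]
      rw [this]
      by_contra hc
      exact hsame b hb x hx h (by linarith)
    · have : dotR (-u) b = - dotR u b := by simp [dotR]
      rw [this]; linarith
    · rw [hFeq]; ext x
      have : dotR (-u) x = - dotR u x := by simp [dotR]
      simp [this]
  · refine ⟨u, dotR u x0, ?_, ⟨b, hb, h⟩, hFeq⟩
    intro x hx
    by_contra hc
    exact hsame x hx b hb (by linarith) h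

lemma face_of_exposed {d : ℕ} {C : Set (Fin d → ℝ)} (hC : Convex ℝ C) {u : Fin d → ℝ} {c : ℝ}
    (h : ∀ x ∈ C, c ≤ dotR u x) : IsFaceOf C {x ∈ C | dotR u x = c} := by
  refine ⟨?_, fun x hx => hx.1, ?_⟩
  · rintro x ⟨hx, hx'⟩ y ⟨hy, hy'⟩ a b ha hb hab
    refine ⟨hC hx hy ha hb hab, ?_⟩
    rw [dotR_add_right, dotR_smul_right, dotR_smul_right, hx', hy', ← add_mul, hab, one_mul]
  · rintro x hx y hy z ⟨hz, hz'⟩ ⟨a, b, ha, hb, hab, rfl⟩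
    refine ⟨hx, ?_⟩
    rw [dotR_add_right, dotR_smul_right, dotR_smul_right] at hz'
    have h1 := h x hx
    have h2 := h y hy
    have h3 : c = a * c + b * c := by rw [← add_mul, hab, one_mul]
    nlinarith

lemma hull_exposed {d : ℕ} {S : Set (Fin d → ℝ)} {u : Fin d → ℝ} {c : ℝ}
    (h : ∀ x ∈ S, c ≤ dotR u x) :
    {x ∈ convexHull ℝ S | dotR u x = c} = convexHull ℝ {x ∈ S | dotR u x = c} := by
  have hconv : ∀ x ∈ convexHull ℝ S, c ≤ dotR u x := by
    have : convexHull ℝ S ⊆ {x | c ≤ dotL u x} :=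
      convexHull_min h (convex_halfSpace_ge (dotL u).isLinear c)
    exact this
  apply Set.Subset.antisymm
  · have hcv : Convex ℝ {x | x ∈ convexHull ℝ S ∧ (dotR u x = c → x ∈ convexHull ℝ {x ∈ S | dotR u x = c})} := by
      rintro x ⟨hx, hx'⟩ y ⟨hy, hy'⟩ a b ha hb hab
      refine ⟨convex_convexHull ℝ S hx hy ha hb hab, fun he => ?_⟩
      rcases ha.eq_or_lt with rfl | ha
      · have : b = 1 := by linarith
        subst this
        simp at he ⊢; exact hy' he
      rcases hb.eq_or_lt with rfl | hb
      · have : a = 1 := by linarith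
        subst this
        simp at he ⊢; exact hx' he
      rw [dotR_add_right, dotR_smul_right, dotR_smul_right] at he
      have h1 := hconv x hx
      have h2 := hconv y hy
      have h3 : c = a * c + b * c := by rw [← add_mul, hab, one_mul]
      refine convex_convexHull ℝ _ (hx' ?_) (hy' ?_) ha.le hb.le hab
      · nlinarith
      · nlinarith
    have : convexHull ℝ S ⊆ {x | x ∈ convexHull ℝ S ∧ (dotR u x = c → x ∈ convexHull ℝ {x ∈ S | dotR u x = c})} := convexHull_min (fun x hx => ⟨subset_convexHull ℝ S hx,
      fun he => subset_convexHull ℝ _ ⟨hx, he⟩⟩) hcv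
    rintro x ⟨hx, hx'⟩
    exact (this hx).2 hx'
  · refine convexHull_min ?_ ?_
    · rintro x ⟨hx, hx'⟩
      exact ⟨subset_convexHull ℝ S hx, hx'⟩
    · exact (face_of_exposed (convex_convexHull ℝ S) hconv).1

lemma convDim_subsingleton {d : ℕ} {C : Set (Fin d → ℝ)} (h : C.Subsingleton) : convDim C = 0 := by
  rw [convDim, direction_affineSpan, vectorSpan_of_subsingleton ℝ h]; simp

lemma convDim_pos {d : ℕ} {C : Set (Fin d → ℝ)} (h : ¬ C.Subsingleton) : 0 < convDim C := by
  rw [Nat.pos_iff_ne_zero]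
  intro h0
  rw [convDim, direction_affineSpan, Submodule.finrank_eq_zero] at h0
  apply h
  intro x hx y hy
  have := vsub_mem_vectorSpan ℝ hx hy
  rw [h0] at this
  simpa [sub_eq_zero] using this

/-- A circle-generated hull is an elliptic disk. -/
lemma elliptic_of {S : Set (Fin 3 → ℝ)} (p a b : Fin 3 → ℝ)
    (hab : ∀ s t : ℝ, s • a + t • b = 0 → s = 0 ∧ t = 0)
    (h1 : ∀ x ∈ S, ∃ s t : ℝ, s ^ 2 + t ^ 2 ≤ 1 ∧ x = p + s • a + t • b)
    (h2 : ∀ s t : ℝ, s ^ 2 + t ^ 2 = 1 → p + s • a + t • b ∈ S) :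
    IsEllipticDisk (convexHull ℝ S) := by
  let L : (Fin 2 → ℝ) →ₗ[ℝ] (Fin 3 → ℝ) :=
    (LinearMap.proj 0).smulRight a + (LinearMap.proj 1).smulRight b
  let f : (Fin 2 → ℝ) →ᵃ[ℝ] (Fin 3 → ℝ) := L.toAffineMap + AffineMap.const ℝ _ p
  have hf : ∀ v, f v = p + v 0 • a + v 1 • b := by
    intro v
    simp [f, L]; abel
  have hdc : Convex ℝ unitDisk2 := by
    rintro x hx y hy α β hα hβ hαβ
    simp only [unitDisk2, Set.mem_ofPred_eq, Pi.add_apply, Pi.smul_apply, smul_eq_mul] at *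
    have : β = 1 - α := by linarith
    subst this
    nlinarith [mul_nonneg hα hβ, sq_nonneg (x 0 - y 0), sq_nonneg (x 1 - y 1),
      mul_nonneg (mul_nonneg hα hβ) (sq_nonneg (x 0 - y 0)),
      mul_nonneg (mul_nonneg hα hβ) (sq_nonneg (x 1 - y 1))]
  refine ⟨f, ?_, ?_⟩
  · intro v w hvw
    rw [hf, hf] at hvw
    obtain ⟨e1, e2⟩ := hab (v 0 - w 0) (v 1 - w 1) (by
      have : p + v 0 • a + v 1 • b - (p + w 0 • a + w 1 • b) = 0 := sub_eq_zero.2 hvw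
      rw [← this]; module)
    funext i
    fin_cases i
    · simpa [sub_eq_zero] using e1
    · simpa [sub_eq_zero] using e2
  · apply Set.Subset.antisymm
    · refine convexHull_min ?_ (hdc.affine_image f)
      intro x hx
      obtain ⟨s, t, hst, rfl⟩ := h1 x hx
      refine ⟨![s, t], by simpa [unitDisk2] using hst, by rw [hf]; simp⟩
    · rintro _ ⟨v, hv, rfl⟩
      rw [hf]
      -- horizontal chord
      have hv' : v 0 ^ 2 + v 1 ^ 2 ≤ 1 := hv
      set r := Real.sqrt (1 - v 1 ^ 2) with hr
      have hr2 : r ^ 2 = 1 - v 1 ^ 2 := Real.sq_sqrt (by nlinarith [sq_nonneg (v 0)])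
      have hr0 : 0 ≤ r := Real.sqrt_nonneg _
      have m1 := h2 r (v 1) (by linarith)
      have m2 := h2 (-r) (v 1) (by linarith)
      have hle : |v 0| ≤ r := abs_le_of_sq_le_sq (by linarith) hr0
      rw [abs_le] at hle
      rcases hr0.eq_or_lt with h0 | h0
      · have : v 0 = r := by linarith
        rw [this]; exact subset_convexHull ℝ S m1
      · have := convex_convexHull ℝ S (subset_convexHull ℝ S m1) (subset_convexHull ℝ S m2)
          (show 0 ≤ (r + v 0) / (2 * r) by apply div_nonneg <;> linarith)
          (show 0 ≤ (r - v 0) / (2 * r) by apply div_nonneg <;> linarith)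
          (by field_simp; ring)
        convert this using 1
        have e1 : v 0 = (r + v 0) / (2 * r) * r + (r - v 0) / (2 * r) * (-r) := by
          field_simp; ring
        have e2 : (r - v 0) / (2 * r) = 1 - (r + v 0) / (2 * r) := by field_simp; ring
        conv_lhs => rw [e1]
        rw [e2]
        module

lemma convDim_elliptic_le {F : Set (Fin 3 → ℝ)} (h : IsEllipticDisk F) (hF : convDim F = 2)
    {G : Set (Fin 3 → ℝ)} (hG : IsFaceOf F G) : convDim G ≠ 1 := by
  intro hG1
  obtain ⟨f, hf, rfl⟩ := h
  have hGn : ¬ G.Subsingleton := fun hs => by rw [convDim_subsingleton hs] at hG1; omega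
  rw [Set.not_subsingleton_iff] at hGn
  obtain ⟨x, hx, y, hy, hxy⟩ := hGn
  have hGF := hG.2.1
  obtain ⟨a, ha, rfl⟩ := hGF hx
  obtain ⟨b, hb, rfl⟩ := hGF hy
  have hab : a ≠ b := fun h => hxy (by rw [h])
  have hd : (a 0 - b 0) ^ 2 + (a 1 - b 1) ^ 2 > 0 := by
    by_contra hc
    apply hab
    have h1 : a 0 - b 0 = 0 := by nlinarith [sq_nonneg (a 0 - b 0), sq_nonneg (a 1 - b 1)]
    have h2 : a 1 - b 1 = 0 := by nlinarith [sq_nonneg (a 0 - b 0), sq_nonneg (a 1 - b 1)]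
    funext i; fin_cases i
    · simpa [sub_eq_zero] using h1
    · simpa [sub_eq_zero] using h2
  let m : Fin 2 → ℝ := (1/2 : ℝ) • a + (1/2 : ℝ) • b
  have hm : f m ∈ G := by
    have h := hG.1 hx hy (show (0:ℝ) ≤ 1/2 by norm_num) (show (0:ℝ) ≤ 1/2 by norm_num) (by norm_num)
    have : f m = (1/2 : ℝ) • f a + (1/2 : ℝ) • f b :=
      Convex.combo_affine_apply (by norm_num)
    rw [this]; exact h
  have hm1 : m 0 ^ 2 + m 1 ^ 2 < 1 := by
    have ha' : a 0 ^ 2 + a 1 ^ 2 ≤ 1 := ha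
    have hb' : b 0 ^ 2 + b 1 ^ 2 ≤ 1 := hb
    simp [m]
    nlinarith
  -- G is everything
  have : G = f '' unitDisk2 := by
    apply Set.Subset.antisymm hGF
    rintro _ ⟨z, hz, rfl⟩
    have hz' : z 0 ^ 2 + z 1 ^ 2 ≤ 1 := hz
    -- small ε with m + ε (m - z) in disk
    obtain ⟨ε, hε, hin⟩ : ∃ ε : ℝ, 0 < ε ∧ (m + ε • (m - z)) ∈ unitDisk2 := by
      have hc : Continuous fun ε : ℝ => (m 0 + ε * (m 0 - z 0)) ^ 2 + (m 1 + ε * (m 1 - z 1)) ^ 2 := by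
        fun_prop
      have h0 : ∀ᶠ ε in nhds (0:ℝ), (m 0 + ε * (m 0 - z 0)) ^ 2 + (m 1 + ε * (m 1 - z 1)) ^ 2 < 1 := by
        apply hc.continuousAt.eventually_lt continuousAt_const
        simpa using hm1
      obtain ⟨δ, hδ, hb⟩ := Metric.eventually_nhds_iff.1 h0
      refine ⟨δ/2, by linarith, ?_⟩
      have := hb (y := δ/2) (by simp [abs_of_pos hδ]; linarith)
      simpa [unitDisk2] using this.le
    refine hG.2.2 ⟨z, hz, rfl⟩ ⟨_, hin, rfl⟩ hm ?_
    have hp : 0 < 1 + ε := by linarith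
    refine ⟨ε/(1+ε), 1/(1+ε), by positivity, by positivity, by field_simp; ring, ?_⟩
    rw [← Convex.combo_affine_apply (by field_simp; ring)]
    congr 1
    have : m = (1/(1+ε)) • ((1 + ε) • m) := by
      rw [smul_smul]; field_simp; simp
    conv_rhs => rw [this]
    rw [div_eq_mul_one_div ε, mul_comm ε, mul_smul, ← smul_add]
    congr 1
    module
  rw [this] at hG1; omega
end

section
set_option linter.unusedSectionVars false
set_option linter.unusedSimpArgs false

variable {E : Type*} [NormedAddCommGroup E] [InnerProductSpace ℂ E] [FiniteDimensional ℂ E]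

/-- joint quadratic map -/
def qv (T : Fin 3 → E →ₗ[ℂ] E) (x : E) : Fin 3 → ℝ := fun i => (inner ℂ x (T i x)).re

/-- operator of an affine functional -/
def Hop (T : Fin 3 → E →ₗ[ℂ] E) (u : Fin 3 → ℝ) (c : ℝ) : E →ₗ[ℂ] E :=
  ∑ i, (u i : ℂ) • T i - (c : ℂ) • LinearMap.id

/-- numerical range on a subspace -/
def Wk (T : Fin 3 → E →ₗ[ℂ] E) (K : Submodule ℂ E) : Set (Fin 3 → ℝ) :=
  convexHull ℝ (qv T '' {x | x ∈ K ∧ ‖x‖ = 1})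

/-- orthogonal complement of a vector -/
def pp (v : E) : Submodule ℂ E := (Submodule.span ℂ {v})ᗮ

lemma mem_pp {v x : E} : x ∈ pp v ↔ inner ℂ v x = 0 :=
  Submodule.mem_orthogonal_singleton_iff_inner_right

lemma mem_pp' {v x : E} : x ∈ pp v ↔ inner ℂ x v = 0 :=
  Submodule.mem_orthogonal_singleton_iff_inner_left

/-- rank-one element on K -/
def Rk (T : Fin 3 → E →ₗ[ℂ] E) (K : Submodule ℂ E) (v : E) (u : Fin 3 → ℝ) (c : ℝ) : Prop :=
  ∀ x ∈ K, ∀ y ∈ K, inner ℂ y (Hop T u c x) = inner ℂ y v * inner ℂ v x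

lemma Hop_apply (T : Fin 3 → E →ₗ[ℂ] E) (u : Fin 3 → ℝ) (c : ℝ) (x : E) :
    Hop T u c x = ∑ i, (u i : ℂ) • T i x - (c : ℂ) • x := by
  simp [Hop]

lemma inner_Hop (T : Fin 3 → E →ₗ[ℂ] E) (u : Fin 3 → ℝ) (c : ℝ) (x y : E) :
    inner ℂ y (Hop T u c x) = ∑ i, (u i : ℂ) * inner ℂ y (T i x) - c * inner ℂ y x := by
  rw [Hop_apply, inner_sub_right, inner_sum]
  simp [inner_smul_right]

lemma re_Hop (T : Fin 3 → E →ₗ[ℂ] E) (u : Fin 3 → ℝ) (c : ℝ) (x : E) :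
    (inner ℂ x (Hop T u c x)).re = dotR u (qv T x) - c * ‖x‖ ^ 2 := by
  rw [inner_Hop, inner_self_eq_norm_sq_to_K]
  simp [dotR, qv]
  left
  rw [← Complex.ofReal_pow, Complex.ofReal_re]

lemma Hop_add (T : Fin 3 → E →ₗ[ℂ] E) (u u' : Fin 3 → ℝ) (c c' : ℝ) (x : E) :
    Hop T (u + u') (c + c') x = Hop T u c x + Hop T u' c' x := by
  simp only [Hop_apply, Pi.add_apply, Complex.ofReal_add, add_smul, Finset.sum_add_distrib]
  abel

lemma Hop_smul (T : Fin 3 → E →ₗ[ℂ] E) (t : ℝ) (u : Fin 3 → ℝ) (c : ℝ) (x : E) :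
    Hop T (t • u) (t * c) x = (t : ℂ) • Hop T u c x := by
  simp only [Hop_apply, Pi.smul_apply, smul_eq_mul, Complex.ofReal_mul, mul_smul, smul_sub,
    Finset.smul_sum]

lemma Hop_shift (T : Fin 3 → E →ₗ[ℂ] E) (u : Fin 3 → ℝ) (c c' : ℝ) (x : E) :
    Hop T u c x = Hop T u c' x + ((c' - c : ℝ) : ℂ) • x := by
  simp only [Hop_apply, Complex.ofReal_sub, sub_smul]
  abel

lemma Hop_zero (T : Fin 3 → E →ₗ[ℂ] E) (c : ℝ) (x : E) :
    Hop T 0 c x = -(c : ℂ) • x := by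
  simp [Hop_apply]

lemma Hop_symm {T : Fin 3 → E →ₗ[ℂ] E} (hT : ∀ i, (T i).IsSymmetric) (u : Fin 3 → ℝ) (c : ℝ) :
    (Hop T u c).IsSymmetric := by
  intro x y
  rw [inner_Hop, Hop_apply, inner_sub_left, sum_inner]
  simp [inner_smul_left, hT _ x y]

lemma re_add_sq {S : E →ₗ[ℂ] E} (hS : S.IsSymmetric) (x y : E) :
    (inner ℂ (x + y) (S (x + y))).re =
      (inner ℂ x (S x)).re + 2 * (inner ℂ y (S x)).re + (inner ℂ y (S y)).re := by
  rw [map_add, inner_add_left, inner_add_right, inner_add_right]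
  have : inner ℂ x (S y) = (starRingEnd ℂ) (inner ℂ y (S x)) := by
    rw [inner_conj_symm, hS x y]
  rw [this]
  simp only [Complex.add_re, Complex.conj_re]
  ring

lemma zero_of_re {S : E →ₗ[ℂ] E} {K : Submodule ℂ E} {x : E}
    (h : ∀ y ∈ K, (inner ℂ y (S x)).re = 0) : ∀ y ∈ K, inner ℂ y (S x) = 0 := by
  intro y hy
  apply Complex.ext
  · simpa using h y hy
  · have := h (Complex.I • y) (K.smul_mem _ hy)
    rw [inner_smul_left] at this
    simpa using this

lemma pol_zero {S : E →ₗ[ℂ] E} (hS : S.IsSymmetric) {K : Submodule ℂ E}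
    (h : ∀ x ∈ K, (inner ℂ x (S x)).re = 0) : ∀ x ∈ K, ∀ y ∈ K, inner ℂ y (S x) = 0 := by
  intro x hx
  apply zero_of_re
  intro y hy
  have := re_add_sq hS x y
  rw [h _ (K.add_mem hx hy), h x hx, h y hy] at this
  linarith

lemma psd_null {S : E →ₗ[ℂ] E} (hS : S.IsSymmetric) {K : Submodule ℂ E}
    (h : ∀ x ∈ K, 0 ≤ (inner ℂ x (S x)).re) {n : E} (hn : n ∈ K) (h0 : (inner ℂ n (S n)).re = 0) :
    ∀ y ∈ K, inner ℂ y (S n) = 0 := by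
  apply zero_of_re
  intro y hy
  by_contra hne
  set b := (inner ℂ y (S n)).re with hb
  set a := (inner ℂ y (S y)).re with ha
  have ha0 : 0 ≤ a := h y hy
  have key : ∀ t : ℝ, 0 ≤ 2 * t * b + t ^ 2 * a := by
    intro t
    have h1 := h _ (K.add_mem hn (K.smul_mem (t : ℂ) hy))
    rw [re_add_sq hS, h0, map_smul, inner_smul_left, inner_smul_left, inner_smul_right] at h1
    simp at h1
    nlinarith
  have := key (- b / (a + 1))
  have hp : 0 < a + 1 := by linarith
  have e : 2 * (-b / (a+1)) * b + (-b/(a+1))^2 * a = - (b ^ 2 * (a + 2)) / (a + 1) ^ 2 := by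
    field_simp; ring
  rw [e] at this
  have hb2 : 0 < b ^ 2 := by positivity
  have : 0 < (b ^ 2 * (a + 2)) / (a + 1) ^ 2 := by positivity
  rw [neg_div] at *
  linarith

/-- null space on K -/
def nullSub (S : E →ₗ[ℂ] E) (K : Submodule ℂ E) : Submodule ℂ E where
  carrier := {x | x ∈ K ∧ ∀ y ∈ K, inner ℂ y (S x) = 0}
  add_mem' := by
    rintro a b ⟨ha, ha'⟩ ⟨hb, hb'⟩
    refine ⟨K.add_mem ha hb, fun y hy => ?_⟩
    rw [map_add, inner_add_right, ha' y hy, hb' y hy, add_zero]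
  zero_mem' := ⟨K.zero_mem, fun y _ => by simp⟩
  smul_mem' := by
    rintro c a ⟨ha, ha'⟩
    refine ⟨K.smul_mem _ ha, fun y hy => ?_⟩
    rw [map_smul, inner_smul_right, ha' y hy, mul_zero]

lemma mem_nullSub {S : E →ₗ[ℂ] E} {K : Submodule ℂ E} {x : E} :
  x ∈ nullSub S K ↔ x ∈ K ∧ ∀ y ∈ K, inner ℂ y (S x) = 0 := Iff.rfl

lemma nullSub_le {S : E →ₗ[ℂ] E} {K : Submodule ℂ E} : nullSub S K ≤ K := fun _ h => h.1

lemma qv_smul (T : Fin 3 → E →ₗ[ℂ] E) (a : ℂ) (x : E) : qv T (a • x) = ‖a‖ ^ 2 • qv T x := by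
  funext i
  simp only [qv, map_smul, inner_smul_left, inner_smul_right, Pi.smul_apply, smul_eq_mul]
  rw [← mul_assoc, Complex.mul_conj', ← Complex.ofReal_pow, Complex.re_ofReal_mul]

lemma Wk_convex (T : Fin 3 → E →ₗ[ℂ] E) (K : Submodule ℂ E) : Convex ℝ (Wk T K) :=
  convex_convexHull ℝ _

lemma qv_mem_Wk {T : Fin 3 → E →ₗ[ℂ] E} {K : Submodule ℂ E} {x : E} (hx : x ∈ K) (h1 : ‖x‖ = 1) :
    qv T x ∈ Wk T K := subset_convexHull ℝ _ ⟨x, ⟨hx, h1⟩, rfl⟩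

lemma Wk_mono {T : Fin 3 → E →ₗ[ℂ] E} {K K' : Submodule ℂ E} (h : K ≤ K') : Wk T K ⊆ Wk T K' := by
  apply convexHull_mono
  rintro _ ⟨x, ⟨hx, h1⟩, rfl⟩
  exact ⟨x, ⟨h hx, h1⟩, rfl⟩

lemma exists_unit {K : Submodule ℂ E} {x : E} (hx : x ∈ K) (h0 : x ≠ 0) :
    ∃ a : ℂ, a ≠ 0 ∧ a • x ∈ K ∧ ‖a • x‖ = 1 := by
  refine ⟨((‖x‖⁻¹ : ℝ) : ℂ), ?_, K.smul_mem _ hx, ?_⟩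
  · simpa using h0
  · rw [norm_smul]; simp [h0]

lemma nonneg_of_Wk {T : Fin 3 → E →ₗ[ℂ] E} {K : Submodule ℂ E} {u : Fin 3 → ℝ} {c : ℝ}
    (h : ∀ w ∈ Wk T K, c ≤ dotR u w) : ∀ x ∈ K, 0 ≤ (inner ℂ x (Hop T u c x)).re := by
  intro x hx
  by_cases h0 : x = 0
  · simp [h0]
  obtain ⟨a, ha, hk, h1⟩ := exists_unit hx h0
  have := h _ (qv_mem_Wk hk h1)
  rw [qv_smul, dotR_smul_right] at this
  rw [re_Hop]
  rw [norm_smul] at h1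
  have ha' : 0 < ‖a‖ := norm_pos_iff.2 ha
  have e : c = ‖a‖ ^ 2 * (c * ‖x‖ ^ 2) := by
    have : ‖a‖ ^ 2 * (c * ‖x‖ ^ 2) = c * (‖a‖ * ‖x‖) ^ 2 := by ring
    rw [this, h1]; ring
  rw [e] at this
  have := le_of_mul_le_mul_left this (by positivity)
  linarith

lemma Wk_of_nonneg {T : Fin 3 → E →ₗ[ℂ] E} (hT : ∀ i, (T i).IsSymmetric)
    {K : Submodule ℂ E} {u : Fin 3 → ℝ} {c : ℝ}
    (h : ∀ x ∈ K, 0 ≤ (inner ℂ x (Hop T u c x)).re) :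
    (∀ w ∈ Wk T K, c ≤ dotR u w) ∧
    {w ∈ Wk T K | dotR u w = c} = Wk T (nullSub (Hop T u c) K) := by
  have hS : ∀ w ∈ qv T '' {x | x ∈ K ∧ ‖x‖ = 1}, c ≤ dotR u w := by
    rintro _ ⟨x, ⟨hx, h1⟩, rfl⟩
    have := h x hx
    rw [re_Hop, h1] at this
    linarith
  constructor
  · have : Wk T K ⊆ {x | c ≤ dotL u x} :=
      convexHull_min hS (convex_halfSpace_ge (dotL u).isLinear c)
    exact this
  · rw [Wk, hull_exposed hS, Wk]
    congr 1
    ext w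
    constructor
    · rintro ⟨⟨x, ⟨hx, h1⟩, rfl⟩, h2⟩
      refine ⟨x, ⟨⟨hx, psd_null (Hop_symm hT u c) h hx ?_⟩, h1⟩, rfl⟩
      rw [re_Hop, h1, h2]; ring
    · rintro ⟨x, ⟨⟨hx, h2⟩, h1⟩, rfl⟩
      refine ⟨⟨x, ⟨hx, h1⟩, rfl⟩, ?_⟩
      have := re_Hop T u c x
      rw [h2 x hx, h1] at this
      simp at this
      linarith

lemma Rk_nonneg {T : Fin 3 → E →ₗ[ℂ] E} {K : Submodule ℂ E} {v : E} {u : Fin 3 → ℝ} {c : ℝ}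
    (h : Rk T K v u c) : ∀ x ∈ K, (inner ℂ x (Hop T u c x)).re = ‖inner ℂ v x‖ ^ 2 := by
  intro x hx
  rw [h x hx x hx, ← inner_conj_symm x v, Complex.conj_mul', ← Complex.ofReal_pow, Complex.ofReal_re]

lemma Rk_null {T : Fin 3 → E →ₗ[ℂ] E} {K : Submodule ℂ E} {v : E} {u : Fin 3 → ℝ} {c : ℝ}
    (h : Rk T K v u c) (hv : v ∈ K) : nullSub (Hop T u c) K = K ⊓ pp v := by
  ext x
  rw [mem_nullSub, Submodule.mem_inf, mem_pp]
  constructor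
  · rintro ⟨hx, h2⟩
    refine ⟨hx, ?_⟩
    have := h2 v hv
    rw [h x hx v hv] at this
    rcases mul_eq_zero.1 this with h3 | h3
    · rw [inner_self_eq_zero] at h3; simp [h3]
    · exact h3
  · rintro ⟨hx, h2⟩
    refine ⟨hx, fun y hy => ?_⟩
    rw [h x hx y hy, h2, mul_zero]

lemma Rk_face {T : Fin 3 → E →ₗ[ℂ] E} (hT : ∀ i, (T i).IsSymmetric)
    {K : Submodule ℂ E} {v : E} {u : Fin 3 → ℝ} {c : ℝ}
    (h : Rk T K v u c) (hv : v ∈ K) :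
    (∀ w ∈ Wk T K, c ≤ dotR u w) ∧ {w ∈ Wk T K | dotR u w = c} = Wk T (K ⊓ pp v) := by
  rw [← Rk_null h hv]
  apply Wk_of_nonneg hT
  intro x hx
  rw [Rk_nonneg h x hx]; positivity

lemma Rk_smul {T : Fin 3 → E →ₗ[ℂ] E} {K : Submodule ℂ E} {v : E} {u : Fin 3 → ℝ} {c : ℝ}
    (h : Rk T K v u c) (a : ℂ) : Rk T K (a • v) (‖a‖ ^ 2 • u) (‖a‖ ^ 2 * c) := by
  intro x hx y hy
  rw [Hop_smul, inner_smul_right, h x hx y hy, inner_smul_left, inner_smul_right]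
  have : ((‖a‖ ^ 2 : ℝ) : ℂ) = (starRingEnd ℂ) a * a := by
    rw [Complex.conj_mul', Complex.ofReal_pow]
  rw [this]; ring

lemma Rk_restrict {T : Fin 3 → E →ₗ[ℂ] E} {K K' : Submodule ℂ E} {v w : E} {u : Fin 3 → ℝ} {c : ℝ}
    (h : Rk T K v u c) (hK : K' ≤ K) (hw : ∀ x ∈ K', inner ℂ w x = inner ℂ v x) : Rk T K' w u c := by
  intro x hx y hy
  rw [h x (hK hx) y (hK hy), hw x hx, ← inner_conj_symm y w, hw y hy, inner_conj_symm]

lemma psd_rank_one {S : E →ₗ[ℂ] E} (hS : S.IsSymmetric) {K : Submodule ℂ E}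
    (h : ∀ x ∈ K, 0 ≤ (inner ℂ x (S x)).re)
    (hd : Module.finrank ℂ (nullSub S K) + 1 = Module.finrank ℂ K) :
    ∃ w ∈ K, w ≠ 0 ∧ ∀ x ∈ K, ∀ y ∈ K, inner ℂ y (S x) = inner ℂ y w * inner ℂ w x := by
  have h1 := Submodule.finrank_add_inf_finrank_orthogonal (nullSub_le (S := S) (K := K))
  have h2 : Module.finrank ℂ ((nullSub S K)ᗮ ⊓ K : Submodule ℂ E) = 1 := by omega
  obtain ⟨⟨w1, hw1⟩, hw1n, hsp⟩ := finrank_eq_one_iff'.1 h2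
  have hw1n' : w1 ≠ 0 := fun h => hw1n (by ext; exact h)
  obtain ⟨a, ha, hw0, hw0n⟩ := exists_unit hw1 hw1n'
  set w0 := a • w1 with hw0d
  have hdec : ∀ x ∈ K, x - inner ℂ w0 x • w0 ∈ nullSub S K := by
    intro x hx
    have hx' : x ∈ nullSub S K ⊔ ((nullSub S K)ᗮ ⊓ K) := by
      rw [Submodule.sup_orthogonal_inf_of_hasOrthogonalProjection nullSub_le]; exact hx
    obtain ⟨n, hn, m, hm, rfl⟩ := Submodule.mem_sup.1 hx'
    obtain ⟨b, hb⟩ := hsp ⟨m, hm⟩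
    have hb' : b • w1 = m := congrArg Subtype.val hb
    have hm2 : m = (b / a) • w0 := by
      rw [hw0d, smul_smul, div_mul_cancel₀ _ ha, hb']
    have : inner ℂ w0 n = 0 := by
      exact Submodule.inner_left_of_mem_orthogonal hn hw0.1
    have e : inner ℂ w0 (n + m) = b / a := by
      rw [inner_add_right, this, hm2, inner_smul_right, inner_self_eq_norm_sq_to_K, hw0n]; simp
    rw [e, ← hm2]; simpa using hn
  clear_value w0
  have hreal : inner ℂ w0 (S w0) = (((inner ℂ w0 (S w0)).re : ℝ) : ℂ) := by
    apply Complex.ext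
    · simp
    · have : (starRingEnd ℂ) (inner ℂ w0 (S w0)) = inner ℂ w0 (S w0) := by
        rw [inner_conj_symm, hS w0 w0]
      simpa using Complex.conj_eq_iff_im.1 this
  set r := (inner ℂ w0 (S w0)).re with hr
  have hr0 : 0 ≤ r := h w0 hw0.2
  have hrne : r ≠ 0 := by
    intro h0
    have h3 : w0 ∈ nullSub S K := ⟨hw0.2, psd_null hS h hw0.2 h0⟩
    have := Submodule.inner_left_of_mem_orthogonal h3 hw0.1
    rw [inner_self_eq_zero] at this
    rw [this] at hw0n; simp at hw0n
  refine ⟨((Real.sqrt r : ℝ) : ℂ) • w0, K.smul_mem _ hw0.2, ?_, ?_⟩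
  · intro h0
    rcases smul_eq_zero.1 h0 with h3 | h3
    · have : Real.sqrt r = 0 := by exact_mod_cast h3
      rw [Real.sqrt_eq_zero hr0] at this; exact hrne this
    · rw [h3] at hw0n; simp at hw0n
  · intro x hx y hy
    have ex := (hdec x hx).2 y hy
    rw [map_sub, inner_sub_right, sub_eq_zero, map_smul, inner_smul_right] at ex
    have ey := (hdec y hy).2 w0 hw0.2
    rw [map_sub, inner_sub_right, sub_eq_zero, map_smul, inner_smul_right] at ey
    have ey' : inner ℂ y (S w0) = inner ℂ y w0 * r := by
      have := congrArg (starRingEnd ℂ) ey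
      rw [inner_conj_symm, hS y w0, map_mul, inner_conj_symm, inner_conj_symm, hS w0 w0, hreal] at this
      exact this
    rw [ex, ey', inner_smul_right, inner_smul_left]
    have hs : ((r : ℝ) : ℂ) = (Real.sqrt r : ℂ) * (Real.sqrt r : ℂ) := by
      rw [← Complex.ofReal_mul, Real.mul_self_sqrt hr0]
    rw [hs, Complex.conj_ofReal]; ring

lemma annC_Wk {T : Fin 3 → E →ₗ[ℂ] E} (hT : ∀ i, (T i).IsSymmetric)
    {K : Submodule ℂ E} {u : Fin 3 → ℝ} {x0 : E} (hx0 : x0 ∈ K) (hx : x0 ≠ 0) :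
    u ∈ annC (Wk T K) ↔ ∃ c, ∀ x ∈ K, ∀ y ∈ K, inner ℂ y (Hop T u c x) = 0 := by
  constructor
  · intro h
    obtain ⟨a, ha, hk, h1⟩ := exists_unit hx0 hx
    refine ⟨dotR u (qv T (a • x0)), pol_zero (Hop_symm hT _ _) ?_⟩
    intro x hx
    have hc : ∀ w ∈ Wk T K, dotR u w = dotR u (qv T (a • x0)) := fun w hw =>
      h w hw _ (qv_mem_Wk hk h1)
    have p1 := nonneg_of_Wk (T := T) (K := K) (u := u) (c := dotR u (qv T (a • x0)))
      (fun w hw => (hc w hw).ge) x hx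
    have p2 := nonneg_of_Wk (T := T) (K := K) (u := -u) (c := -dotR u (qv T (a • x0)))
      (fun w hw => by
        have : dotR (-u) w = - dotR u w := by simp [dotR]
        rw [this, hc w hw]) x hx
    rw [re_Hop] at *
    have : dotR (-u) (qv T x) = - dotR u (qv T x) := by simp [dotR]
    rw [this] at p2
    linarith
  · rintro ⟨c, h⟩
    have : Wk T K ⊆ {x | dotL u x = c} := by
      refine convexHull_min ?_ (convex_hyperplane (dotL u).isLinear c)
      rintro _ ⟨x, ⟨hx, h1⟩, rfl⟩
      have := re_Hop T u c x
      rw [h x hx x hx, h1] at this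
      simp at this
      change dotR u _ = c
      linarith
    intro x hx y hy
    have e1 : dotR u x = c := this hx
    have e2 : dotR u y = c := this hy
    rw [e1, e2]

lemma Wk_subsingleton {T : Fin 3 → E →ₗ[ℂ] E} {K : Submodule ℂ E}
    (hd : Module.finrank ℂ K ≤ 1) : (Wk T K).Subsingleton := by
  have : (qv T '' {x | x ∈ K ∧ ‖x‖ = 1}).Subsingleton := by
    rintro _ ⟨x, ⟨hx, h1⟩, rfl⟩ _ ⟨y, ⟨hy, h2⟩, rfl⟩
    obtain ⟨⟨z, hz⟩, hz'⟩ := finrank_le_one_iff.1 hd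
    obtain ⟨a, ha⟩ := hz' ⟨x, hx⟩
    obtain ⟨b, hb⟩ := hz' ⟨y, hy⟩
    have ha' : a • z = x := congrArg Subtype.val ha
    have hb' : b • z = y := congrArg Subtype.val hb
    rw [← ha', norm_smul] at h1
    rw [← hb', norm_smul] at h2
    have hz0 : ‖z‖ ≠ 0 := fun h => by rw [h] at h1; simp at h1
    rw [← ha', ← hb', qv_smul, qv_smul]
    have : ‖a‖ = ‖b‖ := mul_right_cancel₀ hz0 (h1.trans h2.symm)
    rw [this]
  rcases this.eq_empty_or_singleton with h | ⟨p, h⟩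
  · rw [Wk, h, convexHull_empty]; exact Set.subsingleton_empty
  · rw [Wk, h, convexHull_singleton]; exact Set.subsingleton_singleton
end

section
set_option linter.unusedSectionVars false
set_option linter.unusedSimpArgs false

variable {E : Type*} [NormedAddCommGroup E] [InnerProductSpace ℂ E] [FiniteDimensional ℂ E]

lemma exists_half (s t : ℝ) (h : s ^ 2 + t ^ 2 = 1) :
    ∃ α β : ℝ, α ^ 2 + β ^ 2 = 1 ∧ 2 * α ^ 2 - 1 = s ∧ 2 * (α * β) = t := by
  by_cases hs : s = -1
  · subst hs
    have : t = 0 := by nlinarith [sq_nonneg t]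
    exact ⟨0, 1, by norm_num, by norm_num, by simp [this]⟩
  · have hs1 : -1 < s := by
      rcases lt_or_ge (-1) s with h1 | h1
      · exact h1
      · exfalso; apply hs; nlinarith [sq_nonneg t, sq_nonneg (s + 1)]
    set α := Real.sqrt ((1 + s) / 2) with hα
    have hα2 : α ^ 2 = (1 + s) / 2 := Real.sq_sqrt (by linarith)
    have hα0 : 0 < α := Real.sqrt_pos.2 (by linarith)
    refine ⟨α, t / (2 * α), ?_, by rw [hα2]; ring, by field_simp⟩
    rw [div_pow, mul_pow, hα2]
    have : (1 + s) ≠ 0 := by linarith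
    field_simp
    nlinarith

lemma perp_two {u0 u1 : Fin 3 → ℝ} (h : LinearIndependent ℝ ![u0, u1]) :
    ∃ d : Fin 3 → ℝ, d ≠ 0 ∧ dotR u0 d = 0 ∧ dotR u1 d = 0 ∧
      ∀ v, dotR u0 v = 0 → dotR u1 v = 0 → ∃ s : ℝ, v = s • d := by
  have h1 := convDim_add_annC ({0, u0, u1} : Set (Fin 3 → ℝ))
  have hvs : vectorSpan ℝ ({0, u0, u1} : Set (Fin 3 → ℝ)) = Submodule.span ℝ {u0, u1} := by
    apply le_antisymm
    · rw [vectorSpan_eq_span_vsub_set_right ℝ (p := (0 : Fin 3 → ℝ)) (by simp), Submodule.span_le]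
      rintro _ ⟨x, hx, rfl⟩
      rcases hx with rfl | rfl | rfl
      · simp
      · simpa using Submodule.subset_span (by simp)
      · simpa using Submodule.subset_span (by simp)
    · rw [Submodule.span_le]
      rintro x (rfl | rfl)
      · have := vsub_mem_vectorSpan ℝ (s := ({0, x, u1} : Set (Fin 3 → ℝ))) (p₁ := x) (p₂ := 0) (by simp) (by simp)
        simpa using this
      · have := vsub_mem_vectorSpan ℝ (s := ({0, u0, x} : Set (Fin 3 → ℝ))) (p₁ := x) (p₂ := 0) (by simp) (by simp)
        simpa using this
  have h2 : Module.finrank ℝ (Submodule.span ℝ ({u0, u1} : Set (Fin 3 → ℝ))) = 2 := by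
    have := finrank_span_eq_card h
    have hr : Set.range ![u0, u1] = {u0, u1} := by
      rw [Matrix.range_cons, Matrix.range_cons, Matrix.range_empty]; simp [Set.pair_comm]
    rw [hr] at this
    simpa using this
  rw [convDim, direction_affineSpan, hvs, h2] at h1
  have h3 : Module.finrank ℝ (annC ({0, u0, u1} : Set (Fin 3 → ℝ))) = 1 := by omega
  have hm : ∀ v, v ∈ annC ({0, u0, u1} : Set (Fin 3 → ℝ)) ↔ dotR u0 v = 0 ∧ dotR u1 v = 0 := by
    intro v
    rw [mem_annC]
    constructor
    · intro hv
      constructor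
      · rw [dotR_comm, hv u0 (by simp) 0 (by simp), dotR_zero_right]
      · rw [dotR_comm, hv u1 (by simp) 0 (by simp), dotR_zero_right]
    · rintro ⟨h1, h2⟩ x hx y hy
      have : ∀ x ∈ ({0, u0, u1} : Set (Fin 3 → ℝ)), dotR v x = 0 := by
        rintro x (rfl | rfl | rfl)
        · exact dotR_zero_right v
        · rw [dotR_comm, h1]
        · rw [dotR_comm, h2]
      rw [this x hx, this y hy]
  obtain ⟨⟨d, hd⟩, hdn, hsp⟩ := finrank_eq_one_iff'.1 h3
  refine ⟨d, fun h => hdn (by ext1; exact h), ((hm d).1 hd).1, ((hm d).1 hd).2, fun v h1 h2 => ?_⟩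
  obtain ⟨s, hs⟩ := hsp ⟨v, (hm v).2 ⟨h1, h2⟩⟩
  exact ⟨s, (congrArg Subtype.val hs).symm⟩

lemma annC_one {F : Set (Fin 3 → ℝ)} (h : convDim F = 2) {u0 : Fin 3 → ℝ} (h0 : u0 ∈ annC F)
    (hn : u0 ≠ 0) : ∀ u ∈ annC F, ∃ t : ℝ, u = t • u0 := by
  have h1 := convDim_add_annC F
  have h2 : Module.finrank ℝ (annC F) = 1 := by omega
  intro u hu
  obtain ⟨t, ht⟩ := (finrank_eq_one_iff_of_nonzero' (⟨u0, h0⟩ : annC F)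
    (fun h => hn (congrArg Subtype.val h))).1 h2 ⟨u, hu⟩
  exact ⟨t, (congrArg Subtype.val ht).symm⟩

lemma qv_add {T : Fin 3 → E →ₗ[ℂ] E} (hT : ∀ i, (T i).IsSymmetric) (x y : E) :
    qv T (x + y) = qv T x + qv T y + (2 : ℝ) • fun i => (inner ℂ y (T i x)).re := by
  funext i
  simp only [qv, Pi.add_apply, Pi.smul_apply, smul_eq_mul]
  rw [re_add_sq (hT i)]; ring

/-- degenerate rank three faces are elliptic -/
lemma elliptic_degenerate {T : Fin 3 → E →ₗ[ℂ] E} (hT : ∀ i, (T i).IsSymmetric)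
    {K : Submodule ℂ E} {w : E} {u1 : Fin 3 → ℝ} {c1 : ℝ} (hw : w ∈ K) (hw0 : w ≠ 0)
    (hR : Rk T K w u1 c1) (hdim : convDim (Wk T K) = 2)
    (hs : (Wk T (K ⊓ pp w)).Subsingleton) {y0 : E} (hy0 : y0 ∈ K ⊓ pp w) (hy0n : y0 ≠ 0) :
    IsEllipticDisk (Wk T K) := by
  obtain ⟨a0, ha0, he1K, he1⟩ := exists_unit hw hw0
  have hR' := Rk_smul hR a0
  set e1 := a0 • w with he1d
  have hpp : ∀ y, y ∈ pp w ↔ inner ℂ e1 y = 0 := by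
    intro y; rw [mem_pp, he1d, inner_smul_left]; simp [ha0]
  generalize ‖a0‖ ^ 2 • u1 = u at hR'
  generalize ‖a0‖ ^ 2 * c1 = c at hR'
  clear_value e1
  -- ann generator
  have hann := convDim_add_annC (Wk T K)
  obtain ⟨⟨u0, hu0⟩, hu0n, -⟩ := finrank_eq_one_iff'.1
    (show Module.finrank ℝ (annC (Wk T K)) = 1 by omega)
  have hu0n' : u0 ≠ 0 := fun h => hu0n (by ext1; exact h)
  obtain ⟨c0, hc0⟩ := (annC_Wk hT hw hw0).1 hu0
  obtain ⟨b0, hb0, hyK, hy1⟩ := exists_unit hy0 hy0n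
  set y1 := b0 • y0 with hy1d
  clear_value y1
  set p := qv T y1 with hp
  have hq : ∀ y ∈ K ⊓ pp w, qv T y = ‖y‖ ^ 2 • p := by
    intro y hy
    by_cases h0 : y = 0
    · subst h0; funext i; simp [qv]
    obtain ⟨b, hb, hbK, hb1⟩ := exists_unit hy h0
    have h := hs (qv_mem_Wk hbK hb1) (qv_mem_Wk hyK hy1)
    rw [qv_smul] at h
    rw [hp, ← h, smul_smul, ← mul_pow, mul_comm, ← norm_smul, hb1]; simp
  have he1e1 : inner ℂ e1 e1 = 1 := by rw [inner_self_eq_norm_sq_to_K, he1]; simp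
  -- cross terms
  have hB1 : ∀ y ∈ K ⊓ pp w, ∑ i, (u i : ℂ) * inner ℂ y (T i e1) = 0 := by
    intro y hy
    have h1 := hR' e1 he1K y hy.1
    have h2 : inner ℂ y e1 = 0 := by
      rw [← inner_conj_symm, (hpp y).1 hy.2, map_zero]
    rw [inner_Hop, h2] at h1
    simpa using h1
  have hB0 : ∀ y ∈ K ⊓ pp w, ∑ i, (u0 i : ℂ) * inner ℂ y (T i e1) = 0 := by
    intro y hy
    have h1 := hc0 e1 he1K y hy.1
    have h2 : inner ℂ y e1 = 0 := by
      rw [← inner_conj_symm, (hpp y).1 hy.2, map_zero]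
    rw [inner_Hop, h2] at h1
    simpa using h1
  have hu1e : dotR u (qv T e1) = c + 1 := by
    have := re_Hop T u c e1
    rw [hR' e1 he1K e1 he1K, he1e1, he1] at this
    simp at this; linarith
  have hu1p : dotR u p = c := by
    have := re_Hop T u c y1
    rw [hR' y1 hyK.1 y1 hyK.1, (hpp y1).1 hyK.2, hy1] at this
    simp at this; linarith
  have hLI : LinearIndependent ℝ ![u0, u] := by
    rw [LinearIndependent.pair_iff]
    intro s t hst
    have k1 : t = 0 := by
      have h1 := hu0 _ (qv_mem_Wk (T := T) he1K he1) _ (qv_mem_Wk (T := T) hyK.1 hy1)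
      have h2 : dotR (s • u0 + t • u) (qv T e1) = dotR (s • u0 + t • u) p := by
        rw [hst, dotR_zero_left, dotR_zero_left]
      rw [dotR_add_left, dotR_add_left, dotR_smul_left, dotR_smul_left, dotR_smul_left,
        dotR_smul_left, hu1e, hu1p, h1] at h2
      linarith
    subst k1
    refine ⟨?_, rfl⟩
    simpa [hu0n'] using hst
  obtain ⟨d, hd0, hdu0, hdu, hd⟩ := perp_two hLI
  obtain ⟨i0, hi0⟩ := Function.ne_iff.1 hd0
  have hi0' : (d i0 : ℂ) ≠ 0 := by exact_mod_cast hi0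
  let g0 : E := ((d i0 : ℂ))⁻¹ • T i0 e1
  have hBd : ∀ y ∈ K ⊓ pp w, ∀ i, inner ℂ y (T i e1) = inner ℂ y g0 * d i := by
    intro y hy
    have r1 := congrArg Complex.re (hB1 y hy)
    have r0 := congrArg Complex.re (hB0 y hy)
    have m1 := congrArg Complex.im (hB1 y hy)
    have m0 := congrArg Complex.im (hB0 y hy)
    simp only [Complex.re_sum, Complex.im_sum, Complex.re_ofReal_mul, Complex.im_ofReal_mul,
      Complex.zero_re, Complex.zero_im] at r1 r0 m1 m0
    obtain ⟨s, hs⟩ := hd (fun i => (inner ℂ y (T i e1)).re) r0 r1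
    obtain ⟨t, ht⟩ := hd (fun i => (inner ℂ y (T i e1)).im) m0 m1
    have hall : ∀ i, inner ℂ y (T i e1) = (s + t * Complex.I) * d i := by
      intro i
      have hs' := congrFun hs i
      have ht' := congrFun ht i
      simp at hs' ht'
      apply Complex.ext <;> simp [hs', ht']
    intro i
    have : inner ℂ y g0 = s + t * Complex.I := by
      simp only [g0]
      rw [inner_smul_right, hall i0]; field_simp
    rw [this, hall i]
  -- project g0
  let g : E := (K ⊓ pp w).starProjection g0
  have hgK : g ∈ K ⊓ pp w := Submodule.starProjection_apply_mem _ _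
  have hg : ∀ y ∈ K ⊓ pp w, inner ℂ y g0 = inner ℂ y g := by
    intro y hy
    have := Submodule.starProjection_inner_eq_zero (K := K ⊓ pp w) g0 y hy
    have h2 : inner ℂ y (g0 - g) = 0 := by
      rw [← inner_conj_symm, this, map_zero]
    rw [inner_sub_right, sub_eq_zero] at h2
    exact h2
  clear_value g
  set a := qv T e1 - p with ha
  have hform : ∀ (α : ℂ), ∀ y ∈ K ⊓ pp w,
      qv T (α • e1 + y) = (‖α‖ ^ 2) • qv T e1 + ‖y‖ ^ 2 • p + (2 * (α * inner ℂ y g).re) • d := by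
    intro α y hy
    rw [qv_add hT, qv_smul, hq y hy]
    congr 1
    funext i
    simp only [Pi.smul_apply, smul_eq_mul, map_smul, inner_smul_right]
    rw [hBd y hy i, hg y hy, ← mul_assoc, Complex.re_mul_ofReal]; ring
  have hnorm : ∀ (α : ℂ), ∀ y ∈ K ⊓ pp w, ‖α • e1 + y‖ ^ 2 = ‖α‖ ^ 2 + ‖y‖ ^ 2 := by
    intro α y hy
    rw [@norm_add_sq ℂ, inner_smul_left, (hpp y).1 hy.2, norm_smul, he1]; simp
  have hdec : ∀ x ∈ K, ∃ α : ℂ, ∃ y ∈ K ⊓ pp w, x = α • e1 + y := by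
    intro x hx
    refine ⟨inner ℂ e1 x, x - inner ℂ e1 x • e1, ⟨K.sub_mem hx (K.smul_mem _ he1K), ?_⟩, by simp⟩
    rw [SetLike.mem_coe, hpp, inner_sub_right, inner_smul_right, he1e1]; simp
  have hg0 : g ≠ 0 := by
    intro h0
    have hsub : Wk T K ⊆ (AffineSubspace.mk' p (Submodule.span ℝ {a}) : AffineSubspace ℝ (Fin 3 → ℝ)) := by
      refine convexHull_min ?_ (AffineSubspace.convex _)
      rintro _ ⟨x, ⟨hx, hx1⟩, rfl⟩
      obtain ⟨α, y, hy, rfl⟩ := hdec x hx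
      have hn := hnorm α y hy
      rw [hx1] at hn
      rw [hform α y hy, h0]
      rw [SetLike.mem_coe, AffineSubspace.mem_mk', Submodule.mem_span_singleton]
      refine ⟨‖α‖ ^ 2, ?_⟩
      have : ‖y‖ ^ 2 = 1 - ‖α‖ ^ 2 := by linarith
      rw [this]; simp only [inner_zero_right, mul_zero, Complex.zero_re, vsub_eq_sub, ha]
      module
    have h1 := AffineSubspace.direction_le (affineSpan_le.2 hsub)
    rw [AffineSubspace.direction_mk'] at h1
    have h2 := Submodule.finrank_mono h1
    have h3 : Module.finrank ℝ (Submodule.span ℝ {a}) ≤ 1 :=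
      (finrank_span_le_card ({a} : Set (Fin 3 → ℝ))).trans (by simp)
    unfold convDim at hdim
    omega
  have hgn : 0 < ‖g‖ := norm_pos_iff.2 hg0
  refine elliptic_of (p + (1/2 : ℝ) • a) ((1/2 : ℝ) • a) (‖g‖ • d) ?_ ?_ ?_
  · intro s t hst
    have h1 := congrArg (dotR u) hst
    rw [dotR_add_right, dotR_smul_right, dotR_smul_right, dotR_smul_right, dotR_smul_right, hdu,
      dotR_zero_right, ha, dotR_sub_right, hu1e, hu1p] at h1
    have hs0 : s = 0 := by linarith
    subst hs0
    refine ⟨rfl, ?_⟩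
    simpa [hgn.ne', hd0] using hst
  · rintro _ ⟨x, ⟨hx, hx1⟩, rfl⟩
    obtain ⟨α, y, hy, rfl⟩ := hdec x hx
    have hn := hnorm α y hy
    rw [hx1] at hn
    have hb : |(α * inner ℂ y g).re| ≤ ‖α‖ * (‖y‖ * ‖g‖) := by
      refine (Complex.abs_re_le_norm _).trans ?_
      rw [norm_mul]
      exact mul_le_mul_of_nonneg_left (norm_inner_le_norm _ _) (norm_nonneg _)
    refine ⟨2 * ‖α‖ ^ 2 - 1, 2 * (α * inner ℂ y g).re / ‖g‖, ?_, ?_⟩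
    · have : (2 * (α * inner ℂ y g).re / ‖g‖) ^ 2 ≤ 4 * ‖α‖ ^ 2 * ‖y‖ ^ 2 := by
        rw [div_pow, div_le_iff₀ (by positivity)]
        have := sq_le_sq' (neg_le_of_abs_le hb) (le_of_abs_le hb)
        nlinarith
      have hy2 : ‖y‖ ^ 2 = 1 - ‖α‖ ^ 2 := by linarith
      rw [hy2] at this
      nlinarith
    · rw [hform α y hy]
      have hy2 : ‖y‖ ^ 2 = 1 - ‖α‖ ^ 2 := by linarith
      rw [smul_smul (2 * (α * inner ℂ y g).re / ‖g‖), div_mul_cancel₀ _ hgn.ne', hy2, ha]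
      module
  · intro s t hst
    obtain ⟨α, β, hab, h1, h2⟩ := exists_half s t hst
    have hyg : ((β / ‖g‖ : ℝ) : ℂ) • g ∈ K ⊓ pp w := Submodule.smul_mem _ _ hgK
    refine ⟨(α : ℂ) • e1 + ((β / ‖g‖ : ℝ) : ℂ) • g, ⟨?_, ?_⟩, ?_⟩
    · exact K.add_mem (K.smul_mem _ he1K) hyg.1
    · have := hnorm α _ hyg
      rw [norm_smul] at this
      have e : ‖((β / ‖g‖ : ℝ) : ℂ)‖ * ‖g‖ = |β| := by
        rw [Complex.norm_real, Real.norm_eq_abs, abs_div, abs_of_pos hgn]; field_simp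
      rw [e, Complex.norm_real, Real.norm_eq_abs, sq_abs, sq_abs, hab] at this
      nlinarith [norm_nonneg ((α : ℂ) • e1 + ((β / ‖g‖ : ℝ) : ℂ) • g)]
    · rw [hform α _ hyg, norm_smul]
      have e : ‖((β / ‖g‖ : ℝ) : ℂ)‖ * ‖g‖ = |β| := by
        rw [Complex.norm_real, Real.norm_eq_abs, abs_div, abs_of_pos hgn]; field_simp
      rw [e, Complex.norm_real, Real.norm_eq_abs, sq_abs, sq_abs, inner_smul_left,
        inner_self_eq_norm_sq_to_K, Complex.conj_ofReal]
      have e2 : ((α : ℂ) * (((β / ‖g‖ : ℝ) : ℂ) * ((‖g‖ : ℝ) : ℂ) ^ 2)).re = α * β * ‖g‖ := by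
        rw [← Complex.ofReal_pow, ← Complex.ofReal_mul, ← Complex.ofReal_mul, Complex.ofReal_re]
        field_simp
      have e3 : β ^ 2 = 1 - α ^ 2 := by linarith
      have e4 : ((α : ℂ) * (((β / ‖g‖ : ℝ) : ℂ) * (RCLike.ofReal ‖g‖) ^ 2)).re = α * β * ‖g‖ := e2
      rw [e4, e3, ← h1, ← h2, ha]
      module
end

section
set_option linter.unusedSectionVars false
set_option linter.unusedSimpArgs false

variable {E : Type*} [NormedAddCommGroup E] [InnerProductSpace ℂ E] [FiniteDimensional ℂ E]

lemma sphere_compact (K : Submodule ℂ E) : IsCompact {x | x ∈ K ∧ ‖x‖ = 1} := by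
  have : ProperSpace E := FiniteDimensional.proper ℂ E
  have h1 : {x | x ∈ K ∧ ‖x‖ = 1} = Metric.sphere (0 : E) 1 ∩ (K : Set E) := by
    ext x; simp [and_comm]
  rw [h1]
  exact (isCompact_sphere _ _).inter_right (Submodule.closed_of_finiteDimensional K)

lemma qv_cont (T : Fin 3 → E →ₗ[ℂ] E) (u : Fin 3 → ℝ) : Continuous (fun x => dotR u (qv T x)) := by
  unfold dotR qv
  have h : ∀ i, Continuous (T i) := fun i => LinearMap.continuous_of_finiteDimensional (T i)
  fun_prop

lemma psd_rank_one' {T : Fin 3 → E →ₗ[ℂ] E} (hT : ∀ i, (T i).IsSymmetric) {K : Submodule ℂ E}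
    {u : Fin 3 → ℝ} {c : ℝ} (h : ∀ x ∈ K, 0 ≤ (inner ℂ x (Hop T u c x)).re)
    (hd : Module.finrank ℂ (nullSub (Hop T u c) K) + 1 = Module.finrank ℂ K) :
    ∃ w ∈ K, w ≠ 0 ∧ Rk T K w u c := psd_rank_one (Hop_symm hT u c) h hd

lemma finrank_pp_ge {K : Submodule ℂ E} {w : E} (hw : w ∈ K) (hw0 : w ≠ 0) :
    Module.finrank ℂ (K ⊓ pp w : Submodule ℂ E) + 1 = Module.finrank ℂ K := by
  have h1 := Submodule.finrank_add_inf_finrank_orthogonal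
    (show Submodule.span ℂ {w} ≤ K by rw [Submodule.span_singleton_le_iff_mem]; exact hw)
  rw [finrank_span_singleton hw0] at h1
  rw [inf_comm, pp]; omega

lemma exists_ne_zero_of_finrank {K : Submodule ℂ E} (h : 1 ≤ Module.finrank ℂ K) :
    ∃ x ∈ K, x ≠ 0 := by
  apply K.exists_mem_ne_zero_of_ne_bot
  rintro rfl
  simp at h

lemma elliptic_two {T : Fin 3 → E →ₗ[ℂ] E} (hT : ∀ i, (T i).IsSymmetric)
    {K : Submodule ℂ E} (hK : Module.finrank ℂ K = 2) (hdim : convDim (Wk T K) = 2) :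
    IsEllipticDisk (Wk T K) := by
  obtain ⟨x0, hx0, hx0n⟩ := exists_ne_zero_of_finrank (K := K) (by omega)
  obtain ⟨a, ha, hak, ha1⟩ := exists_unit hx0 hx0n
  have hann := convDim_add_annC (Wk T K)
  have hex : ∃ u : Fin 3 → ℝ, u ∉ annC (Wk T K) := by
    by_contra hcon
    push Not at hcon
    have : annC (Wk T K) = ⊤ := by rw [eq_top_iff]; intro u _; exact hcon u
    rw [this, finrank_top] at hann
    simp at hann; omega
  obtain ⟨u, hu⟩ := hex
  obtain ⟨x1, ⟨hx1, hx11⟩, hmin⟩ := (sphere_compact K).exists_isMinOn ⟨_, hak, ha1⟩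
    (qv_cont T u).continuousOn
  set c := dotR u (qv T x1) with hc
  have hpos : ∀ x ∈ K, 0 ≤ (inner ℂ x (Hop T u c x)).re := by
    apply nonneg_of_Wk
    intro w hw
    have : Wk T K ⊆ {w | c ≤ dotR u w} := by
      apply convexHull_min
      · rintro _ ⟨x, hx, rfl⟩
        exact hmin hx
      · have := convex_halfSpace_ge (𝕜 := ℝ) (dotL u).isLinear c
        simpa [dotL_apply] using this
    exact this hw
  have hx1n : x1 ≠ 0 := by rintro rfl; simp at hx11
  have h1 : Module.finrank ℂ (nullSub (Hop T u c) K) + 1 = Module.finrank ℂ K := by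
    have hlt : nullSub (Hop T u c) K < K := by
      refine lt_of_le_of_ne nullSub_le fun h => hu ?_
      rw [annC_Wk hT hx1 hx1n]
      refine ⟨c, fun x hx y hy => ?_⟩
      rw [← h] at hx
      exact hx.2 y hy
    have h2 := Submodule.finrank_lt_finrank_of_lt hlt
    have h3 : x1 ∈ nullSub (Hop T u c) K := by
      refine ⟨hx1, psd_null (Hop_symm hT _ _) hpos hx1 ?_⟩
      rw [re_Hop, hx11]; simp [hc]
    have h4 : 1 ≤ Module.finrank ℂ (nullSub (Hop T u c) K) := by
      rw [Submodule.one_le_finrank_iff]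
      rintro h
      rw [h] at h3
      exact hx1n (by simpa using h3)
    omega
  obtain ⟨w, hw, hw0, hR⟩ := psd_rank_one' hT hpos h1
  have h5 := finrank_pp_ge hw hw0
  obtain ⟨y0, hy0, hy0n⟩ := exists_ne_zero_of_finrank (K := K ⊓ pp w) (by omega)
  exact elliptic_degenerate hT hw hw0 hR hdim (Wk_subsingleton (by omega)) hy0 hy0n

/-- a nonelliptic exposed facet is given by a rank one element -/
lemma face_rank_one {T : Fin 3 → E →ₗ[ℂ] E} (hT : ∀ i, (T i).IsSymmetric)
    (hE : Module.finrank ℂ E = 4) (hdim : convDim (Wk T ⊤) = 3) {F : Set (Fin 3 → ℝ)}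
    (hF : IsNonEllipticFace (Wk T ⊤) F) :
    ∃ v u c, v ≠ 0 ∧ Rk T ⊤ v u c ∧ F = Wk T (pp v) := by
  obtain ⟨hf, h2, hne⟩ := hF
  have hFne : F.Nonempty := by
    rw [Set.nonempty_iff_ne_empty]; rintro rfl
    rw [convDim_subsingleton (by simp)] at h2; omega
  obtain ⟨u, c, h1, ⟨x1, hx1, hx1c⟩, hFe⟩ := face_exposed (Wk_convex T ⊤) hf hFne (by omega)
  have hpos := nonneg_of_Wk h1
  have h3 := (Wk_of_nonneg hT hpos).2
  rw [← hFe] at h3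
  set N := nullSub (Hop T u c) ⊤ with hN
  have hlt : Module.finrank ℂ N < 4 := by
    rw [← hE]
    apply Submodule.finrank_lt
    intro h
    rw [h] at h3
    rw [← h3, hFe] at hx1
    exact hx1c.ne hx1.2.symm
  have hge : 3 ≤ Module.finrank ℂ N := by
    by_contra hcon
    rcases (by omega : Module.finrank ℂ N ≤ 1 ∨ Module.finrank ℂ N = 2) with h | h
    · rw [h3, convDim_subsingleton (Wk_subsingleton h)] at h2; omega
    · exact hne (h3 ▸ elliptic_two hT h (h3 ▸ h2))
  obtain ⟨v, hv, hv0, hR⟩ := psd_rank_one' hT hpos (by rw [finrank_top, ← hN]; omega)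
  refine ⟨v, u, c, hv0, hR, ?_⟩
  rw [h3, hN, Rk_null hR hv, top_inf_eq]
end

section
set_option linter.unusedSectionVars false
set_option linter.unusedSimpArgs false

variable {E : Type*} [NormedAddCommGroup E] [InnerProductSpace ℂ E] [FiniteDimensional ℂ E]

lemma annC_mono {C C' : Set (Fin 3 → ℝ)} (h : C' ⊆ C) : annC C ≤ annC C' := by
  intro u hu
  rw [mem_annC] at *
  exact fun x hx y hy => hu x (h hx) y (h hy)

lemma Rk_not_ann {T : Fin 3 → E →ₗ[ℂ] E} (hT : ∀ i, (T i).IsSymmetric) {K : Submodule ℂ E} {w : E}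
    {u : Fin 3 → ℝ} {c : ℝ} (hR : Rk T K w u c) (hw : w ∈ K) (hw0 : w ≠ 0)
    (hK : 2 ≤ Module.finrank ℂ K) : u ∉ annC (Wk T K) := by
  intro hu
  obtain ⟨c', h⟩ := (annC_Wk hT hw hw0).1 hu
  have h5 := finrank_pp_ge hw hw0
  obtain ⟨x, hx, hxn⟩ := exists_ne_zero_of_finrank (K := K ⊓ pp w) (by omega)
  have key : ∀ x ∈ K, ∀ y ∈ K, inner ℂ y w * inner ℂ w x = ((c' - c : ℝ) : ℂ) * inner ℂ y x := by
    intro x hx y hy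
    rw [← hR x hx y hy, Hop_shift T u c c', inner_add_right, h x hx y hy, inner_smul_right, zero_add]
  have k1 := key x hx.1 x hx.1
  rw [mem_pp.1 hx.2, mul_zero] at k1
  have k2 : ((c' - c : ℝ) : ℂ) = 0 := by
    rcases mul_eq_zero.1 k1.symm with h | h
    · exact h
    · exact absurd (inner_self_eq_zero.1 h) hxn
  have k3 := key w hw w hw
  rw [k2, zero_mul] at k3
  exact hw0 (inner_self_eq_zero.1 (mul_self_eq_zero.1 k3))

lemma onedim_iff {T : Fin 3 → E →ₗ[ℂ] E} (hT : ∀ i, (T i).IsSymmetric) {K : Submodule ℂ E}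
    (hK : Module.finrank ℂ K = 3) (hd : convDim (Wk T K) = 2) (G : Set (Fin 3 → ℝ)) :
    (IsFaceOf (Wk T K) G ∧ convDim G = 1) ↔
      ∃ w u c, w ∈ K ∧ w ≠ 0 ∧ Rk T K w u c ∧ G = Wk T (K ⊓ pp w) ∧ ¬ G.Subsingleton := by
  constructor
  · rintro ⟨hf, h2⟩
    have hFne : G.Nonempty := by
      rw [Set.nonempty_iff_ne_empty]; rintro rfl
      rw [convDim_subsingleton (by simp)] at h2; omega
    have hns : ¬ G.Subsingleton := by
      intro h; rw [convDim_subsingleton h] at h2; omega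
    obtain ⟨u, c, h1, ⟨x1, hx1, hx1c⟩, hFe⟩ := face_exposed (Wk_convex T K) hf hFne (by omega)
    have hpos := nonneg_of_Wk h1
    have h3 := (Wk_of_nonneg hT hpos).2
    rw [← hFe] at h3
    set N := nullSub (Hop T u c) K with hN
    have hlt : Module.finrank ℂ N < Module.finrank ℂ K := by
      apply Submodule.finrank_lt_finrank_of_lt
      refine lt_of_le_of_ne nullSub_le ?_
      intro h
      rw [h] at h3
      rw [← h3, hFe] at hx1
      exact hx1c.ne hx1.2.symm
    have hge : 2 ≤ Module.finrank ℂ N := by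
      by_contra hcon
      exact hns (h3 ▸ Wk_subsingleton (by omega))
    obtain ⟨v, hv, hv0, hR⟩ := psd_rank_one' hT hpos (by rw [← hN]; omega)
    refine ⟨v, u, c, hv, hv0, hR, ?_, hns⟩
    rw [h3, hN, Rk_null hR hv]
  · rintro ⟨w, u, c, hw, hw0, hR, rfl, hns⟩
    obtain ⟨h1, h2⟩ := Rk_face hT hR hw
    have hf := face_of_exposed (Wk_convex T K) h1
    rw [h2] at hf
    refine ⟨hf, ?_⟩
    have h3 := convDim_pos hns
    have h4 := convDim_add_annC (Wk T (K ⊓ pp w))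
    have h5 := convDim_add_annC (Wk T K)
    have h6 : annC (Wk T K) < annC (Wk T (K ⊓ pp w)) := by
      refine lt_of_le_of_ne (annC_mono (Wk_mono inf_le_left)) fun h => ?_
      apply Rk_not_ann hT hR hw hw0 (by omega)
      rw [h, ← h2, mem_annC]
      rintro x hx y hy
      rw [hx.2, hy.2]
    have h7 := Submodule.finrank_lt_finrank_of_lt h6
    omega

lemma G_eq_par {T : Fin 3 → E →ₗ[ℂ] E} (hT : ∀ i, (T i).IsSymmetric) {K : Submodule ℂ E} {w z : E}
    {u : Fin 3 → ℝ} {c : ℝ} (hR : Rk T K w u c) (hw : w ∈ K) (hz : z ∈ K)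
    (h : Wk T (K ⊓ pp z) ⊆ Wk T (K ⊓ pp w)) : ∃ a : ℂ, w = a • z := by
  set b := inner ℂ z w / inner ℂ z z with hb
  by_cases hx0 : w - b • z = 0
  · exact ⟨b, sub_eq_zero.1 hx0⟩
  exfalso
  have hzx : inner ℂ z (w - b • z) = 0 := by
    rw [inner_sub_right, inner_smul_right, hb]
    by_cases h0 : z = 0
    · simp [h0]
    · rw [div_mul_cancel₀, sub_self]
      simpa using h0
  have hxK : w - b • z ∈ K ⊓ pp z := ⟨K.sub_mem hw (K.smul_mem _ hz), mem_pp.2 hzx⟩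
  obtain ⟨a, ha, hak, ha1⟩ := exists_unit hxK hx0
  have h1 := h (qv_mem_Wk (T := T) hak ha1)
  rw [← (Rk_face hT hR hw).2] at h1
  have h2 := re_Hop T u c (a • (w - b • z))
  rw [h1.2, ha1, Rk_nonneg hR _ hak.1] at h2
  have h3 : inner ℂ w (w - b • z) = 0 := by
    have : ‖inner ℂ w (a • (w - b • z))‖ ^ 2 = 0 := by linarith
    rw [inner_smul_right, norm_mul, pow_eq_zero_iff two_ne_zero, mul_eq_zero, norm_eq_zero,
      norm_eq_zero] at this
    exact this.resolve_left ha
  apply hx0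
  rw [← inner_self_eq_zero (𝕜 := ℂ), inner_sub_left (𝕜 := ℂ) w, inner_smul_left, hzx, h3]; simp

lemma pp_smul {a : ℂ} (ha : a ≠ 0) (z : E) : pp (a • z) = pp z := by
  ext x; rw [mem_pp, mem_pp, inner_smul_left]; simp [ha]

lemma proj_ex (v1 v2 : E) : ∃ (b : ℂ) (w : E), w ∈ pp v1 ∧ v2 = w + b • v1 := by
  refine ⟨inner ℂ v1 v2 / inner ℂ v1 v1, v2 - (inner ℂ v1 v2 / inner ℂ v1 v1) • v1, ?_, by simp⟩
  rw [mem_pp, inner_sub_right, inner_smul_right]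
  by_cases h0 : v1 = 0
  · simp [h0]
  · rw [div_mul_cancel₀, sub_self]
    simpa using h0

/-- vector identity from forms -/
lemma eq_of_forms {K : Submodule ℂ E} {x y : E} (hx : x ∈ K) (hy : y ∈ K)
    (h : ∀ k ∈ K, inner ℂ k x = inner ℂ k y) : x = y := by
  have := h (x - y) (K.sub_mem hx hy)
  rw [← sub_eq_zero, ← inner_sub_right, inner_self_eq_zero] at this
  exact sub_eq_zero.1 this

/-- frame of rank one elements -/
structure Frame (T : Fin 3 → E →ₗ[ℂ] E) (K : Submodule ℂ E) {m : ℕ} (w : Fin m → E)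
    (U : Fin m → Fin 3 → ℝ) (C : Fin m → ℝ) (x0 : E) : Prop where
  li : LinearIndependent ℂ w
  mem : ∀ i, w i ∈ K
  rk : ∀ i, Rk T K (w i) (U i) (C i)
  xmem : x0 ∈ K
  xone : ‖x0‖ = 1
  xperp : ∀ i, inner ℂ (w i) x0 = 0
  xspan : ∀ x ∈ K, (∀ i, inner ℂ (w i) x = 0) → ∃ a : ℂ, x = a • x0
  ann : Module.finrank ℝ (annC (Wk T K)) + m = 3

lemma exists_x0 {K : Submodule ℂ E} {m : ℕ} {w : Fin m → E} (hli : LinearIndependent ℂ w)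
    (hwK : ∀ i, w i ∈ K) (hK : m + 1 = Module.finrank ℂ K) :
    ∃ x0 ∈ K, ‖x0‖ = 1 ∧ (∀ i, inner ℂ (w i) x0 = 0) ∧
      ∀ x ∈ K, (∀ i, inner ℂ (w i) x = 0) → ∃ a : ℂ, x = a • x0 := by
  have hle : Submodule.span ℂ (Set.range w) ≤ K := by
    rw [Submodule.span_le]; rintro _ ⟨i, rfl⟩; exact hwK i
  have h1 := Submodule.finrank_add_inf_finrank_orthogonal hle
  rw [finrank_span_eq_card hli, Fintype.card_fin] at h1
  have h2 : Module.finrank ℂ ((Submodule.span ℂ (Set.range w))ᗮ ⊓ K : Submodule ℂ E) = 1 := by omega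
  obtain ⟨⟨y, hy⟩, hyn, hsp⟩ := finrank_eq_one_iff'.1 h2
  have hyn' : y ≠ 0 := fun h => hyn (by ext1; exact h)
  obtain ⟨a, ha, hak, ha1⟩ := exists_unit hy hyn'
  refine ⟨a • y, hak.2, ha1, fun i => ?_, fun x hx h => ?_⟩
  · exact hak.1 _ (Submodule.subset_span ⟨i, rfl⟩)
  · have hx' : x ∈ (Submodule.span ℂ (Set.range w))ᗮ := by
      rw [Submodule.mem_orthogonal]
      intro u hu
      induction hu using Submodule.span_induction with
      | mem x hx => obtain ⟨i, rfl⟩ := hx; exact h i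
      | zero => simp
      | add x y _ _ h1 h2 => rw [inner_add_left, h1, h2, add_zero]
      | smul a x _ h1 => rw [inner_smul_left, h1, mul_zero]
    obtain ⟨b, hb⟩ := hsp ⟨x, hx', hx⟩
    refine ⟨b * a⁻¹, ?_⟩
    rw [smul_smul, mul_assoc, inv_mul_cancel₀ ha, mul_one]
    exact (congrArg Subtype.val hb).symm

lemma form_sum {T : Fin 3 → E →ₗ[ℂ] E} {K : Submodule ℂ E} {m : ℕ} {w : Fin m → E}
    {U : Fin m → Fin 3 → ℝ} {C : Fin m → ℝ} (hR : ∀ i, Rk T K (w i) (U i) (C i)) (t : Fin m → ℝ)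
    {x y : E} (hx : x ∈ K) (hy : y ∈ K) :
    inner ℂ y (Hop T (∑ i, t i • U i) (∑ i, t i * C i) x) =
      ∑ i, (t i : ℂ) * (inner ℂ y (w i) * inner ℂ (w i) x) := by
  have : ∀ s : Finset (Fin m), inner ℂ y (Hop T (∑ i ∈ s, t i • U i) (∑ i ∈ s, t i * C i) x) =
      ∑ i ∈ s, (t i : ℂ) * (inner ℂ y (w i) * inner ℂ (w i) x) := by
    intro s
    induction s using Finset.induction_on with
    | empty => simp [Hop_zero]
    | insert a s ha ih =>
      rw [Finset.sum_insert ha, Finset.sum_insert ha, Finset.sum_insert ha, Hop_add, inner_add_right,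
        ih, Hop_smul, inner_smul_right, hR a x hx y hy]
  exact this Finset.univ

namespace Frame
variable {T : Fin 3 → E →ₗ[ℂ] E} {K : Submodule ℂ E} {m : ℕ} {w : Fin m → E}
  {U : Fin m → Fin 3 → ℝ} {C : Fin m → ℝ} {x0 : E}

lemma x0ne (h : Frame T K w U C x0) : x0 ≠ 0 := by
  rintro rfl; simpa using h.xone

lemma wne (h : Frame T K w U C x0) (i : Fin m) : w i ≠ 0 := h.li.ne_zero i

end Frame

lemma indep_aux {T : Fin 3 → E →ₗ[ℂ] E} (hT : ∀ i, (T i).IsSymmetric) {K : Submodule ℂ E} {m : ℕ}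
    {w : Fin m → E} {U : Fin m → Fin 3 → ℝ} {C : Fin m → ℝ} {x0 : E}
    (hli : LinearIndependent ℂ w) (hw : ∀ i, w i ∈ K) (hR : ∀ i, Rk T K (w i) (U i) (C i))
    (hx : x0 ∈ K) (hx0 : x0 ≠ 0) (hp : ∀ i, inner ℂ (w i) x0 = 0) (t : Fin m → ℝ)
    (ht : ∑ i, t i • U i ∈ annC (Wk T K)) : t = 0 := by
  obtain ⟨c', h⟩ := (annC_Wk hT hx hx0).1 ht
  have key : ∀ x ∈ K, ∀ y ∈ K, ∑ i, (t i : ℂ) * (inner ℂ y (w i) * inner ℂ (w i) x) =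
      ((c' - ∑ i, t i * C i : ℝ) : ℂ) * inner ℂ y x := by
    intro x hx y hy
    rw [← form_sum hR t hx hy, Hop_shift T _ _ c', inner_add_right, h x hx y hy, inner_smul_right,
      zero_add]
  have k0 : ((c' - ∑ i, t i * C i : ℝ) : ℂ) = 0 := by
    have := key x0 hx x0 hx
    simp only [hp, mul_zero, Finset.sum_const_zero] at this
    rcases mul_eq_zero.1 this.symm with h | h
    · exact h
    · exact absurd (inner_self_eq_zero.1 h) hx0
  have k1 : ∀ x ∈ K, ∑ i, ((t i : ℂ) * inner ℂ (w i) x) • w i = 0 := by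
    intro x hx
    refine eq_of_forms (K := K) (K.sum_mem fun i _ => K.smul_mem _ (hw i)) K.zero_mem fun y hy => ?_
    rw [inner_sum, inner_zero_right]
    have := key x hx y hy
    rw [k0, zero_mul] at this
    rw [← this]
    refine Finset.sum_congr rfl fun i _ => ?_
    rw [inner_smul_right]; ring
  funext i
  have k2 := Fintype.linearIndependent_iff.1 hli _ (k1 (w i) (hw i)) i
  rcases mul_eq_zero.1 k2 with h | h
  · exact_mod_cast h
  · exact absurd (inner_self_eq_zero.1 h) (hli.ne_zero i)

/-- expand any functional along the frame -/
lemma frame_expand {T : Fin 3 → E →ₗ[ℂ] E} (hT : ∀ i, (T i).IsSymmetric) {K : Submodule ℂ E} {m : ℕ}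
    {w : Fin m → E} {U : Fin m → Fin 3 → ℝ} {C : Fin m → ℝ} {x0 : E} (hF : Frame T K w U C x0)
    (u : Fin 3 → ℝ) (c : ℝ) : ∃ (a : ℝ) (t : Fin m → ℝ), ∀ x ∈ K, ∀ y ∈ K,
      inner ℂ y (Hop T u c x) = a * inner ℂ y x +
        ∑ i, (t i : ℂ) * (inner ℂ y (w i) * inner ℂ (w i) x) := by
  have hax := indep_aux hT hF.li hF.mem hF.rk hF.xmem hF.x0ne hF.xperp
  have hUli : LinearIndependent ℝ U := by
    rw [Fintype.linearIndependent_iff]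
    intro t ht i
    have := hax t (by rw [ht]; exact Submodule.zero_mem _)
    rw [this]; rfl
  have hdis : annC (Wk T K) ⊓ Submodule.span ℝ (Set.range U) = ⊥ := by
    rw [eq_bot_iff]
    rintro x ⟨h1, h2⟩
    obtain ⟨t, rfl⟩ := (Submodule.mem_span_range_iff_exists_fun ℝ).1 h2
    rw [hax t h1]; simp
  have h1 := Submodule.finrank_sup_add_finrank_inf_eq (annC (Wk T K)) (Submodule.span ℝ (Set.range U))
  rw [hdis, finrank_bot, finrank_span_eq_card hUli, Fintype.card_fin, hF.ann] at h1
  have htop : annC (Wk T K) ⊔ Submodule.span ℝ (Set.range U) = ⊤ := by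
    apply Submodule.eq_top_of_finrank_eq
    simpa using h1
  have hu : u ∈ annC (Wk T K) ⊔ Submodule.span ℝ (Set.range U) := by rw [htop]; trivial
  obtain ⟨u', hu', u'', hu'', rfl⟩ := Submodule.mem_sup.1 hu
  obtain ⟨t, rfl⟩ := (Submodule.mem_span_range_iff_exists_fun ℝ).1 hu''
  obtain ⟨c', h⟩ := (annC_Wk hT hF.xmem hF.x0ne).1 hu'
  refine ⟨c' + ∑ i, t i * C i - c, t, fun x hx y hy => ?_⟩
  rw [Hop_shift T _ _ (c' + ∑ i, t i * C i), Hop_add, inner_add_right, inner_add_right, h x hx y hy,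
    form_sum hF.rk t hx hy, inner_smul_right]
  ring

/-- the generic claim -/
lemma claim_aux {T : Fin 3 → E →ₗ[ℂ] E} {K : Submodule ℂ E} {m : ℕ}
    {w : Fin m → E} {x0 : E} (hli : LinearIndependent ℂ w) (hmem : ∀ i, w i ∈ K)
    (hxm : x0 ∈ K) (hx0 : x0 ≠ 0) (hxp : ∀ i, inner ℂ (w i) x0 = 0)
    {y : E} (hy : y ∈ K) (hy0 : y ≠ 0) {u : Fin 3 → ℝ} {c : ℝ} (hR : Rk T K y u c)
    {a : ℝ} {t : Fin m → ℝ} (h : ∀ x ∈ K, ∀ y ∈ K,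
      inner ℂ y (Hop T u c x) = a * inner ℂ y x +
        ∑ i, (t i : ℂ) * (inner ℂ y (w i) * inner ℂ (w i) x)) :
    (∃ (i : Fin m) (a : ℂ), y = a • w i) ∨
      ((∃ a : ℂ, y = a • x0) ∧ ∀ i j, i ≠ j → inner ℂ (w i) (w j) = 0) := by
  have hv : ∀ x ∈ K, inner ℂ y x • y = (a : ℂ) • x + ∑ i, ((t i : ℂ) * inner ℂ (w i) x) • w i := by
    intro x hx
    refine eq_of_forms (K := K) (K.smul_mem _ hy) (K.add_mem (K.smul_mem _ hx)
      (K.sum_mem fun i _ => K.smul_mem _ (hmem i))) fun k hk => ?_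
    have := h x hx k hk
    rw [hR x hx k hk] at this
    rw [inner_smul_right, mul_comm, this, inner_add_right, inner_smul_right, inner_sum]
    congr 1
    refine Finset.sum_congr rfl fun i _ => ?_
    rw [inner_smul_right]; ring
  have hyy : inner ℂ y y ≠ 0 := fun h => hy0 (inner_self_eq_zero.1 h)
  by_cases ha : a = 0
  · left
    subst ha
    simp only [Complex.ofReal_zero, zero_smul, zero_add] at hv
    let s : Fin m → ℂ := fun i => (inner ℂ y y)⁻¹ * ((t i : ℂ) * inner ℂ (w i) y)
    have hs : y = ∑ i, s i • w i := by
      have := congrArg (fun z => (inner ℂ y y)⁻¹ • z) (hv y hy)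
      simp only [smul_smul, inv_mul_cancel₀ hyy, one_smul, Finset.smul_sum] at this
      exact this
    have hcoef : ∀ x ∈ K, ∀ i, inner ℂ y x * s i = (t i : ℂ) * inner ℂ (w i) x := by
      intro x hx i
      have h1 := hv x hx
      have h2 : ∑ i, (inner ℂ y x * s i - (t i : ℂ) * inner ℂ (w i) x) • w i = 0 := by
        simp only [sub_smul, Finset.sum_sub_distrib, mul_smul (inner ℂ y x), ← Finset.smul_sum]
        rw [← hs, h1, sub_self]
      exact sub_eq_zero.1 (Fintype.linearIndependent_iff.1 hli _ h2 i)
    have hex : ∃ i, s i ≠ 0 := by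
      by_contra hcon
      push Not at hcon
      apply hy0
      rw [hs]; simp [hcon]
    obtain ⟨i, hi⟩ := hex
    refine ⟨i, (starRingEnd ℂ) ((t i : ℂ) / s i), ?_⟩
    refine eq_of_forms (K := K) hy (K.smul_mem _ (hmem i)) fun k hk => ?_
    have h3 : inner ℂ y k = ((t i : ℂ) / s i) * inner ℂ (w i) k := by
      rw [div_mul_eq_mul_div, ← hcoef k hk i]; field_simp
    rw [← inner_conj_symm, h3, map_mul, inner_conj_symm, inner_smul_right]
  · right
    have ha' : (a : ℂ) ≠ 0 := by exact_mod_cast ha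
    have h1 := hv x0 hxm
    simp only [hxp, mul_zero, zero_smul, Finset.sum_const_zero, add_zero] at h1
    have h2 : inner ℂ y x0 ≠ 0 := by
      intro h0
      rw [h0, zero_smul] at h1
      rcases smul_eq_zero.1 h1.symm with h | h
      · exact ha' h
      · exact hx0 h
    have h3 : y = ((a : ℂ) / inner ℂ y x0) • x0 := by
      rw [div_eq_inv_mul, mul_smul, ← h1, smul_smul, inv_mul_cancel₀ h2, one_smul]
    refine ⟨⟨_, h3⟩, fun i j hij => ?_⟩
    have hperp : ∀ j, inner ℂ y (w j) = 0 := by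
      intro j
      rw [h3, inner_smul_left, ← inner_conj_symm x0 (w j), hxp]; simp
    have hj : ∀ j i, (if i = j then (a : ℂ) else 0) + (t i : ℂ) * inner ℂ (w i) (w j) = 0 := by
      intro j
      have h4 := hv (w j) (hmem j)
      rw [hperp j, zero_smul] at h4
      refine Fintype.linearIndependent_iff.1 hli _ ?_
      rw [h4]
      simp only [add_smul, Finset.sum_add_distrib, ite_smul, zero_smul]
      simp
    have hti : (t i : ℂ) ≠ 0 := by
      intro h0
      have := hj i i
      rw [h0] at this
      simp [ha] at this
    have := hj j i
    simp only [hij, if_false, zero_add] at this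
    exact (mul_eq_zero.1 this).resolve_left hti

lemma frame_claim {T : Fin 3 → E →ₗ[ℂ] E} (hT : ∀ i, (T i).IsSymmetric) {K : Submodule ℂ E} {m : ℕ}
    {w : Fin m → E} {U : Fin m → Fin 3 → ℝ} {C : Fin m → ℝ} {x0 : E} (hF : Frame T K w U C x0)
    {y : E} (hy : y ∈ K) (hy0 : y ≠ 0) {u : Fin 3 → ℝ} {c : ℝ} (hR : Rk T K y u c) :
    (∃ (i : Fin m) (a : ℂ), y = a • w i) ∨
      ((∃ a : ℂ, y = a • x0) ∧ ∀ i j, i ≠ j → inner ℂ (w i) (w j) = 0) := by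
  obtain ⟨a, t, h⟩ := frame_expand hT hF u c
  exact claim_aux hF.li hF.mem hF.xmem hF.x0ne hF.xperp hy hy0 hR h

/-- orthogonal frames are completed by a rank-one element -/
lemma frame_orth {T : Fin 3 → E →ₗ[ℂ] E} {K : Submodule ℂ E} {m : ℕ}
    {w : Fin m → E} {U : Fin m → Fin 3 → ℝ} {C : Fin m → ℝ} {x0 : E} (hF : Frame T K w U C x0)
    (ho : ∀ i j, i ≠ j → inner ℂ (w i) (w j) = 0) :
    ∃ c, Rk T K x0 (∑ i, (-(‖w i‖ ^ 2)⁻¹) • U i) c := by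
  have hx0x0 : inner ℂ x0 x0 = 1 := by rw [inner_self_eq_norm_sq_to_K, hF.xone]; simp
  have hwx : ∀ i, inner ℂ x0 (w i) = 0 := fun i => by
    rw [← inner_conj_symm, hF.xperp, map_zero]
  have hww : ∀ i, inner ℂ (w i) (w i) = ((‖w i‖ ^ 2 : ℝ) : ℂ) := fun i => by
    rw [inner_self_eq_norm_sq_to_K]; simp
  have hwn : ∀ i, ((‖w i‖ ^ 2 : ℝ) : ℂ) ≠ 0 := fun i => by
    have := norm_pos_iff.2 (hF.wne i)
    exact_mod_cast (by positivity : (‖w i‖ ^ 2 : ℝ) ≠ 0)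
  have hdec : ∀ x ∈ K, x = inner ℂ x0 x • x0 +
      ∑ i, ((((‖w i‖ ^ 2)⁻¹ : ℝ) : ℂ) * inner ℂ (w i) x) • w i := by
    intro x hx
    set S := ∑ i, ((((‖w i‖ ^ 2)⁻¹ : ℝ) : ℂ) * inner ℂ (w i) x) • w i with hS
    have hSK : S ∈ K := K.sum_mem fun i _ => K.smul_mem _ (hF.mem i)
    have hSx : inner ℂ x0 S = 0 := by
      rw [hS, inner_sum]; simp [inner_smul_right, hwx]
    have hSw : ∀ j, inner ℂ (w j) S = inner ℂ (w j) x := by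
      intro j
      rw [hS, inner_sum, Finset.sum_eq_single j]
      · rw [inner_smul_right, hww, Complex.ofReal_inv]
        rw [mul_right_comm, inv_mul_cancel₀ (hwn j), one_mul]
      · intro i _ hij
        rw [inner_smul_right, ho j i hij.symm, mul_zero]
      · simp
    obtain ⟨a, ha⟩ := hF.xspan (x - S) (K.sub_mem hx hSK) (fun i => by
      rw [inner_sub_right, hSw, sub_self])
    have : a = inner ℂ x0 x := by
      have h1 := congrArg (inner ℂ x0) ha
      rw [inner_sub_right, hSx, inner_smul_right, hx0x0] at h1
      simpa using h1.symm
    rw [← this, ← ha]; abel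
  refine ⟨(∑ i, (-(‖w i‖ ^ 2)⁻¹) * C i) - 1, fun x hx y hy => ?_⟩
  rw [Hop_shift T _ _ (∑ i, (-(‖w i‖ ^ 2)⁻¹) * C i), inner_add_right, form_sum hF.rk _ hx hy,
    inner_smul_right]
  have h1 : inner ℂ y x = inner ℂ y x0 * inner ℂ x0 x +
      ∑ i, (((‖w i‖ ^ 2)⁻¹ : ℝ) : ℂ) * (inner ℂ y (w i) * inner ℂ (w i) x) := by
    conv_lhs => rw [hdec x hx]
    rw [inner_add_right, inner_smul_right, inner_sum, mul_comm]
    congr 1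
    refine Finset.sum_congr rfl fun i _ => ?_
    rw [inner_smul_right]; ring
  rw [h1]
  simp only [Complex.ofReal_neg, neg_mul, Finset.sum_neg_distrib]
  simp
end

section
set_option linter.unusedSectionVars false
set_option linter.unusedSimpArgs false

variable {E : Type*} [NormedAddCommGroup E] [InnerProductSpace ℂ E] [FiniteDimensional ℂ E]

/-- data of a nonelliptic face -/
structure FD (T : Fin 3 → E →ₗ[ℂ] E) (F : Set (Fin 3 → ℝ)) (v : E) (u : Fin 3 → ℝ) (c : ℝ) :
    Prop where
  one : ‖v‖ = 1
  rk : Rk T ⊤ v u c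
  eq : F = Wk T (pp v)
  dim : convDim F = 2
  nell : ¬ IsEllipticDisk F

/-- the one-dimensional faces -/
def ones (F : Set (Fin 3 → ℝ)) : Set (Set (Fin 3 → ℝ)) := {G | IsFaceOf F G ∧ convDim G = 1}

lemma exists_FD {T : Fin 3 → E →ₗ[ℂ] E} (hT : ∀ i, (T i).IsSymmetric)
    (hE : Module.finrank ℂ E = 4) (hdim : convDim (Wk T ⊤) = 3) {F : Set (Fin 3 → ℝ)}
    (hF : IsNonEllipticFace (Wk T ⊤) F) : ∃ v u c, FD T F v u c := by
  obtain ⟨v, u, c, hv, hR, h⟩ := face_rank_one hT hE hdim hF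
  obtain ⟨a, ha, -, h1⟩ := exists_unit (K := ⊤) trivial hv
  exact ⟨a • v, _, _, h1, Rk_smul hR a, by rw [pp_smul ha]; exact h, hF.2.1, hF.2.2⟩

namespace FD
variable {T : Fin 3 → E →ₗ[ℂ] E} {F F' : Set (Fin 3 → ℝ)} {v v' : E} {u u' : Fin 3 → ℝ} {c c' : ℝ}

lemma vne (h : FD T F v u c) : v ≠ 0 := by
  rintro rfl; simpa using h.one

lemma vv (h : FD T F v u c) : inner ℂ v v = 1 := by
  rw [inner_self_eq_norm_sq_to_K, h.one]; simp

lemma fr (h : FD T F v u c) (hE : Module.finrank ℂ E = 4) : Module.finrank ℂ (pp v) = 3 := by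
  have := finrank_pp_ge (K := (⊤ : Submodule ℂ E)) trivial h.vne
  rw [top_inf_eq, finrank_top] at this
  omega

lemma np (h : FD T F v u c) (h' : FD T F' v' u' c') (hne : F ≠ F') (a : ℂ) : v' ≠ a • v := by
  rintro rfl
  have ha : a ≠ 0 := by
    rintro rfl
    exact h'.vne (by simp)
  apply hne
  rw [h.eq, h'.eq, pp_smul ha]

lemma face (hT : ∀ i, (T i).IsSymmetric) (h : FD T F v u c) :
    (∀ w ∈ Wk T ⊤, c ≤ dotR u w) ∧ {w ∈ Wk T ⊤ | dotR u w = c} = F := by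
  have := Rk_face hT h.rk trivial
  rw [top_inf_eq, ← h.eq] at this
  exact this

lemma une (hT : ∀ i, (T i).IsSymmetric) (hE : Module.finrank ℂ E = 4) (h : FD T F v u c) :
    u ≠ 0 := by
  rintro rfl
  exact Rk_not_ann hT h.rk trivial h.vne (by rw [finrank_top]; omega) (Submodule.zero_mem _)

lemma annu (hT : ∀ i, (T i).IsSymmetric) (h : FD T F v u c) : u ∈ annC F := by
  rw [mem_annC, ← (h.face hT).2]
  intro x hx y hy
  rw [hx.2, hy.2]

end FD

lemma restr {T : Fin 3 → E →ₗ[ℂ] E} {v1 v2 : E} {u2 : Fin 3 → ℝ} {c2 : ℝ} (h1 : ‖v1‖ = 1)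
    (hR : Rk T ⊤ v2 u2 c2) (hnp : ∀ a : ℂ, v2 ≠ a • v1) :
    v2 - inner ℂ v1 v2 • v1 ∈ pp v1 ∧ v2 - inner ℂ v1 v2 • v1 ≠ 0 ∧
      Rk T (pp v1) (v2 - inner ℂ v1 v2 • v1) u2 c2 ∧
      pp v1 ⊓ pp (v2 - inner ℂ v1 v2 • v1) = pp v1 ⊓ pp v2 := by
  have hvv : inner ℂ v1 v1 = 1 := by
    rw [inner_self_eq_norm_sq_to_K, h1]; simp
  have key : ∀ x ∈ pp v1, inner ℂ (v2 - inner ℂ v1 v2 • v1) x = inner ℂ v2 x := by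
    intro x hx
    rw [inner_sub_left, inner_smul_left, mem_pp.1 hx]; simp
  refine ⟨?_, ?_, Rk_restrict hR le_top key, ?_⟩
  · rw [mem_pp, inner_sub_right, inner_smul_right, hvv]; simp
  · exact fun h => hnp _ (sub_eq_zero.1 h)
  · ext x
    simp only [Submodule.mem_inf, and_congr_right_iff]
    intro hx
    rw [mem_pp, mem_pp, key x hx]

lemma nondeg {T : Fin 3 → E →ₗ[ℂ] E} (hT : ∀ i, (T i).IsSymmetric) {K : Submodule ℂ E}
    (hK : Module.finrank ℂ K = 3) (hd : convDim (Wk T K) = 2) (hne : ¬ IsEllipticDisk (Wk T K))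
    {w : E} {u : Fin 3 → ℝ} {c : ℝ} (hw : w ∈ K) (hw0 : w ≠ 0) (hR : Rk T K w u c) :
    ¬ (Wk T (K ⊓ pp w)).Subsingleton := by
  intro hs
  have h5 := finrank_pp_ge hw hw0
  obtain ⟨x, hx, hxn⟩ := exists_ne_zero_of_finrank (K := K ⊓ pp w) (by omega)
  exact hne (elliptic_degenerate hT hw hw0 hR hd hs hx hxn)

lemma ones_iff {T : Fin 3 → E →ₗ[ℂ] E} (hT : ∀ i, (T i).IsSymmetric) {K : Submodule ℂ E}
    (hK : Module.finrank ℂ K = 3) (hd : convDim (Wk T K) = 2) (hne : ¬ IsEllipticDisk (Wk T K))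
    (G : Set (Fin 3 → ℝ)) : G ∈ ones (Wk T K) ↔
      ∃ w u c, w ∈ K ∧ w ≠ 0 ∧ Rk T K w u c ∧ G = Wk T (K ⊓ pp w) := by
  refine (onedim_iff hT hK hd G).trans ?_
  constructor
  · rintro ⟨w, u, c, h1, h2, h3, h4, -⟩
    exact ⟨w, u, c, h1, h2, h3, h4⟩
  · rintro ⟨w, u, c, h1, h2, h3, rfl⟩
    exact ⟨w, u, c, h1, h2, h3, rfl, nondeg hT hK hd hne h1 h2 h3⟩

lemma T1 {T : Fin 3 → E →ₗ[ℂ] E} (hT : ∀ i, (T i).IsSymmetric) (hE : Module.finrank ℂ E = 4)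
    {F1 F2 : Set (Fin 3 → ℝ)} {v1 v2 : E} {u1 u2 : Fin 3 → ℝ} {c1 c2 : ℝ}
    (h1 : FD T F1 v1 u1 c1) (h2 : FD T F2 v2 u2 c2) (hne : F1 ≠ F2) : (ones F1).Nonempty := by
  obtain ⟨a1, a2, a3, a4⟩ := restr h1.one h2.rk (h1.np h2 hne)
  have := h1.eq; subst this
  exact ⟨_, (ones_iff hT (h1.fr hE) h1.dim h1.nell _).2 ⟨_, _, _, a1, a2, a3, rfl⟩⟩

lemma ones_orth {T : Fin 3 → E →ₗ[ℂ] E} (hT : ∀ i, (T i).IsSymmetric) {K : Submodule ℂ E}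
    (hK : Module.finrank ℂ K = 3) (hd : convDim (Wk T K) = 2) (hne : ¬ IsEllipticDisk (Wk T K))
    {w z x0 : E} {U : Fin 2 → Fin 3 → ℝ} {C : Fin 2 → ℝ} (hF : Frame T K ![w, z] U C x0) :
    (ones (Wk T K)).Finite ∧
    (inner ℂ w z = 0 → (ones (Wk T K)).ncard = 3) ∧ (inner ℂ w z ≠ 0 → (ones (Wk T K)).ncard = 2) := by
  have hw : w ∈ K := hF.mem 0
  have hz : z ∈ K := hF.mem 1
  have hw0 : w ≠ 0 := hF.wne 0
  have hz0 : z ≠ 0 := hF.wne 1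
  have hRw : Rk T K w (U 0) (C 0) := hF.rk 0
  have hRz : Rk T K z (U 1) (C 1) := hF.rk 1
  have hli := LinearIndependent.pair_iff.1 hF.li
  have hwz : Wk T (K ⊓ pp w) ≠ Wk T (K ⊓ pp z) := by
    intro h
    obtain ⟨a, ha⟩ := G_eq_par hT hRw hw hz h.ge
    have := (hli 1 (-a) (by rw [ha]; simp)).1
    simp at this
  have hGw := (ones_iff hT hK hd hne _).2 ⟨w, _, _, hw, hw0, hRw, rfl⟩
  have hGz := (ones_iff hT hK hd hne _).2 ⟨z, _, _, hz, hz0, hRz, rfl⟩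
  have hcl : ∀ G ∈ ones (Wk T K), G = Wk T (K ⊓ pp w) ∨ G = Wk T (K ⊓ pp z) ∨
      (G = Wk T (K ⊓ pp x0) ∧ inner ℂ w z = 0) := by
    intro G hG
    obtain ⟨y, u, c, hy, hy0, hR, rfl⟩ := (ones_iff hT hK hd hne G).1 hG
    rcases frame_claim hT hF hy hy0 hR with ⟨i, a, ha⟩ | ⟨⟨a, ha⟩, ho⟩
    · have ha0 : a ≠ 0 := by rintro rfl; simp at ha; exact hy0 ha
      rw [ha, pp_smul ha0]
      fin_cases i
      · left; rfl
      · right; left; rfl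
    · have ha0 : a ≠ 0 := by rintro rfl; simp at ha; exact hy0 ha
      right; right
      rw [ha, pp_smul ha0]
      exact ⟨rfl, by simpa using ho 0 1 (by simp)⟩
  by_cases ho : inner ℂ w z = 0
  · have ho' : ∀ i j : Fin 2, i ≠ j → inner ℂ (![w, z] i) (![w, z] j) = 0 := by
      have ho2 : inner ℂ z w = 0 := by rw [← inner_conj_symm, ho, map_zero]
      intro i j hij
      fin_cases i <;> fin_cases j <;> simp_all
    obtain ⟨c, hc⟩ := frame_orth hF ho'
    have hGx := (ones_iff hT hK hd hne _).2 ⟨x0, _, _, hF.xmem, hF.x0ne, hc, rfl⟩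
    have hwx : Wk T (K ⊓ pp x0) ≠ Wk T (K ⊓ pp w) := by
      intro h
      obtain ⟨a, ha⟩ := G_eq_par hT hRw hw hF.xmem h.le
      have h1 := hF.xperp 0
      apply hw0
      rw [← inner_self_eq_zero (𝕜 := ℂ)]
      conv_lhs => rw [show inner ℂ w w = inner ℂ w (a • x0) by rw [← ha]]
      rw [inner_smul_right]
      simp at h1
      rw [h1, mul_zero]
    have hzx : Wk T (K ⊓ pp x0) ≠ Wk T (K ⊓ pp z) := by
      intro h
      obtain ⟨a, ha⟩ := G_eq_par hT hRz hz hF.xmem h.le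
      have h1 := hF.xperp 1
      apply hz0
      rw [← inner_self_eq_zero (𝕜 := ℂ)]
      conv_lhs => rw [show inner ℂ z z = inner ℂ z (a • x0) by rw [← ha]]
      rw [inner_smul_right]
      simp at h1
      rw [h1, mul_zero]
    have hset : ones (Wk T K) = {Wk T (K ⊓ pp x0), Wk T (K ⊓ pp w), Wk T (K ⊓ pp z)} := by
      ext G
      constructor
      · intro hG
        rcases hcl G hG with h | h | ⟨h, -⟩ <;> simp [h]
      · rintro (rfl | rfl | rfl)
        · exact hGx
        · exact hGw
        · exact hGz
    refine ⟨by rw [hset]; exact Set.toFinite _, fun _ => ?_, fun h => absurd ho h⟩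
    rw [hset, Set.ncard_eq_three]
    exact ⟨_, _, _, hwx, hzx, hwz, rfl⟩
  · have hset : ones (Wk T K) = {Wk T (K ⊓ pp w), Wk T (K ⊓ pp z)} := by
      ext G
      constructor
      · intro hG
        rcases hcl G hG with h | h | ⟨h, h'⟩
        · simp [h]
        · simp [h]
        · exact absurd h' ho
      · rintro (rfl | rfl)
        · exact hGw
        · exact hGz
    refine ⟨by rw [hset]; exact Set.toFinite _, fun h => absurd h ho, fun _ => ?_⟩
    rw [hset, Set.ncard_pair hwz]

lemma fin2_li {w z : E} (hw0 : w ≠ 0) (hnp : ∀ a : ℂ, z ≠ a • w) : LinearIndependent ℂ ![w, z] := by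
  rw [LinearIndependent.pair_iff]
  intro s t h
  have ht : t = 0 := by
    by_contra ht
    apply hnp (-(t⁻¹ * s))
    have : z = t⁻¹ • (t • z) := by rw [smul_smul, inv_mul_cancel₀ ht, one_smul]
    rw [this, eq_neg_of_add_eq_zero_right h, smul_neg, smul_smul, neg_smul]
  subst ht
  refine ⟨?_, rfl⟩
  simpa [hw0] using h

lemma frame_two {T : Fin 3 → E →ₗ[ℂ] E} {K : Submodule ℂ E}
    (hK : Module.finrank ℂ K = 3) (hd : convDim (Wk T K) = 2)
    {w z : E} {u u' : Fin 3 → ℝ} {c c' : ℝ} (hw : w ∈ K) (hw0 : w ≠ 0) (hR : Rk T K w u c)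
    (hz : z ∈ K) (hR' : Rk T K z u' c') (hnp : ∀ a : ℂ, z ≠ a • w) :
    ∃ x0, Frame T K ![w, z] ![u, u'] ![c, c'] x0 := by
  have hli := fin2_li hw0 hnp
  have hmem : ∀ i, ![w, z] i ∈ K := by
    intro i; fin_cases i
    · exact hw
    · exact hz
  obtain ⟨x0, h1, h2, h3, h4⟩ := exists_x0 hli hmem (by omega)
  refine ⟨x0, hli, hmem, ?_, h1, h2, h3, h4, ?_⟩
  · intro i; fin_cases i
    · exact hR
    · exact hR'
  · have := convDim_add_annC (Wk T K)
    omega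

/-- projections of three distinct faces are not parallel -/
lemma np3 {T : Fin 3 → E →ₗ[ℂ] E} (hT : ∀ i, (T i).IsSymmetric) (hE : Module.finrank ℂ E = 4)
    {F1 F2 F3 : Set (Fin 3 → ℝ)} {v1 v2 v3 : E} {u1 u2 u3 : Fin 3 → ℝ} {c1 c2 c3 : ℝ}
    (h1 : FD T F1 v1 u1 c1) (h2 : FD T F2 v2 u2 c2) (h3 : FD T F3 v3 u3 c3)
    (h12 : F1 ≠ F2) (h13 : F1 ≠ F3) (h23 : F2 ≠ F3) (a : ℂ) :
    v3 - inner ℂ v1 v3 • v1 ≠ a • (v2 - inner ℂ v1 v2 • v1) := by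
  intro hz
  obtain ⟨a1, a2, a3, a4⟩ := restr h1.one h2.rk (h1.np h2 h12)
  obtain ⟨b1, b2, b3, b4⟩ := restr h1.one h3.rk (h1.np h3 h13)
  have d3 := Rk_smul a3 a
  rw [← hz] at d3
  have hann : u3 + (-(‖a‖ ^ 2)) • u2 ∈ annC (Wk T (pp v1)) := by
    rw [annC_Wk hT a1 a2]
    refine ⟨c3 + (-(‖a‖ ^ 2)) * c2, fun x hx y hy => ?_⟩
    rw [Hop_add, Hop_smul, inner_add_right, inner_smul_right, b3 x hx y hy, ← d3 x hx y hy,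
      Hop_smul, inner_smul_right]
    push_cast
    ring
  rw [← h1.eq] at hann
  obtain ⟨t, ht⟩ := annC_one h1.dim (h1.annu hT) (h1.une hT hE) _ hann
  have hu3 : u3 = ∑ i, (![t, ‖a‖ ^ 2] : Fin 2 → ℝ) i • (![u1, u2] : Fin 2 → Fin 3 → ℝ) i := by
    rw [Fin.sum_univ_two]
    simp only [Matrix.cons_val_zero, Matrix.cons_val_one]
    rw [← ht]; module
  have hli := fin2_li h1.vne (h1.np h2 h12)
  have hrk : ∀ i, Rk T ⊤ (![v1, v2] i) (![u1, u2] i) (![c1, c2] i) := by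
    intro i; fin_cases i
    · exact h1.rk
    · exact h2.rk
  have hspan := finrank_span_eq_card hli
  have hor := Submodule.finrank_add_finrank_orthogonal (Submodule.span ℂ (Set.range ![v1, v2]))
  rw [hspan, hE, Fintype.card_fin] at hor
  obtain ⟨x0, hx0, hx0n⟩ := exists_ne_zero_of_finrank
    (K := (Submodule.span ℂ (Set.range ![v1, v2]))ᗮ) (by omega)
  have hp : ∀ i, inner ℂ (![v1, v2] i) x0 = 0 := fun i => hx0 _ (Submodule.subset_span ⟨i, rfl⟩)
  have e1 : inner ℂ v1 x0 = 0 := hp 0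
  have e2 : inner ℂ v2 x0 = 0 := hp 1
  have e3 : inner ℂ v3 x0 = 0 := by
    have : v3 = a • (v2 - inner ℂ v1 v2 • v1) + inner ℂ v1 v3 • v1 := by rw [← hz]; simp
    rw [this, inner_add_left, inner_smul_left, inner_smul_left, inner_sub_left, inner_smul_left,
      e1, e2]; simp
  have hexp : ∀ x ∈ (⊤ : Submodule ℂ E), ∀ y ∈ (⊤ : Submodule ℂ E),
      inner ℂ y (Hop T u3 c3 x) =
        ((∑ i, (![t, ‖a‖ ^ 2] : Fin 2 → ℝ) i * (![c1, c2] : Fin 2 → ℝ) i - c3 : ℝ) : ℂ) * inner ℂ y x +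
        ∑ i, ((![t, ‖a‖ ^ 2] : Fin 2 → ℝ) i : ℂ) *
          (inner ℂ y (![v1, v2] i) * inner ℂ (![v1, v2] i) x) := by
    intro x hx y hy
    rw [Hop_shift T _ _ (∑ i, (![t, ‖a‖ ^ 2] : Fin 2 → ℝ) i * (![c1, c2] : Fin 2 → ℝ) i),
      inner_add_right, inner_smul_right]
    conv_lhs => rw [hu3]
    rw [form_sum hrk _ hx hy, add_comm]
  rcases claim_aux (K := ⊤) hli (fun _ => trivial) trivial hx0n hp trivial h3.vne h3.rk hexp with
    ⟨i, b, hb⟩ | ⟨⟨b, hb⟩, -⟩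
  · fin_cases i
    · exact h1.np h3 h13 b hb
    · exact h2.np h3 h23 b hb
  · rw [hb, inner_smul_left] at e3
    rcases mul_eq_zero.1 e3 with h | h
    · have : b = 0 := by simpa using h
      subst this
      exact h3.vne (by simpa using hb)
    · exact hx0n (inner_self_eq_zero.1 h)

/-- frame on the first face -/
lemma frame_face {T : Fin 3 → E →ₗ[ℂ] E} (hT : ∀ i, (T i).IsSymmetric) (hE : Module.finrank ℂ E = 4)
    {F1 F2 F3 : Set (Fin 3 → ℝ)} {v1 v2 v3 : E} {u1 u2 u3 : Fin 3 → ℝ} {c1 c2 c3 : ℝ}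
    (h1 : FD T F1 v1 u1 c1) (h2 : FD T F2 v2 u2 c2) (h3 : FD T F3 v3 u3 c3)
    (h12 : F1 ≠ F2) (h13 : F1 ≠ F3) (h23 : F2 ≠ F3) :
    ∃ x0, Frame T (pp v1) ![v2 - inner ℂ v1 v2 • v1, v3 - inner ℂ v1 v3 • v1] ![u2, u3] ![c2, c3] x0 := by
  obtain ⟨a1, a2, a3, a4⟩ := restr h1.one h2.rk (h1.np h2 h12)
  obtain ⟨b1, b2, b3, b4⟩ := restr h1.one h3.rk (h1.np h3 h13)
  exact frame_two (h1.fr hE) (h1.eq ▸ h1.dim) a1 a2 a3 b1 b3 (np3 hT hE h1 h2 h3 h12 h13 h23)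

lemma inner_proj {v1 v2 v3 : E} (h1 : ‖v1‖ = 1) :
    inner ℂ (v2 - inner ℂ v1 v2 • v1) (v3 - inner ℂ v1 v3 • v1) =
      inner ℂ v2 v3 - inner ℂ v2 v1 * inner ℂ v1 v3 := by
  have hvv : inner ℂ v1 v1 = 1 := by
    rw [inner_self_eq_norm_sq_to_K, h1]; simp
  rw [inner_sub_left, inner_sub_right, inner_sub_right, inner_smul_left, inner_smul_left,
    inner_smul_right, inner_smul_right, hvv, inner_conj_symm]
  ring

/-- type of a face in the presence of two others -/
lemma type_three {T : Fin 3 → E →ₗ[ℂ] E} (hT : ∀ i, (T i).IsSymmetric) (hE : Module.finrank ℂ E = 4)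
    {F1 F2 F3 : Set (Fin 3 → ℝ)} {v1 v2 v3 : E} {u1 u2 u3 : Fin 3 → ℝ} {c1 c2 c3 : ℝ}
    (h1 : FD T F1 v1 u1 c1) (h2 : FD T F2 v2 u2 c2) (h3 : FD T F3 v3 u3 c3)
    (h12 : F1 ≠ F2) (h13 : F1 ≠ F3) (h23 : F2 ≠ F3) :
    (ones F1).Finite ∧
    (inner ℂ v2 v3 = inner ℂ v2 v1 * inner ℂ v1 v3 → (ones F1).ncard = 3) ∧
    (inner ℂ v2 v3 ≠ inner ℂ v2 v1 * inner ℂ v1 v3 → (ones F1).ncard = 2) := by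
  obtain ⟨x0, hx0⟩ := frame_face hT hE h1 h2 h3 h12 h13 h23
  have := ones_orth hT (h1.fr hE) (h1.eq ▸ h1.dim) (h1.eq ▸ h1.nell) hx0
  rw [inner_proj h1.one, ← h1.eq] at this
  exact ⟨this.1, fun h => this.2.1 (sub_eq_zero.2 h), fun h => this.2.2 (sub_ne_zero.2 h)⟩

/-- full frame -/
lemma frame_top {T : Fin 3 → E →ₗ[ℂ] E} (hT : ∀ i, (T i).IsSymmetric) (hE : Module.finrank ℂ E = 4)
    (hdim : convDim (Wk T ⊤) = 3)
    {F1 F2 F3 : Set (Fin 3 → ℝ)} {v1 v2 v3 : E} {u1 u2 u3 : Fin 3 → ℝ} {c1 c2 c3 : ℝ}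
    (h1 : FD T F1 v1 u1 c1) (h2 : FD T F2 v2 u2 c2) (h3 : FD T F3 v3 u3 c3)
    (h12 : F1 ≠ F2) (h13 : F1 ≠ F3) (h23 : F2 ≠ F3) :
    ∃ x0, Frame T ⊤ ![v1, v2, v3] ![u1, u2, u3] ![c1, c2, c3] x0 := by
  obtain ⟨y0, hy0⟩ := frame_face hT hE h1 h2 h3 h12 h13 h23
  have hli : LinearIndependent ℂ ![v1, v2, v3] := by
    have hp := LinearIndependent.pair_iff.1 hy0.li
    rw [Fintype.linearIndependent_iff]
    intro g hg
    rw [Fin.sum_univ_three] at hg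
    have hg' : g 0 • v1 + g 1 • v2 + g 2 • v3 = 0 := hg
    have h0 : g 1 • (v2 - inner ℂ v1 v2 • v1) + g 2 • (v3 - inner ℂ v1 v3 • v1) =
        (-(g 0 + g 1 * inner ℂ v1 v2 + g 2 * inner ℂ v1 v3)) • v1 := by
      have : g 1 • v2 + g 2 • v3 = - (g 0 • v1) := by
        rw [eq_neg_iff_add_eq_zero, ← hg']; abel
      calc _ = (g 1 • v2 + g 2 • v3) - (g 1 * inner ℂ v1 v2 + g 2 * inner ℂ v1 v3) • v1 := by module
        _ = _ := by rw [this]; module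
    have hm : g 1 • (v2 - inner ℂ v1 v2 • v1) + g 2 • (v3 - inner ℂ v1 v3 • v1) ∈ pp v1 :=
      Submodule.add_mem _ (Submodule.smul_mem _ _ (hy0.mem 0)) (Submodule.smul_mem _ _ (hy0.mem 1))
    have h4 : (-(g 0 + g 1 * inner ℂ v1 v2 + g 2 * inner ℂ v1 v3)) = 0 := by
      rw [h0, mem_pp, inner_smul_right, h1.vv, mul_one] at hm
      exact hm
    rw [h4, zero_smul] at h0
    obtain ⟨k1, k2⟩ := hp _ _ h0
    rw [k1, k2] at h4
    have k0 : g 0 = 0 := by simpa using h4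
    intro i
    fin_cases i
    · exact k0
    · exact k1
    · exact k2
  obtain ⟨x0, e1, e2, e3, e4⟩ := exists_x0 (K := ⊤) hli (fun _ => trivial) (by rw [finrank_top, hE])
  refine ⟨x0, hli, fun _ => trivial, ?_, e1, e2, e3, e4, ?_⟩
  · intro i; fin_cases i
    · exact h1.rk
    · exact h2.rk
    · exact h3.rk
  · have := convDim_add_annC (Wk T ⊤)
    omega

lemma corner_of {W : Set (Fin 3 → ℝ)} {p : Fin 3 → ℝ} (hp : p ∈ W) {U : Fin 3 → Fin 3 → ℝ}
    (hU : LinearIndependent ℝ U) (h : ∀ i, ∀ y ∈ W, dotR (U i) p ≤ dotR (U i) y) :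
    IsCornerPoint W p := by
  refine ⟨hp, ?_⟩
  have h1 : Submodule.span ℝ (Set.range U) = ⊤ := by
    apply Submodule.eq_top_of_finrank_eq
    rw [finrank_span_eq_card hU]; simp
  rw [eq_top_iff, ← h1]
  apply Submodule.span_mono
  rintro _ ⟨i, rfl⟩ y hy
  have := h i y hy
  rw [dotR_comm, dotR_sub_right]; linarith

lemma frame_LI {T : Fin 3 → E →ₗ[ℂ] E} (hT : ∀ i, (T i).IsSymmetric) {m : ℕ} {w : Fin m → E}
    {U : Fin m → Fin 3 → ℝ} {C : Fin m → ℝ} {x0 : E} (hli : LinearIndependent ℂ w)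
    (hR : ∀ i, Rk T ⊤ (w i) (U i) (C i)) (hx0 : x0 ≠ 0) (hp : ∀ i, inner ℂ (w i) x0 = 0) :
    LinearIndependent ℝ U := by
  rw [Fintype.linearIndependent_iff]
  intro t ht i
  have := indep_aux (K := ⊤) hT hli (fun _ => trivial) hR trivial hx0 hp t
    (by rw [ht]; exact Submodule.zero_mem _)
  rw [this]; rfl

lemma Rk_val {T : Fin 3 → E →ₗ[ℂ] E} {K : Submodule ℂ E} {v x : E} {u : Fin 3 → ℝ} {c : ℝ}
    (h : Rk T K v u c) (hx : x ∈ K) (h1 : ‖x‖ = 1) : dotR u (qv T x) = c + ‖inner ℂ v x‖ ^ 2 := by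
  have := re_Hop T u c x
  rw [Rk_nonneg h x hx, h1] at this
  linarith

lemma frame_corner {T : Fin 3 → E →ₗ[ℂ] E} (hT : ∀ i, (T i).IsSymmetric) {w : Fin 3 → E}
    {U : Fin 3 → Fin 3 → ℝ} {C : Fin 3 → ℝ} {x0 : E} (hF : Frame T ⊤ w U C x0) :
    IsCornerPoint (Wk T ⊤) (qv T x0) := by
  refine corner_of (qv_mem_Wk trivial hF.xone) (frame_LI hT hF.li hF.rk hF.x0ne hF.xperp) ?_
  intro i y hy
  rw [Rk_val (hF.rk i) trivial hF.xone, hF.xperp]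
  simpa using (Rk_face hT (hF.rk i) trivial).1 y hy
end

section
set_option linter.unusedSectionVars false
set_option linter.unusedSimpArgs false

variable {E : Type*} [NormedAddCommGroup E] [InnerProductSpace ℂ E] [FiniteDimensional ℂ E]

lemma strict_cs {v w : E} (hv : ‖v‖ = 1) (hw : ‖w‖ = 1) (hnp : ∀ a : ℂ, w ≠ a • v) :
    ‖inner ℂ v w‖ < 1 := by
  have h := norm_inner_le_norm (𝕜 := ℂ) v w
  rw [hv, hw, one_mul] at h
  refine lt_of_le_of_ne h fun he => ?_
  have h1 : ‖inner ℂ v w‖ = ‖v‖ * ‖w‖ := by rw [he, hv, hw, one_mul]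
  have hv0 : v ≠ 0 := by rintro rfl; simp at hv
  have hw0 : w ≠ 0 := by rintro rfl; simp at hw
  obtain ⟨r, hr, h2⟩ := (norm_inner_eq_norm_iff hv0 hw0).1 h1
  exact hnp r h2

lemma orth_arith {a b c : ℂ} (ha : ‖a‖ < 1) (h1 : ‖c‖ = ‖a‖ * ‖b‖) (h2 : ‖b‖ = ‖a‖ * ‖c‖) :
    b = 0 ∧ c = 0 := by
  have hb := norm_nonneg b
  have ha0 := norm_nonneg a
  have : ‖b‖ = 0 := by
    by_contra hne
    have hp : 0 < ‖b‖ := lt_of_le_of_ne hb (Ne.symm hne)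
    rw [h1] at h2
    nlinarith [mul_pos hp (sub_pos.2 ha), mul_nonneg (mul_nonneg ha0 hb) (sub_pos.2 ha).le]
  refine ⟨norm_eq_zero.1 this, norm_eq_zero.1 ?_⟩
  rw [h1, this, mul_zero]

/-- three faces of type three are orthogonal -/
lemma orth_three {T : Fin 3 → E →ₗ[ℂ] E} (hT : ∀ i, (T i).IsSymmetric) (hE : Module.finrank ℂ E = 4)
    {F1 F2 F3 : Set (Fin 3 → ℝ)} {v1 v2 v3 : E} {u1 u2 u3 : Fin 3 → ℝ} {c1 c2 c3 : ℝ}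
    (h1 : FD T F1 v1 u1 c1) (h2 : FD T F2 v2 u2 c2) (h3 : FD T F3 v3 u3 c3)
    (h12 : F1 ≠ F2) (h13 : F1 ≠ F3) (h23 : F2 ≠ F3)
    (t1 : (ones F1).ncard = 3) (t2 : (ones F2).ncard = 3) (t3 : (ones F3).ncard = 3) :
    ∀ i j : Fin 3, i ≠ j → inner ℂ (![v1, v2, v3] i) (![v1, v2, v3] j) = 0 := by
  have r1 : inner ℂ v2 v3 = inner ℂ v2 v1 * inner ℂ v1 v3 := by
    by_contra h
    have := (type_three hT hE h1 h2 h3 h12 h13 h23).2.2 h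
    omega
  have r2 : inner ℂ v1 v3 = inner ℂ v1 v2 * inner ℂ v2 v3 := by
    by_contra h
    have := (type_three hT hE h2 h1 h3 h12.symm h23 h13).2.2 h
    omega
  have r3 : inner ℂ v1 v2 = inner ℂ v1 v3 * inner ℂ v3 v2 := by
    by_contra h
    have := (type_three hT hE h3 h1 h2 h13.symm h23.symm h12).2.2 h
    omega
  have hs := strict_cs h1.one h2.one (h1.np h2 h12)
  have n1 := congrArg norm r1
  have n2 := congrArg norm r2
  rw [norm_mul] at n1 n2
  rw [norm_inner_symm v2 v1] at n1
  obtain ⟨k13, k23⟩ := orth_arith hs n1 n2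
  have k12 : inner ℂ v1 v2 = 0 := by rw [r3, k13, zero_mul]
  have k21 : inner ℂ v2 v1 = 0 := by rw [← inner_conj_symm, k12, map_zero]
  have k31 : inner ℂ v3 v1 = 0 := by rw [← inner_conj_symm, k13, map_zero]
  have k32 : inner ℂ v3 v2 = 0 := by rw [← inner_conj_symm, k23, map_zero]
  intro i j hij
  fin_cases i <;> fin_cases j <;> first | exact absurd rfl hij | assumption

/-- an orthogonal full frame yields a fourth face -/
lemma fourth_face {T : Fin 3 → E →ₗ[ℂ] E} (hT : ∀ i, (T i).IsSymmetric) (hE : Module.finrank ℂ E = 4)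
    {w : Fin 3 → E} {U : Fin 3 → Fin 3 → ℝ} {C : Fin 3 → ℝ} {x0 : E} (hF : Frame T ⊤ w U C x0)
    (hone : ∀ i, ‖w i‖ = 1)
    (ho : ∀ i j, i ≠ j → inner ℂ (w i) (w j) = 0) :
    IsNonEllipticFace (Wk T ⊤) (Wk T (pp x0)) ∧ ∀ i, Wk T (pp x0) ≠ Wk T (pp (w i)) := by
  obtain ⟨c, hR⟩ := frame_orth hF ho
  generalize (∑ i, (-(‖w i‖ ^ 2)⁻¹) • U i) = u at hR
  have hwx : ∀ i, w i ∈ pp x0 := fun i => by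
    rw [mem_pp, ← inner_conj_symm, hF.xperp, map_zero]
  have hval : ∀ i j, dotR (U i) (qv T (w j)) = C i + if i = j then 1 else 0 := by
    intro i j
    rw [Rk_val (hF.rk i) trivial (hone j)]
    split_ifs with h
    · subst h
      rw [inner_self_eq_norm_sq_to_K, hone]; simp
    · rw [ho i j h]; simp
  have hq : ∀ j, qv T (w j) ∈ Wk T (pp x0) := fun j => qv_mem_Wk (hwx j) (hone j)
  have hfr : Module.finrank ℂ (pp x0) = 3 := by
    have := finrank_pp_ge (K := (⊤ : Submodule ℂ E)) trivial hF.x0ne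
    rw [top_inf_eq, finrank_top] at this
    omega
  have hface := Rk_face hT hR trivial
  rw [top_inf_eq] at hface
  have hLI := frame_LI hT hF.li hF.rk hF.x0ne hF.xperp
  have hU : Submodule.span ℝ (Set.range U) = ⊤ := by
    apply Submodule.eq_top_of_finrank_eq
    rw [finrank_span_eq_card hLI]; simp
  have hdim : convDim (Wk T (pp x0)) = 2 := by
    have h1 := convDim_add_annC (Wk T (pp x0))
    have h2 : annC (Wk T (pp x0)) ≤ Submodule.span ℝ {∑ i, U i} := by
      intro y hy
      have hyU : y ∈ Submodule.span ℝ (Set.range U) := by rw [hU]; trivial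
      obtain ⟨t, rfl⟩ := (Submodule.mem_span_range_iff_exists_fun ℝ).1 hyU
      rw [Submodule.mem_span_singleton]
      have e : ∀ j, dotR (∑ i, t i • U i) (qv T (w j)) = ∑ i, t i * C i + t j := by
        intro j
        rw [Fin.sum_univ_three, Fin.sum_univ_three, dotR_add_left, dotR_add_left, dotR_smul_left,
          dotR_smul_left, dotR_smul_left, hval, hval, hval]
        fin_cases j <;> simp <;> ring
      have e1 : ∀ j, t j = t 0 := by
        intro j
        have := hy _ (hq j) _ (hq 0)
        rw [e, e] at this
        linarith
      refine ⟨t 0, ?_⟩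
      rw [Finset.smul_sum]
      refine Finset.sum_congr rfl fun i _ => ?_
      rw [e1 i]
    have h3 := Submodule.finrank_mono h2
    have h4 : Module.finrank ℝ (Submodule.span ℝ {∑ i, U i}) ≤ 1 :=
      (finrank_span_le_card ({∑ i, U i} : Set (Fin 3 → ℝ))).trans (by simp)
    have hu : u ∈ annC (Wk T (pp x0)) := by
      rw [mem_annC, ← hface.2]
      intro x hx y hy
      rw [hx.2, hy.2]
    have hu0 : u ≠ 0 := by
      rintro rfl
      exact Rk_not_ann hT hR trivial hF.x0ne (by rw [finrank_top]; omega) (Submodule.zero_mem _)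
    have h5 : 1 ≤ Module.finrank ℝ (annC (Wk T (pp x0))) := by
      rw [Submodule.one_le_finrank_iff]
      intro h
      rw [h] at hu
      exact hu0 (by simpa using hu)
    omega
  refine ⟨⟨?_, hdim, ?_⟩, ?_⟩
  · have := face_of_exposed (Wk_convex T ⊤) hface.1
    rwa [hface.2] at this
  · intro hell
    have hG : (IsFaceOf (Wk T (pp x0)) (Wk T (pp x0 ⊓ pp (w 0))) ∧
        convDim (Wk T (pp x0 ⊓ pp (w 0))) = 1) := by
      rw [onedim_iff hT hfr hdim]
      refine ⟨w 0, U 0, C 0, hwx 0, hF.wne 0, Rk_restrict (hF.rk 0) le_top (fun _ _ => rfl), rfl, ?_⟩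
      intro hs
      have h1 : qv T (w 1) ∈ Wk T (pp x0 ⊓ pp (w 0)) :=
        qv_mem_Wk ⟨hwx 1, mem_pp.2 (ho 0 1 (by simp))⟩ (hone 1)
      have h2 : qv T (w 2) ∈ Wk T (pp x0 ⊓ pp (w 0)) :=
        qv_mem_Wk ⟨hwx 2, mem_pp.2 (ho 0 2 (by simp))⟩ (hone 2)
      have h3 := congrArg (dotR (U 1)) (hs h1 h2)
      rw [hval, hval] at h3
      simp at h3
    exact convDim_elliptic_le hell hdim hG.1 hG.2
  · intro i h
    have h1 := hq i
    rw [h] at h1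
    have h2 := (Rk_face hT (hF.rk i) trivial).2
    rw [top_inf_eq] at h2
    rw [← h2] at h1
    have h3 := h1.2
    rw [hval] at h3
    simp at h3

/-- the fourth face -/
lemma fourth_par {T : Fin 3 → E →ₗ[ℂ] E} (hT : ∀ i, (T i).IsSymmetric)
    {F1 F2 F3 F4 : Set (Fin 3 → ℝ)} {v1 v2 v3 v4 : E} {u1 u2 u3 u4 : Fin 3 → ℝ} {c1 c2 c3 c4 : ℝ}
    (h1 : FD T F1 v1 u1 c1) (h2 : FD T F2 v2 u2 c2) (h3 : FD T F3 v3 u3 c3) (h4 : FD T F4 v4 u4 c4)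
    (h14 : F1 ≠ F4) (h24 : F2 ≠ F4) (h34 : F3 ≠ F4) {x0 : E}
    (hF : Frame T ⊤ ![v1, v2, v3] ![u1, u2, u3] ![c1, c2, c3] x0) :
    F4 = Wk T (pp x0) ∧ ∀ i j : Fin 3, i ≠ j → inner ℂ (![v1, v2, v3] i) (![v1, v2, v3] j) = 0 := by
  rcases frame_claim hT hF trivial h4.vne h4.rk with ⟨i, b, hb⟩ | ⟨⟨b, hb⟩, ho⟩
  · exfalso
    fin_cases i
    · exact h1.np h4 h14 b hb
    · exact h2.np h4 h24 b hb
    · exact h3.np h4 h34 b hb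
  · refine ⟨?_, ho⟩
    have hb0 : b ≠ 0 := by
      rintro rfl
      exact h4.vne (by simpa using hb)
    rw [h4.eq, hb, pp_smul hb0]

lemma compact_N {S : Set E} (hS : IsCompact S) {f g : E → ℝ} (hf : Continuous f) (hg : Continuous g)
    (hg0 : ∀ x ∈ S, 0 ≤ g x) (h : ∀ x ∈ S, g x = 0 → 0 < f x) :
    ∃ N : ℝ, ∀ x ∈ S, 0 ≤ N * g x + f x := by
  have hS' : IsCompact (S ∩ {x | f x ≤ 0}) := hS.inter_right (isClosed_le hf continuous_const)
  rcases (S ∩ {x | f x ≤ 0}).eq_empty_or_nonempty with he | hne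
  · refine ⟨0, fun x hx => ?_⟩
    by_contra hc
    have : x ∈ S ∩ {x | f x ≤ 0} := ⟨hx, by simp at hc; exact hc.le⟩
    rw [he] at this
    exact this
  · obtain ⟨x1, hx1, hm1⟩ := hS'.exists_isMinOn hne hg.continuousOn
    obtain ⟨x2, hx2, hm2⟩ := hS'.exists_isMinOn hne hf.continuousOn
    have hx1f : f x1 ≤ 0 := hx1.2
    have hx2f : f x2 ≤ 0 := hx2.2
    have hpos : 0 < g x1 := by
      refine lt_of_le_of_ne (hg0 _ hx1.1) fun h0 => ?_
      have := h x1 hx1.1 h0.symm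
      linarith
    have hN : 0 ≤ (-f x2) / g x1 := div_nonneg (by linarith) hpos.le
    refine ⟨(-f x2) / g x1, fun x hx => ?_⟩
    by_cases hfx : f x ≤ 0
    · have m1 : g x1 ≤ g x := hm1 ⟨hx, hfx⟩
      have m2 : f x2 ≤ f x := hm2 ⟨hx, hfx⟩
      have : (-f x2) / g x1 * g x1 ≤ (-f x2) / g x1 * g x := mul_le_mul_of_nonneg_left m1 hN
      rw [div_mul_cancel₀ _ hpos.ne'] at this
      linarith
    · have := mul_nonneg hN (hg0 x hx)
      push Not at hfx
      linarith

lemma Hop_single (T : Fin 3 → E →ₗ[ℂ] E) (j : Fin 3) (x : E) :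
    Hop T (Pi.single j 1) 0 x = T j x := by
  rw [Hop_apply, Finset.sum_eq_single j]
  · simp
  · intro i _ hij; simp [hij]
  · simp

lemma eig_frame {T : Fin 3 → E →ₗ[ℂ] E} (hT : ∀ i, (T i).IsSymmetric) {K : Submodule ℂ E} {m : ℕ}
    {w : Fin m → E} {U : Fin m → Fin 3 → ℝ} {C : Fin m → ℝ} {x0 : E} (hF : Frame T K w U C x0)
    {e : E} (he : e ∈ K) (hw : ∀ i, inner ℂ (w i) e = 0 ∨ ∃ b : ℂ, w i = b • e) (j : Fin 3)
    {k : E} (hk : k ∈ K) (hke : inner ℂ k e = 0) : inner ℂ k (T j e) = 0 := by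
  obtain ⟨a, t, h⟩ := frame_expand hT hF (Pi.single j 1) 0
  have := h e he k hk
  rw [Hop_single] at this
  rw [this, hke, mul_zero, zero_add]
  refine Finset.sum_eq_zero fun i _ => ?_
  rcases hw i with h | ⟨b, h⟩
  · rw [h]; simp
  · rw [h, inner_smul_right, hke]; simp

lemma par_symm {x y : E} {a : ℂ} (h : x = a • y) (hx : x ≠ 0) : ∃ b : ℂ, y = b • x := by
  have ha : a ≠ 0 := by rintro rfl; exact hx (by simpa using h)
  exact ⟨a⁻¹, by rw [h, smul_smul, inv_mul_cancel₀ ha, one_smul]⟩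

/-- extract a frame from a second one-dimensional face -/
lemma frame_of_two {T : Fin 3 → E →ₗ[ℂ] E} (hT : ∀ i, (T i).IsSymmetric) {K : Submodule ℂ E}
    (hK : Module.finrank ℂ K = 3) (hd : convDim (Wk T K) = 2) (hne : ¬ IsEllipticDisk (Wk T K))
    {w : E} {u : Fin 3 → ℝ} {c : ℝ} (hw : w ∈ K) (hw0 : w ≠ 0) (hR : Rk T K w u c)
    (h2 : 2 ≤ (ones (Wk T K)).ncard) :
    ∃ z u' c' x0, Frame T K ![w, z] ![u, u'] ![c, c'] x0 := by
  obtain ⟨G, hG, hGne⟩ := Set.exists_ne_of_one_lt_ncard (show 1 < (ones (Wk T K)).ncard by omega) (Wk T (K ⊓ pp w))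
  obtain ⟨z, u', c', hz, hz0, hR', rfl⟩ := (ones_iff hT hK hd hne G).1 hG
  obtain ⟨x0, hx0⟩ := frame_two hK hd hw hw0 hR hz hR' (fun a ha => by
    apply hGne
    have ha0 : a ≠ 0 := by rintro rfl; exact hz0 (by simpa using ha)
    rw [ha, pp_smul ha0])
  exact ⟨z, u', c', x0, hx0⟩
end

section
set_option linter.unusedSectionVars false
set_option linter.unusedSimpArgs false

variable {E : Type*} [NormedAddCommGroup E] [InnerProductSpace ℂ E] [FiniteDimensional ℂ E]

/-- corner from a common eigenvector -/
lemma corner_eig {T : Fin 3 → E →ₗ[ℂ] E} (hT : ∀ i, (T i).IsSymmetric) (hE : Module.finrank ℂ E = 4)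
    {F1 F2 : Set (Fin 3 → ℝ)} {v1 v2 : E} {u1 u2 : Fin 3 → ℝ} {c1 c2 : ℝ}
    (h1 : FD T F1 v1 u1 c1) (h2 : FD T F2 v2 u2 c2) (hne : F1 ≠ F2) {e : E} (he : ‖e‖ = 1)
    (e1 : inner ℂ v1 e = 0) (e2 : inner ℂ v2 e = 0)
    (heig : ∀ k, inner ℂ k e = 0 → ∀ j, inner ℂ k (T j e) = 0)
    (hns : ¬ (Wk T (pp v1 ⊓ pp v2)).Subsingleton) : IsCornerPoint (Wk T ⊤) (qv T e) := by
  have he0 : e ≠ 0 := by rintro rfl; simp at he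
  have hee : inner ℂ e e = 1 := by rw [inner_self_eq_norm_sq_to_K, he]; simp
  obtain ⟨a1, a2, a3, a4⟩ := restr h1.one h2.rk (h1.np h2 hne)
  have heL : e ∈ pp v1 ⊓ pp v2 := ⟨mem_pp.2 e1, mem_pp.2 e2⟩
  have hfL : Module.finrank ℂ (pp v1 ⊓ pp v2 : Submodule ℂ E) = 2 := by
    have := finrank_pp_ge a1 a2
    rw [a4, h1.fr hE] at this
    omega
  have hfL1 := finrank_pp_ge heL he0
  have hfL2 : Module.finrank ℂ ((pp v1 ⊓ pp v2) ⊓ pp e : Submodule ℂ E) = 1 := by omega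
  obtain ⟨z1, hz1, hz1n⟩ := exists_ne_zero_of_finrank hfL2.ge
  obtain ⟨b, hb, hz0, hz01⟩ := exists_unit hz1 hz1n
  set z0 := b • z1 with hz0d
  clear_value z0
  have hsing := Wk_subsingleton (T := T) hfL2.le
  -- decomposition
  have hdec : ∀ (α : ℂ) (k : E), inner ℂ e k = 0 → qv T (α • e + k) = ‖α‖ ^ 2 • qv T e + qv T k ∧
      ‖α • e + k‖ ^ 2 = ‖α‖ ^ 2 + ‖k‖ ^ 2 := by
    intro α k hk
    have hk' : inner ℂ k e = 0 := by rw [← inner_conj_symm, hk, map_zero]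
    constructor
    · rw [qv_add hT, qv_smul]
      have : (fun i => (inner ℂ k (T i (α • e))).re) = 0 := by
        funext i
        rw [map_smul, inner_smul_right, heig k hk']; simp
      rw [this]; simp
    · rw [@norm_add_sq ℂ, inner_smul_left, hk, norm_smul, he]; simp
  have hsplit : ∀ x : E, ∃ (α : ℂ) (k : E), inner ℂ e k = 0 ∧ x = α • e + k := by
    intro x
    refine ⟨inner ℂ e x, x - inner ℂ e x • e, ?_, by simp⟩
    rw [inner_sub_right, inner_smul_right, hee]; simp
  have hhom : ∀ k ∈ (pp v1 ⊓ pp v2) ⊓ pp e, qv T k = ‖k‖ ^ 2 • qv T z0 := by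
    intro y hy
    by_cases h0 : y = 0
    · subst h0; funext i; simp [qv]
    obtain ⟨b, hb, hbK, hb1⟩ := exists_unit hy h0
    have h := hsing (qv_mem_Wk hbK hb1) (qv_mem_Wk hz0 hz01)
    rw [qv_smul] at h
    rw [← h, smul_smul, ← mul_pow, mul_comm, ← norm_smul, hb1]; simp
  set d := qv T z0 - qv T e with hd
  have hd0 : d ≠ 0 := by
    intro hd0
    apply hns
    have hz : qv T z0 = qv T e := sub_eq_zero.1 hd0
    have : Wk T (pp v1 ⊓ pp v2) ⊆ {qv T e} := by
      apply convexHull_min _ (convex_singleton _)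
      rintro _ ⟨x, ⟨hx, hx1⟩, rfl⟩
      obtain ⟨α, k, hk, rfl⟩ := hsplit x
      obtain ⟨q1, q2⟩ := hdec α k hk
      have hkL : k ∈ (pp v1 ⊓ pp v2) ⊓ pp e := by
        refine ⟨?_, mem_pp.2 hk⟩
        have := Submodule.sub_mem _ hx (Submodule.smul_mem _ α heL)
        simpa using this
      rw [hx1] at q2
      rw [q1, hhom k hkL, hz, ← add_smul, ← q2]; simp
    exact Set.subsingleton_of_subset_singleton this
  have hdd : 0 < dotR d d := by
    obtain ⟨i, hi⟩ := Function.ne_iff.1 hd0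
    unfold dotR
    apply Finset.sum_pos' (fun i _ => mul_self_nonneg _)
    exact ⟨i, Finset.mem_univ _, mul_self_pos.2 hi⟩
  have p1 : dotR u1 (qv T e) = c1 := by
    rw [Rk_val h1.rk trivial he, e1]; simp
  have p2 : dotR u2 (qv T e) = c2 := by
    rw [Rk_val h2.rk trivial he, e2]; simp
  have z1' : dotR u1 (qv T z0) = c1 := by
    rw [Rk_val h1.rk trivial hz01, mem_pp.1 hz0.1.1]; simp
  have z2' : dotR u2 (qv T z0) = c2 := by
    rw [Rk_val h2.rk trivial hz01, mem_pp.1 hz0.1.2]; simp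
  have hdz : dotR d (qv T z0) - dotR d (qv T e) = dotR d d := by
    conv_rhs => rw [hd, dotR_sub_right, ← hd]
  obtain ⟨N, hN⟩ := compact_N (sphere_compact (pp e))
    (f := fun x => dotR d (qv T x) - dotR d (qv T e))
    (g := fun x => ‖inner ℂ v1 x‖ ^ 2 + ‖inner ℂ v2 x‖ ^ 2)
    ((qv_cont T d).sub continuous_const) (by fun_prop) (fun x _ => by positivity) (by
      rintro x ⟨hx, hx1⟩ hg
      have g1 : ‖inner ℂ v1 x‖ ^ 2 = 0 := by nlinarith [sq_nonneg ‖inner ℂ v1 x‖, sq_nonneg ‖inner ℂ v2 x‖]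
      have g2 : ‖inner ℂ v2 x‖ ^ 2 = 0 := by nlinarith [sq_nonneg ‖inner ℂ v1 x‖, sq_nonneg ‖inner ℂ v2 x‖]
      have hxL : x ∈ (pp v1 ⊓ pp v2) ⊓ pp e :=
        ⟨⟨mem_pp.2 (by simpa using g1), mem_pp.2 (by simpa using g2)⟩, hx⟩
      rw [hhom x hxL, hx1]
      simp only [one_pow, one_smul]
      rw [hdz]; exact hdd)
  set u := N • (u1 + u2) + d with hu
  have hun : ∀ k, inner ℂ e k = 0 → ‖k‖ ^ 2 * dotR u (qv T e) ≤ dotR u (qv T k) := by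
    intro k hk
    by_cases h0 : k = 0
    · subst h0
      have : qv T (0 : E) = 0 := by funext i; simp [qv]
      rw [this, dotR_zero_right]; simp
    obtain ⟨b, hb, hbK, hb1⟩ := exists_unit (mem_pp.2 hk) h0
    have h3 := hN _ ⟨hbK, hb1⟩
    have r1 := Rk_val h1.rk (x := b • k) trivial hb1
    have r2 := Rk_val h2.rk (x := b • k) trivial hb1
    have h4 : dotR u (qv T e) ≤ dotR u (qv T (b • k)) := by
      rw [hu, dotR_add_left, dotR_add_left, dotR_smul_left, dotR_smul_left, dotR_add_left,
        dotR_add_left, p1, p2, r1, r2]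
      nlinarith
    rw [qv_smul, dotR_smul_right] at h4
    have h5 : ‖k‖ ^ 2 * ‖b‖ ^ 2 = 1 := by
      rw [← mul_pow, mul_comm, ← norm_smul, hb1, one_pow]
    calc ‖k‖ ^ 2 * dotR u (qv T e) ≤ ‖k‖ ^ 2 * (‖b‖ ^ 2 * dotR u (qv T k)) :=
          mul_le_mul_of_nonneg_left h4 (by positivity)
      _ = dotR u (qv T k) := by rw [← mul_assoc, h5, one_mul]
  have huW : ∀ y ∈ Wk T ⊤, dotR u (qv T e) ≤ dotR u y := by
    intro y hy
    have : Wk T ⊤ ⊆ {w | dotR u (qv T e) ≤ dotR u w} := by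
      apply convexHull_min
      · rintro _ ⟨x, ⟨-, hx1⟩, rfl⟩
        obtain ⟨α, k, hk, rfl⟩ := hsplit x
        obtain ⟨q1, q2⟩ := hdec α k hk
        rw [hx1] at q2
        have := hun k hk
        show dotR u (qv T e) ≤ dotR u (qv T (α • e + k))
        rw [q1, dotR_add_right, dotR_smul_right]
        have e3 : ‖k‖ ^ 2 = 1 - ‖α‖ ^ 2 := by linarith
        rw [e3] at this
        linarith
      · have := convex_halfSpace_ge (𝕜 := ℝ) (dotL u).isLinear (dotR u (qv T e))
        simpa [dotL_apply] using this
    exact this hy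
  have hLI : LinearIndependent ℝ ![u1, u2, u] := by
    have hli2 : LinearIndependent ℝ ![u1, u2] := by
      refine frame_LI hT (w := ![v1, v2]) (C := ![c1, c2]) (x0 := e)
        (fin2_li h1.vne (h1.np h2 hne)) ?_ he0 ?_
      · intro i; fin_cases i
        · exact h1.rk
        · exact h2.rk
      · intro i; fin_cases i
        · exact e1
        · exact e2
    rw [Fintype.linearIndependent_iff]
    intro g hg
    rw [Fin.sum_univ_three] at hg
    have hg' : g 0 • u1 + g 1 • u2 + g 2 • u = 0 := hg
    have du1 : dotR u1 d = 0 := by rw [hd, dotR_sub_right, z1', p1, sub_self]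
    have du2 : dotR u2 d = 0 := by rw [hd, dotR_sub_right, z2', p2, sub_self]
    have du : dotR u d = dotR d d := by
      rw [hu, dotR_add_left, dotR_smul_left, dotR_add_left, du1, du2]; ring
    have k2 : g 2 = 0 := by
      have := congrArg (fun y => dotR y d) hg'
      simp only [dotR_add_left, dotR_smul_left, du1, du2, du, dotR_zero_left] at this
      have h6 : g 2 * dotR d d = 0 := by linarith
      exact (mul_eq_zero.1 h6).resolve_right hdd.ne'
    rw [k2, zero_smul, add_zero] at hg'
    obtain ⟨k0, k1⟩ := LinearIndependent.pair_iff.1 hli2 _ _ hg'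
    intro i; fin_cases i
    · exact k0
    · exact k1
    · exact k2
  refine corner_of (qv_mem_Wk trivial he) hLI ?_
  intro i; fin_cases i
  · intro y hy
    show dotR u1 _ ≤ dotR u1 _
    rw [p1]; exact (h1.face hT).1 y hy
  · intro y hy
    show dotR u2 _ ≤ dotR u2 _
    rw [p2]; exact (h2.face hT).1 y hy
  · exact huW

lemma T6 {T : Fin 3 → E →ₗ[ℂ] E} (hT : ∀ i, (T i).IsSymmetric) (hE : Module.finrank ℂ E = 4)
    {F1 F2 : Set (Fin 3 → ℝ)} {v1 v2 : E} {u1 u2 : Fin 3 → ℝ} {c1 c2 : ℝ}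
    (h1 : FD T F1 v1 u1 c1) (h2 : FD T F2 v2 u2 c2) (hne : F1 ≠ F2)
    (t1 : (ones F1).ncard = 3) (t2 : 2 ≤ (ones F2).ncard) : ∃ p, IsCornerPoint (Wk T ⊤) p := by
  obtain ⟨a1, a2, a3, a4⟩ := restr h1.one h2.rk (h1.np h2 hne)
  obtain ⟨b1, b2, b3, b4⟩ := restr h2.one h1.rk (h2.np h1 hne.symm)
  have d1 : convDim (Wk T (pp v1)) = 2 := h1.eq ▸ h1.dim
  have d2 : convDim (Wk T (pp v2)) = 2 := h2.eq ▸ h2.dim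
  have n1 : ¬ IsEllipticDisk (Wk T (pp v1)) := h1.eq ▸ h1.nell
  have n2 : ¬ IsEllipticDisk (Wk T (pp v2)) := h2.eq ▸ h2.nell
  rw [h1.eq] at t1
  rw [h2.eq] at t2
  set w := v2 - inner ℂ v1 v2 • v1 with hw
  set w' := v1 - inner ℂ v2 v1 • v2 with hw'
  have hww' : inner ℂ v1 w' ≠ 0 := by
    intro h
    have h3 : inner ℂ w' w' = 0 := by
      have : inner ℂ w' w' = inner ℂ v1 w' - (starRingEnd ℂ) (inner ℂ v2 v1) * inner ℂ v2 w' := by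
        conv_lhs => rw [hw', inner_sub_left, ← hw', inner_smul_left]
      rw [this, h, mem_pp.1 b1]; simp
    exact b2 (inner_self_eq_zero.1 h3)
  clear_value w w'
  obtain ⟨z, uz, cz, x0, hf1⟩ := frame_of_two hT (h1.fr hE) d1 n1 a1 a2 a3 (by omega)
  obtain ⟨z', uz', cz', e, hf2⟩ := frame_of_two hT (h2.fr hE) d2 n2 b1 b2 b3 t2
  have howz : inner ℂ w z = 0 := by
    by_contra h
    have := (ones_orth hT (h1.fr hE) d1 n1 hf1).2.2 h
    omega
  have hz0 : z ≠ 0 := hf1.wne 1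
  have hzK : z ∈ pp v1 := hf1.mem 1
  have hwx : inner ℂ w x0 = 0 := hf1.xperp 0
  have hzx : inner ℂ z x0 = 0 := hf1.xperp 1
  have he1 : inner ℂ w' e = 0 := hf2.xperp 0
  have he2 : inner ℂ z' e = 0 := hf2.xperp 1
  have hz'K : z' ∈ pp v2 := hf2.mem 1
  have hrz : Rk T (pp v1) z uz cz := hf1.rk 1
  have hrz' : Rk T (pp v2) z' uz' cz' := hf2.rk 1
  set L : Submodule ℂ E := pp v1 ⊓ pp v2 with hL
  have hL' : L = pp v2 ⊓ pp v1 := inf_comm _ _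
  have heL : e ∈ L := by rw [hL', ← b4]; exact ⟨hf2.xmem, mem_pp.2 he1⟩
  have hzL : z ∈ L := by rw [← a4]; exact ⟨hzK, mem_pp.2 howz⟩
  have hxL : x0 ∈ L := by rw [← a4]; exact ⟨hf1.xmem, mem_pp.2 hwx⟩
  have hns : ¬ (Wk T L).Subsingleton := by
    rw [← a4]
    exact nondeg hT (h1.fr hE) d1 n1 a1 a2 a3
  have hdL : convDim (Wk T L) = 1 := by
    have := (onedim_iff hT (h1.fr hE) d1 (Wk T L)).2 ⟨w, u2, c2, a1, a2, a3, by rw [a4], hns⟩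
    exact this.2
  -- frame on L
  have hfL : Frame T L ![z] ![uz] ![cz] x0 := by
    refine ⟨?_, ?_, ?_, hxL, hf1.xone, ?_, ?_, ?_⟩
    · exact linearIndependent_unique_iff.2 (by simpa using hz0)
    · intro i; fin_cases i; exact hzL
    · intro i; fin_cases i; exact Rk_restrict hrz inf_le_left (fun _ _ => rfl)
    · intro i; fin_cases i; exact hzx
    · intro x hx hp
      refine hf1.xspan x hx.1 ?_
      have hx' := hx
      rw [← a4] at hx'
      intro i; fin_cases i
      · exact mem_pp.1 hx'.2
      · exact hp 0
    · have := convDim_add_annC (Wk T L)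
      omega
  -- projection of z' to L
  obtain ⟨s, ζ, hζ, hzζ⟩ := proj_ex w' z'
  have hζK : ζ ∈ L := by
    rw [hL', ← b4]
    refine ⟨?_, hζ⟩
    have : ζ = z' - s • w' := by rw [hzζ]; simp
    rw [this]
    exact Submodule.sub_mem _ hz'K (Submodule.smul_mem _ _ b1)
  have hζ0 : ζ ≠ 0 := by
    rintro rfl
    have := (LinearIndependent.pair_iff.1 hf2.li (-s) 1 (by rw [hzζ]; simp)).2
    simp at this
  have hLw' : ∀ x ∈ L, inner ℂ w' x = 0 := by
    intro x hx
    rw [hL', ← b4] at hx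
    exact mem_pp.1 hx.2
  have hζR : Rk T L ζ uz' cz' := by
    refine Rk_restrict hrz' inf_le_right fun x hx => ?_
    rw [hzζ, inner_add_left, inner_smul_left, hLw' x hx]; simp
  have hζe : inner ℂ ζ e = 0 := by
    rw [hzζ, inner_add_left, inner_smul_left, he1] at he2
    simpa using he2
  have hee : ‖e‖ = 1 := hf2.xone
  have he0 : e ≠ 0 := hf2.x0ne
  have hcond : ∀ i, inner ℂ (![w, z] i) e = 0 ∨ ∃ b : ℂ, ![w, z] i = b • e := by
    have hwe : inner ℂ w e = 0 := by
      have := heL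
      rw [← a4] at this
      exact mem_pp.1 this.2
    intro i; fin_cases i
    · left; exact hwe
    · show inner ℂ z e = 0 ∨ ∃ b : ℂ, z = b • e
      rcases frame_claim hT hfL hζK hζ0 hζR with ⟨i, b, hb⟩ | ⟨⟨b, hb⟩, -⟩
      · left
        have hb' : ζ = b • z := by
          rw [hb]; fin_cases i; rfl
        obtain ⟨b', hb''⟩ := par_symm hb' hζ0
        rw [hb'', inner_smul_left, hζe, mul_zero]
      · right
        -- z and e are both orthogonal to x0 in L
        obtain ⟨b', hb'⟩ := par_symm hb hζ0
        have hxe : inner ℂ x0 e = 0 := by rw [hb', inner_smul_left, hζe, mul_zero]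
        have hzz : inner ℂ z z ≠ 0 := fun h => hz0 (inner_self_eq_zero.1 h)
        set r := inner ℂ z e / inner ℂ z z with hr
        obtain ⟨a, ha⟩ := hf1.xspan (e - r • z) (Submodule.sub_mem _ heL.1 (Submodule.smul_mem _ _ hzK))
          (by
            intro i; fin_cases i
            · show inner ℂ w (e - r • z) = 0
              rw [inner_sub_right, inner_smul_right, hwe, howz]; simp
            · show inner ℂ z (e - r • z) = 0
              rw [inner_sub_right, inner_smul_right, hr, div_mul_cancel₀ _ hzz, sub_self])
        have hxz : inner ℂ x0 z = 0 := by rw [← inner_conj_symm, hzx, map_zero]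
        have ha0 : a = 0 := by
          have h5 := congrArg (inner ℂ x0) ha
          rw [inner_sub_right, inner_smul_right, inner_smul_right, hxe, hxz,
            inner_self_eq_norm_sq_to_K, hf1.xone] at h5
          simpa using h5.symm
        rw [ha0, zero_smul, sub_eq_zero] at ha
        exact par_symm ha he0
  refine ⟨qv T e, corner_eig hT hE h1 h2 hne hee (mem_pp.1 heL.1) (mem_pp.1 heL.2) ?_ hns⟩
  intro k hk j
  have hew' : inner ℂ w' e = 0 := he1
  set s := inner ℂ v1 k / inner ℂ v1 w' with hs
  have k1 : inner ℂ (k - s • w') (T j e) = 0 := by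
    refine eig_frame hT hf1 heL.1 hcond j ?_ ?_
    · rw [mem_pp, inner_sub_right, inner_smul_right, hs, div_mul_cancel₀ _ hww', sub_self]
    · rw [inner_sub_left, inner_smul_left, hk, hew']; simp
  have k2 : inner ℂ w' (T j e) = 0 :=
    eig_frame hT hf2 heL.2 (fun i => Or.inl (hf2.xperp i)) j b1 hew'
  rw [inner_sub_left, inner_smul_left, k2] at k1
  simpa using k1
end

section
set_option linter.unusedSectionVars false
set_option linter.unusedSimpArgs false

/-- the operators of the matrices -/
def opT (A : Fin 3 → Matrix (Fin 4) (Fin 4) ℂ) :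
    Fin 3 → EuclideanSpace ℂ (Fin 4) →ₗ[ℂ] EuclideanSpace ℂ (Fin 4) :=
  fun i => Matrix.toEuclideanLin (A i)

lemma wpt_pure (A : Fin 3 → Matrix (Fin 4) (Fin 4) ℂ) (x : EuclideanSpace ℂ (Fin 4)) :
    wpt A (vecMulVec (WithLp.ofLp x) (star (WithLp.ofLp x))) = qv (opT A) x := by
  funext i
  simp only [wpt, qv, opT]
  rw [vecMulVec_mul, trace_vecMulVec, EuclideanSpace.inner_eq_star_dotProduct,
    Matrix.ofLp_toEuclideanLin_apply, dotProduct_comm, ← dotProduct_mulVec, dotProduct_comm]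

lemma trace_pure (x : EuclideanSpace ℂ (Fin 4)) :
    (vecMulVec (WithLp.ofLp x) (star (WithLp.ofLp x))).trace = ((‖x‖ ^ 2 : ℝ) : ℂ) := by
  rw [trace_vecMulVec, ← EuclideanSpace.inner_eq_star_dotProduct, inner_self_eq_norm_sq_to_K]
  push_cast; rfl

lemma JNR_eq (A : Fin 3 → Matrix (Fin 4) (Fin 4) ℂ) : JNR A = Wk (opT A) ⊤ := by
  apply Set.Subset.antisymm
  · rintro _ ⟨ρ, ⟨hp, ht⟩, rfl⟩
    obtain ⟨m, a, rfl⟩ := Matrix.posSemidef_iff_eq_sum_vecMulVec.1 hp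
    set b : Fin m → EuclideanSpace ℂ (Fin 4) := fun k => WithLp.toLp 2 (a k) with hb
    have hs : ∑ k, ‖b k‖ ^ 2 = 1 := by
      rw [Matrix.trace_sum] at ht
      have h2 : ∑ k, ((‖b k‖ ^ 2 : ℝ) : ℂ) = 1 := by
        rw [← ht]
        exact Finset.sum_congr rfl fun k _ => (trace_pure (b k)).symm
      exact_mod_cast h2
    have hw : wpt A (∑ k, vecMulVec (a k) (star (a k))) = ∑ k, qv (opT A) (b k) := by
      have : ∀ k, qv (opT A) (b k) = wpt A (vecMulVec (a k) (star (a k))) :=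
        fun k => (wpt_pure A (b k)).symm
      simp only [this]
      funext i
      simp [wpt, Finset.sum_mul, Matrix.trace_sum, Finset.sum_apply]
    have he : ∀ k, ∃ z ∈ Wk (opT A) ⊤, qv (opT A) (b k) = ‖b k‖ ^ 2 • z := by
      intro k
      by_cases h0 : b k = 0
      · refine ⟨qv (opT A) (EuclideanSpace.single 0 1), qv_mem_Wk trivial (by simp), ?_⟩
        rw [h0]; funext i; simp [qv]
      · have hn : ‖b k‖ ≠ 0 := norm_ne_zero_iff.2 h0
        refine ⟨qv (opT A) (((‖b k‖⁻¹ : ℝ) : ℂ) • b k), qv_mem_Wk trivial ?_, ?_⟩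
        · rw [norm_smul]; simp [hn]
        · rw [qv_smul, smul_smul]
          simp [hn]
    choose z hz hz' using he
    rw [hw]
    simp only [hz']
    exact (Wk_convex _ _).sum_mem (fun k _ => by positivity) hs (fun k _ => hz k)
  · apply convexHull_min
    · rintro _ ⟨x, ⟨-, h1⟩, rfl⟩
      refine ⟨_, ⟨Matrix.posSemidef_vecMulVec_self_star (WithLp.ofLp x), ?_⟩, wpt_pure A x⟩
      rw [trace_pure, h1]; norm_num
    · rintro _ ⟨ρ, ⟨hp, ht⟩, rfl⟩ _ ⟨σ, ⟨hp', ht'⟩, rfl⟩ s t hs ht0 hst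
      refine ⟨(s : ℂ) • ρ + (t : ℂ) • σ, ⟨(hp.smul (by exact_mod_cast hs)).add
        (hp'.smul (by exact_mod_cast ht0)), ?_⟩, ?_⟩
      · rw [trace_add, trace_smul, trace_smul, ht, ht']
        simp only [smul_eq_mul, mul_one]; exact_mod_cast hst
      · funext i
        simp [wpt, add_mul, trace_add]

section
variable {E : Type*} [NormedAddCommGroup E] [InnerProductSpace ℂ E] [FiniteDimensional ℂ E]

lemma type23 {T : Fin 3 → E →ₗ[ℂ] E} (hT : ∀ i, (T i).IsSymmetric) (hE : Module.finrank ℂ E = 4)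
    (hdim : convDim (Wk T ⊤) = 3) {F1 F2 F3 : Set (Fin 3 → ℝ)}
    (h1 : IsNonEllipticFace (Wk T ⊤) F1) (h2 : IsNonEllipticFace (Wk T ⊤) F2)
    (h3 : IsNonEllipticFace (Wk T ⊤) F3)
    (h12 : F1 ≠ F2) (h13 : F1 ≠ F3) (h23 : F2 ≠ F3) :
    (ones F1).Finite ∧ ((ones F1).ncard = 2 ∨ (ones F1).ncard = 3) := by
  obtain ⟨v1, u1, c1, h1⟩ := exists_FD hT hE hdim h1
  obtain ⟨v2, u2, c2, h2⟩ := exists_FD hT hE hdim h2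
  obtain ⟨v3, u3, c3, h3⟩ := exists_FD hT hE hdim h3
  obtain ⟨a, b, c⟩ := type_three hT hE h1 h2 h3 h12 h13 h23
  refine ⟨a, ?_⟩
  by_cases h : inner ℂ v2 v3 = inner ℂ v2 v1 * inner ℂ v1 v3
  · exact Or.inr (b h)
  · exact Or.inl (c h)

lemma all3 {T : Fin 3 → E →ₗ[ℂ] E} (hT : ∀ i, (T i).IsSymmetric) (hE : Module.finrank ℂ E = 4)
    (hdim : convDim (Wk T ⊤) = 3) {F1 F2 F3 : Set (Fin 3 → ℝ)}
    (h1 : IsNonEllipticFace (Wk T ⊤) F1) (h2 : IsNonEllipticFace (Wk T ⊤) F2)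
    (h3 : IsNonEllipticFace (Wk T ⊤) F3)
    (h12 : F1 ≠ F2) (h13 : F1 ≠ F3) (h23 : F2 ≠ F3)
    (t1 : (ones F1).ncard = 3) (t2 : (ones F2).ncard = 3) (t3 : (ones F3).ncard = 3) :
    ∃ F4, IsNonEllipticFace (Wk T ⊤) F4 ∧ F4 ≠ F1 ∧ F4 ≠ F2 ∧ F4 ≠ F3 := by
  obtain ⟨v1, u1, c1, h1⟩ := exists_FD hT hE hdim h1
  obtain ⟨v2, u2, c2, h2⟩ := exists_FD hT hE hdim h2
  obtain ⟨v3, u3, c3, h3⟩ := exists_FD hT hE hdim h3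
  have ho := orth_three hT hE h1 h2 h3 h12 h13 h23 t1 t2 t3
  obtain ⟨x0, hF⟩ := frame_top hT hE hdim h1 h2 h3 h12 h13 h23
  obtain ⟨a, b⟩ := fourth_face hT hE hF
    (by intro i; fin_cases i <;> simp [h1.one, h2.one, h3.one]) ho
  refine ⟨_, a, ?_, ?_, ?_⟩
  · rw [h1.eq]; exact b 0
  · rw [h2.eq]; exact b 1
  · rw [h3.eq]; exact b 2

lemma four3 {T : Fin 3 → E →ₗ[ℂ] E} (hT : ∀ i, (T i).IsSymmetric) (hE : Module.finrank ℂ E = 4)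
    (hdim : convDim (Wk T ⊤) = 3) {F1 F2 F3 F4 : Set (Fin 3 → ℝ)}
    (h1 : IsNonEllipticFace (Wk T ⊤) F1) (h2 : IsNonEllipticFace (Wk T ⊤) F2)
    (h3 : IsNonEllipticFace (Wk T ⊤) F3) (h4 : IsNonEllipticFace (Wk T ⊤) F4)
    (h12 : F1 ≠ F2) (h13 : F1 ≠ F3) (h23 : F2 ≠ F3) (h14 : F1 ≠ F4) (h24 : F2 ≠ F4)
    (h34 : F3 ≠ F4) : (ones F1).Finite ∧ (ones F1).ncard = 3 := by
  obtain ⟨v1, u1, c1, h1⟩ := exists_FD hT hE hdim h1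
  obtain ⟨v2, u2, c2, h2⟩ := exists_FD hT hE hdim h2
  obtain ⟨v3, u3, c3, h3⟩ := exists_FD hT hE hdim h3
  obtain ⟨v4, u4, c4, h4⟩ := exists_FD hT hE hdim h4
  obtain ⟨x0, hF⟩ := frame_top hT hE hdim h1 h2 h3 h12 h13 h23
  obtain ⟨-, ho⟩ := fourth_par hT h1 h2 h3 h4 h14 h24 h34 hF
  obtain ⟨a, b, c⟩ := type_three hT hE h1 h2 h3 h12 h13 h23
  refine ⟨a, b ?_⟩
  have e1 := ho 1 2 (by decide)
  have e2 := ho 1 0 (by decide)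
  simp at e1 e2
  rw [e1, e2, zero_mul]

lemma no_five {T : Fin 3 → E →ₗ[ℂ] E} (hT : ∀ i, (T i).IsSymmetric) (hE : Module.finrank ℂ E = 4)
    (hdim : convDim (Wk T ⊤) = 3) {F1 F2 F3 F4 F5 : Set (Fin 3 → ℝ)}
    (h1 : IsNonEllipticFace (Wk T ⊤) F1) (h2 : IsNonEllipticFace (Wk T ⊤) F2)
    (h3 : IsNonEllipticFace (Wk T ⊤) F3) (h4 : IsNonEllipticFace (Wk T ⊤) F4)
    (h5 : IsNonEllipticFace (Wk T ⊤) F5)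
    (h12 : F1 ≠ F2) (h13 : F1 ≠ F3) (h23 : F2 ≠ F3) (h14 : F1 ≠ F4) (h24 : F2 ≠ F4)
    (h34 : F3 ≠ F4) (h15 : F1 ≠ F5) (h25 : F2 ≠ F5) (h35 : F3 ≠ F5) : F4 = F5 := by
  obtain ⟨v1, u1, c1, h1⟩ := exists_FD hT hE hdim h1
  obtain ⟨v2, u2, c2, h2⟩ := exists_FD hT hE hdim h2
  obtain ⟨v3, u3, c3, h3⟩ := exists_FD hT hE hdim h3
  obtain ⟨v4, u4, c4, h4⟩ := exists_FD hT hE hdim h4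
  obtain ⟨v5, u5, c5, h5⟩ := exists_FD hT hE hdim h5
  obtain ⟨x0, hF⟩ := frame_top hT hE hdim h1 h2 h3 h12 h13 h23
  rw [(fourth_par hT h1 h2 h3 h4 h14 h24 h34 hF).1, (fourth_par hT h1 h2 h3 h5 h15 h25 h35 hF).1]

lemma corner3 {T : Fin 3 → E →ₗ[ℂ] E} (hT : ∀ i, (T i).IsSymmetric) (hE : Module.finrank ℂ E = 4)
    (hdim : convDim (Wk T ⊤) = 3) {F1 F2 F3 : Set (Fin 3 → ℝ)}
    (h1 : IsNonEllipticFace (Wk T ⊤) F1) (h2 : IsNonEllipticFace (Wk T ⊤) F2)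
    (h3 : IsNonEllipticFace (Wk T ⊤) F3)
    (h12 : F1 ≠ F2) (h13 : F1 ≠ F3) (h23 : F2 ≠ F3) : ∃ p, IsCornerPoint (Wk T ⊤) p := by
  obtain ⟨v1, u1, c1, h1⟩ := exists_FD hT hE hdim h1
  obtain ⟨v2, u2, c2, h2⟩ := exists_FD hT hE hdim h2
  obtain ⟨v3, u3, c3, h3⟩ := exists_FD hT hE hdim h3
  obtain ⟨x0, hF⟩ := frame_top hT hE hdim h1 h2 h3 h12 h13 h23
  exact ⟨_, frame_corner hT hF⟩

lemma arith {a0 a1 a2 a3 n : ℕ} (hsum : a0 + a1 + a2 + a3 ≤ n) (h4 : n ≤ 4)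
    (hz : 2 ≤ n → a0 = 0) (h3 : n = 3 → a2 + a3 = 3 ∧ a3 ≠ 3) (h44 : n = 4 → a3 = 4) :
    (a0, a1, a2, a3) ∈
      ({(0,0,0,0),(1,0,0,0),(0,1,0,0),(0,2,0,0),(0,1,1,0),(0,1,0,1),(0,0,1,0),
        (0,0,2,0),(0,0,3,0),(0,0,1,1),(0,0,1,2),(0,0,2,1),(0,0,0,1),(0,0,0,2),
        (0,0,0,4)} : Set (ℕ × ℕ × ℕ × ℕ)) := by
  by_cases k4 : n = 4
  · obtain rfl : a3 = 4 := h44 k4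
    obtain ⟨rfl, rfl, rfl⟩ : a0 = 0 ∧ a1 = 0 ∧ a2 = 0 := by omega
    simp
  by_cases k3 : n = 3
  · obtain ⟨rfl, rfl⟩ : a0 = 0 ∧ a1 = 0 := by omega
    obtain ⟨rfl, rfl⟩ | ⟨rfl, rfl⟩ | ⟨rfl, rfl⟩ :
      (a2 = 3 ∧ a3 = 0) ∨ (a2 = 2 ∧ a3 = 1) ∨ (a2 = 1 ∧ a3 = 2) := by omega
    all_goals simp
  by_cases k2 : n = 2
  · obtain rfl : a0 = 0 := by omega
    obtain b1 : a1 ≤ 2 := by omega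
    obtain b2 : a2 ≤ 2 := by omega
    obtain b3 : a3 ≤ 2 := by omega
    clear hz h3 h44 h4 k4 k3
    interval_cases a1 <;> interval_cases a2 <;> interval_cases a3 <;> first | omega | simp
  · obtain b0 : a0 ≤ 1 := by omega
    obtain b1 : a1 ≤ 1 := by omega
    obtain b2 : a2 ≤ 1 := by omega
    obtain b3 : a3 ≤ 1 := by omega
    have : a0 + a1 + a2 + a3 ≤ 1 := by omega
    clear hz h3 h44 h4 k4 k3 hsum k2
    interval_cases a0 <;> interval_cases a1 <;> interval_cases a2 <;> interval_cases a3 <;>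
      first | omega | simp

lemma final {T : Fin 3 → E →ₗ[ℂ] E} (hT : ∀ i, (T i).IsSymmetric) (hE : Module.finrank ℂ E = 4)
    (hdim : convDim (Wk T ⊤) = 3) (s : ℕ → Set (Set (Fin 3 → ℝ)))
    (hs : s = fun m => {F | IsNonEllFaceOfType (Wk T ⊤) m F}) :
    (∀ m, (s m).Finite) ∧
    (((s 0).ncard, (s 1).ncard, (s 2).ncard, (s 3).ncard) ∈
      ({(0,0,0,0),(1,0,0,0),(0,1,0,0),(0,2,0,0),(0,1,1,0),(0,1,0,1),(0,0,1,0),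
        (0,0,2,0),(0,0,3,0),(0,0,1,1),(0,0,1,2),(0,0,2,1),(0,0,0,1),(0,0,0,2),
        (0,0,0,4)} : Set (ℕ × ℕ × ℕ × ℕ))) ∧
    (((s 0).ncard, (s 1).ncard, (s 2).ncard, (s 3).ncard) ∈
      ({(0,0,3,0),(0,0,1,1),(0,0,1,2),(0,0,2,1),(0,0,0,2),(0,0,0,4)} :
        Set (ℕ × ℕ × ℕ × ℕ)) → ∃ p, IsCornerPoint (Wk T ⊤) p) := by
  classical
  set N : Set (Set (Fin 3 → ℝ)) := {F | IsNonEllipticFace (Wk T ⊤) F} with hN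
  have hsub : ∀ m, s m ⊆ N := by
    intro m F hF; rw [hs] at hF; exact hF.1
  have hmem : ∀ m F, F ∈ s m → (ones F).Finite ∧ (ones F).ncard = m := by
    intro m F hF; rw [hs] at hF; exact hF.2
  have hmem' : ∀ m F, F ∈ N → (ones F).Finite → (ones F).ncard = m → F ∈ s m := by
    intro m F hF h1 h2; rw [hs]; exact ⟨hF, h1, h2⟩
  clear_value N
  clear hs
  have hNm : ∀ F, F ∈ N ↔ IsNonEllipticFace (Wk T ⊤) F := by intro F; rw [hN]; rfl
  -- cardinality at most four
  have hfin : N.Finite ∧ N.ncard ≤ 4 := by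
    have key : ∀ t : Finset (Set (Fin 3 → ℝ)), ↑t ⊆ N → t.card ≤ 4 := by
      intro t ht
      by_contra hc
      obtain ⟨t', h1, h2⟩ := Finset.exists_subset_card_eq (show 5 ≤ t.card by omega)
      have e := t'.equivFinOfCardEq h2
      have hm : ∀ i, IsNonEllipticFace (Wk T ⊤) (e.symm i : Set (Fin 3 → ℝ)) :=
        fun i => (hNm _).1 (ht (h1 (e.symm i).2))
      have hd : ∀ i j, i ≠ j → (e.symm i : Set (Fin 3 → ℝ)) ≠ e.symm j :=
        fun i j hij h => hij (e.symm.injective (Subtype.ext h))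
      exact hd 3 4 (by decide) (no_five hT hE hdim (hm 0) (hm 1) (hm 2) (hm 3) (hm 4)
        (hd _ _ (by decide)) (hd _ _ (by decide)) (hd _ _ (by decide)) (hd _ _ (by decide))
        (hd _ _ (by decide)) (hd _ _ (by decide)) (hd _ _ (by decide)) (hd _ _ (by decide))
        (hd _ _ (by decide)))
    have hf : N.Finite := by
      by_contra hinf
      obtain ⟨t, h1, h2⟩ := Set.Infinite.exists_subset_card_eq hinf 5
      have := key t h1
      omega
    refine ⟨hf, ?_⟩
    rw [Set.ncard_eq_toFinset_card N hf]
    exact key _ (by simp)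
  obtain ⟨hf, h4⟩ := hfin
  have hsf : ∀ m, (s m).Finite := fun m => hf.subset (hsub m)
  have hdisj : ∀ m n, m ≠ n → Disjoint (s m) (s n) := by
    intro m n hmn
    rw [Set.disjoint_left]
    intro F h1 h2
    exact hmn ((hmem _ _ h1).2.symm.trans (hmem _ _ h2).2)
  have hU : (s 0 ∪ s 1 ∪ s 2 ∪ s 3).ncard
      = (s 0).ncard + (s 1).ncard + (s 2).ncard + (s 3).ncard := by
    rw [Set.ncard_union_eq _ (((hsf 0).union (hsf 1)).union (hsf 2)) (hsf 3),
      Set.ncard_union_eq _ ((hsf 0).union (hsf 1)) (hsf 2),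
      Set.ncard_union_eq (hdisj 0 1 (by decide)) (hsf 0) (hsf 1)]
    · simp [hdisj]
    · simp [hdisj]
  have hsum : (s 0).ncard + (s 1).ncard + (s 2).ncard + (s 3).ncard ≤ N.ncard := by
    rw [← hU]
    refine Set.ncard_le_ncard ?_ hf
    simp [hsub]
  -- no type zero
  have hz : 2 ≤ N.ncard → (s 0).ncard = 0 := by
    intro h2
    rw [Set.ncard_eq_zero (hsf 0), Set.eq_empty_iff_forall_notMem]
    intro F hF
    obtain ⟨G, hG, hne⟩ := Set.exists_ne_of_one_lt_ncard (s := N) (by omega) F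
    obtain ⟨v1, u1, c1, k1⟩ := exists_FD hT hE hdim ((hNm _).1 (hsub _ hF))
    obtain ⟨v2, u2, c2, k2⟩ := exists_FD hT hE hdim ((hNm _).1 hG)
    have := T1 hT hE k1 k2 hne.symm
    obtain ⟨r1, r2⟩ := hmem _ _ hF
    rw [Set.ncard_eq_zero r1] at r2
    exact this.ne_empty r2
  have h3 : N.ncard = 3 → (s 2).ncard + (s 3).ncard = 3 ∧ (s 3).ncard ≠ 3 := by
    intro hc
    obtain ⟨F1, F2, F3, h12, h13, h23, hN3⟩ := Set.ncard_eq_three.1 hc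
    have m1 := (hNm F1).1 (by rw [hN3]; simp)
    have m2 := (hNm F2).1 (by rw [hN3]; simp)
    have m3 := (hNm F3).1 (by rw [hN3]; simp)
    have t1 := type23 hT hE hdim m1 m2 m3 h12 h13 h23
    have t2 := type23 hT hE hdim m2 m1 m3 h12.symm h23 h13
    have t3 := type23 hT hE hdim m3 m1 m2 h13.symm h23.symm h12
    constructor
    · rw [← Set.ncard_union_eq (hdisj 2 3 (by decide)) (hsf 2) (hsf 3)]
      refine Eq.trans (congrArg Set.ncard ?_) hc
      apply Set.Subset.antisymm
      · exact Set.union_subset (hsub 2) (hsub 3)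
      · have hh : ∀ F ∈ N, ((ones F).Finite ∧ ((ones F).ncard = 2 ∨ (ones F).ncard = 3)) →
            F ∈ s 2 ∪ s 3 := by
          rintro F hF ⟨h1, h2 | h2⟩
          · exact Or.inl (hmem' _ _ hF h1 h2)
          · exact Or.inr (hmem' _ _ hF h1 h2)
        intro F hF
        have hF' := hF
        rw [hN3] at hF'
        rcases hF' with rfl | rfl | rfl
        · exact hh _ hF t1
        · exact hh _ hF t2
        · exact hh _ hF t3
    · intro hc3
      have he : s 3 = N := Set.eq_of_subset_of_ncard_le (hsub 3) (by omega) hf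
      have g : ∀ F ∈ N, (ones F).ncard = 3 := fun F hF => (hmem 3 F (he ▸ hF)).2
      obtain ⟨F4, k, k1, k2, k3⟩ := all3 hT hE hdim m1 m2 m3 h12 h13 h23
        (g _ ((hNm _).2 m1)) (g _ ((hNm _).2 m2)) (g _ ((hNm _).2 m3))
      have := (hNm _).2 k
      rw [hN3] at this
      simp [k1, k2, k3] at this
  have h44 : N.ncard = 4 → (s 3).ncard = 4 := by
    intro hc
    have he : s 3 = N := by
      apply Set.Subset.antisymm (hsub 3)
      intro F1 hF1
      have : (N \ {F1}).ncard = 3 := by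
        rw [Set.ncard_sdiff_singleton_of_mem hF1]; omega
      obtain ⟨F2, F3, F4, h23, h24, h34, hN3⟩ := Set.ncard_eq_three.1 this
      have m2 : F2 ∈ N \ {F1} := by rw [hN3]; simp
      have m3 : F3 ∈ N \ {F1} := by rw [hN3]; simp
      have m4 : F4 ∈ N \ {F1} := by rw [hN3]; simp
      obtain ⟨r1, r2⟩ := four3 hT hE hdim ((hNm _).1 hF1) ((hNm _).1 m2.1) ((hNm _).1 m3.1)
        ((hNm _).1 m4.1) (Ne.symm m2.2) (Ne.symm m3.2) h23 (Ne.symm m4.2) h24 h34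
      exact hmem' _ _ hF1 r1 r2
    rw [he, hc]
  have hT6 : ∀ F1 ∈ s 3, ∀ F2 ∈ N, F1 ≠ F2 → 2 ≤ (ones F2).ncard →
      ∃ p, IsCornerPoint (Wk T ⊤) p := by
    intro F1 hF1 F2 hF2 hne h2
    obtain ⟨v1, u1, c1, k1⟩ := exists_FD hT hE hdim ((hNm _).1 (hsub _ hF1))
    obtain ⟨v2, u2, c2, k2⟩ := exists_FD hT hE hdim ((hNm _).1 hF2)
    exact T6 hT hE k1 k2 hne (hmem _ _ hF1).2 h2
  have c33 : 2 ≤ (s 3).ncard → ∃ p, IsCornerPoint (Wk T ⊤) p := by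
    intro h
    obtain ⟨F1, hF1, F2, hF2, hne⟩ := (Set.one_lt_ncard_iff (hsf 3)).1 (show 1 < _ by omega) |>.elim
      fun a ⟨b, ha, hb, hab⟩ => (⟨a, ha, b, hb, hab⟩ : ∃ a ∈ s 3, ∃ b ∈ s 3, a ≠ b)
    exact hT6 F1 hF1 F2 (hsub _ hF2) hne (by rw [(hmem _ _ hF2).2]; omega)
  have c23 : 1 ≤ (s 2).ncard → 1 ≤ (s 3).ncard → ∃ p, IsCornerPoint (Wk T ⊤) p := by
    intro h h'
    obtain ⟨F2, hF2⟩ := Set.nonempty_of_ncard_ne_zero (show (s 2).ncard ≠ 0 by omega)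
    obtain ⟨F1, hF1⟩ := Set.nonempty_of_ncard_ne_zero (show (s 3).ncard ≠ 0 by omega)
    refine hT6 F1 hF1 F2 (hsub _ hF2) ?_ (by rw [(hmem _ _ hF2).2])
    rintro rfl
    exact Set.disjoint_left.1 (hdisj 2 3 (by decide)) hF2 hF1
  have c222 : (s 2).ncard = 3 → ∃ p, IsCornerPoint (Wk T ⊤) p := by
    intro hc
    obtain ⟨F1, F2, F3, h12, h13, h23, hN3⟩ := Set.ncard_eq_three.1 hc
    have g : ∀ F ∈ s 2, IsNonEllipticFace (Wk T ⊤) F := fun F hF => (hNm _).1 (hsub _ hF)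
    exact corner3 hT hE hdim (g F1 (by rw [hN3]; simp)) (g F2 (by rw [hN3]; simp))
      (g F3 (by rw [hN3]; simp)) h12 h13 h23
  generalize (s 0).ncard = a0 at *
  generalize (s 1).ncard = a1 at *
  generalize (s 2).ncard = a2 at *
  generalize (s 3).ncard = a3 at *
  generalize N.ncard = n at *
  refine ⟨hsf, ?_, ?_⟩
  · exact arith hsum h4 hz h3 h44
  · simp only [Set.mem_insert_iff, Set.mem_singleton_iff, Prod.mk.injEq]
    intro h
    by_cases k1 : 2 ≤ a3
    · exact c33 k1
    by_cases k2 : a2 = 3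
    · exact c222 k2
    exact c23 (by omega) (by omega)
end
end

/-- classification of the possible numbers of non-elliptic faces
of each type, and existence of corner points in six of the classes. -/
theorem stmt4 (A : Fin 3 → Matrix (Fin 4) (Fin 4) ℂ)
    (hA : ∀ i, (A i).IsHermitian)
    (hdim : convDim (JNR A) = 3) :
    (∀ m, {F | IsNonEllFaceOfType (JNR A) m F}.Finite) ∧
    (({F | IsNonEllFaceOfType (JNR A) 0 F}.ncard,
      {F | IsNonEllFaceOfType (JNR A) 1 F}.ncard,
      {F | IsNonEllFaceOfType (JNR A) 2 F}.ncard,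
      {F | IsNonEllFaceOfType (JNR A) 3 F}.ncard) ∈
      ({(0,0,0,0),(1,0,0,0),(0,1,0,0),(0,2,0,0),(0,1,1,0),(0,1,0,1),(0,0,1,0),
        (0,0,2,0),(0,0,3,0),(0,0,1,1),(0,0,1,2),(0,0,2,1),(0,0,0,1),(0,0,0,2),
        (0,0,0,4)} : Set (ℕ × ℕ × ℕ × ℕ))) ∧
    ((({F | IsNonEllFaceOfType (JNR A) 0 F}.ncard,
       {F | IsNonEllFaceOfType (JNR A) 1 F}.ncard,
       {F | IsNonEllFaceOfType (JNR A) 2 F}.ncard,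
       {F | IsNonEllFaceOfType (JNR A) 3 F}.ncard) ∈
      ({(0,0,3,0),(0,0,1,1),(0,0,1,2),(0,0,2,1),(0,0,0,2),(0,0,0,4)} :
        Set (ℕ × ℕ × ℕ × ℕ))) →
      ∃ p, IsCornerPoint (JNR A) p) := by
  rw [JNR_eq] at hdim ⊢
  exact final (fun i => Matrix.isSymmetric_toEuclideanLin_iff.2 (hA i)) (by simp) hdim _ rfl
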